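/- Let R be a complete regular local domain of mixed characteristic p with F-finite residue field. Then the wepf closure is trivial on R: for every ideal I of R, I^wepf = I. -/

import Mathlib

open IsLocalRing TensorProduct
set_option synthInstance.maxHeartbeats 1000000
set_option maxHeartbeats 1000000

/-- The absolute integral closure `R⁺` of a domain `R`: the integral closure of `R`
in an algebraic closure of its fraction field. -/
noncomputable abbrev RPlus (R : Type) [CommRing R] [IsDomain R] : Type :=
  ↥(integralClosure R (AlgebraicClosure (FractionRing R)))

/-- The (full) extended plus closure of an ideal `I` of `R`. -/
def epfIdeal (p : ℕ) (R : Type) [CommRing R] [IsDomain R] (I : Ideal R) : Set R :=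
  {u | ∃ c : R, c ≠ 0 ∧ ∀ n N : ℕ, 0 < n → 0 < N →
    ∀ d : RPlus R, d ^ n = algebraMap R (RPlus R) c →
      d * algebraMap R (RPlus R) u ∈
        Ideal.map (algebraMap R (RPlus R)) I ⊔ Ideal.span {(p : RPlus R) ^ N}}

/-- The weak epf closure of an ideal `I` of `R`: `I^wepf = ⋂_{N ≥ 1} (I + p^N R)^epf`. -/
def wepfIdeal (p : ℕ) (R : Type) [CommRing R] [IsDomain R] (I : Ideal R) : Set R :=
  {u | ∀ N : ℕ, 0 < N → u ∈ epfIdeal p R (I ⊔ Ideal.span {(p : R) ^ N})}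

/-- A field `k` of characteristic `p` is F-finite if it is a finite module over
its subfield `k^p` of `p`-th powers. -/
def FFinite (p : ℕ) (k : Type) [Field k] : Prop :=
  ∃ (m : ℕ) (s : Fin m → k), ∀ a : k, ∃ c : Fin m → k, a = ∑ i, (c i) ^ p * s i

set_option linter.unusedSectionVars false

section EqFlatSec

def EqFlat {A B : Type} [CommRing A] [CommRing B] (f : A →+* B) (π : A) : Prop :=
  ∀ (ι : Type) [Fintype ι] (a : ι → A) (b : ι → B), f π ∣ ∑ i, f (a i) * b i →
    ∃ (κ : Type) (_ : Fintype κ) (α : ι → κ → A) (w : κ → B) (e : ι → B),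
      (∀ i, b i = ∑ j, f (α i j) * w j + f π * e i) ∧ ∀ j, π ∣ ∑ i, a i * α i j

theorem EqFlat.pow {A B : Type} [CommRing A] [CommRing B] {f : A →+* B} {π : A}
    (h : EqFlat f π) (hn : ∀ b, f π * b = 0 → b = 0) (m : ℕ) : EqFlat f (π ^ (m + 1)) := by
  induction m with
  | zero => simpa using h
  | succ m ih =>
    intro ι _ a b hab
    have hab' : f (π ^ (m+1)) ∣ ∑ i, f (a i) * b i :=
      (map_dvd f (pow_dvd_pow π (Nat.le_succ _))).trans hab
    obtain ⟨κ, _, α, w, e, hb, hα⟩ := ih ι a b hab'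
    choose c hc using hα
    have hcancel : ∀ n : ℕ, ∀ x, f π ^ n * x = 0 → x = 0 := by
      intro n
      induction n with
      | zero => intro x hx; simpa using hx
      | succ n ihn => intro x hx; rw [pow_succ', mul_assoc] at hx; exact ihn _ (hn _ hx)
    have key : ∑ i, f (a i) * b i =
        f π ^ (m+1) * (∑ j, f (c j) * w j + ∑ i, f (a i) * e i) := by
      have h1 : ∀ i, f (a i) * b i = ∑ j, f (a i * α i j) * w j + f π ^ (m+1) * (f (a i) * e i) := by
        intro i
        rw [hb i, mul_add, Finset.mul_sum]
        congr 1
        · exact Finset.sum_congr rfl fun j _ => by rw [map_mul]; ring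
        · rw [map_pow]; ring
      rw [Finset.sum_congr rfl fun i _ => h1 i, Finset.sum_add_distrib, Finset.sum_comm, mul_add,
        Finset.mul_sum, Finset.mul_sum]
      congr 1
      refine Finset.sum_congr rfl fun j _ => ?_
      rw [← Finset.sum_mul, ← map_sum, hc j, map_mul, map_pow]; ring
    have h2 : f π ∣ ∑ i : κ ⊕ ι, f (Sum.elim c a i) * (Sum.elim w e i) := by
      obtain ⟨y, hy⟩ := hab
      refine ⟨y, ?_⟩
      rw [Fintype.sum_sum_type]
      simp only [Sum.elim_inl, Sum.elim_inr]
      rw [key, map_pow, pow_succ (f π) (m+1), mul_assoc, ← sub_eq_zero, ← mul_sub] at hy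
      exact sub_eq_zero.1 (hcancel _ _ hy)
    obtain ⟨μ, _, β, v, e', hb', hβ⟩ := h _ _ _ h2
    refine ⟨μ ⊕ κ, inferInstance,
      fun i => Sum.elim (fun l => ∑ j, α i j * β (Sum.inl j) l + π ^ (m+1) * β (Sum.inr i) l)
        (fun j => π * α i j), Sum.elim v (fun j => e' (Sum.inl j)), fun i => e' (Sum.inr i), ?_, ?_⟩
    · intro i
      have hw : ∀ j, w j = ∑ l, f (β (Sum.inl j) l) * v l + f π * e' (Sum.inl j) :=
        fun j => by simpa using hb' (Sum.inl j)
      have he : e i = ∑ l, f (β (Sum.inr i) l) * v l + f π * e' (Sum.inr i) := by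
        simpa using hb' (Sum.inr i)
      rw [hb i, he, Fintype.sum_sum_type]
      simp only [Sum.elim_inl, Sum.elim_inr]
      have e1 : ∑ j, f (α i j) * w j = ∑ l, (∑ j, f (α i j) * f (β (Sum.inl j) l)) * v l
          + ∑ j, f (π * α i j) * e' (Sum.inl j) := by
        simp_rw [Finset.sum_mul]
        rw [Finset.sum_comm, ← Finset.sum_add_distrib]
        refine Finset.sum_congr rfl fun j _ => ?_
        rw [hw j, mul_add, Finset.mul_sum, map_mul]
        congr 1
        · exact Finset.sum_congr rfl fun l _ => by ring
        · ring
      rw [e1]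
      simp only [map_add, map_sum, map_mul, map_pow, add_mul, Finset.sum_add_distrib, mul_add,
        Finset.mul_sum]
      have : ∀ l, f π ^ (m + 1) * (f (β (Sum.inr i) l) * v l) = f π ^ (m + 1) * f (β (Sum.inr i) l) * v l :=
        fun l => by ring
      simp only [this]
      ring
    · rintro (l | j)
      · obtain ⟨y, hy⟩ := hβ l
        rw [Fintype.sum_sum_type] at hy
        simp only [Sum.elim_inl, Sum.elim_inr] at hy ⊢
        refine ⟨y, ?_⟩
        have : ∑ i, a i * (∑ j, α i j * β (Sum.inl j) l + π ^ (m + 1) * β (Sum.inr i) l)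
          = π ^ (m+1) * (∑ j, c j * β (Sum.inl j) l + ∑ i, a i * β (Sum.inr i) l) := by
          simp only [mul_add, Finset.sum_add_distrib, Finset.mul_sum]
          congr 1
          · rw [Finset.sum_comm]
            refine Finset.sum_congr rfl fun j _ => ?_
            rw [← mul_assoc, ← hc j, Finset.sum_mul]
            exact Finset.sum_congr rfl fun i _ => by ring
          · exact Finset.sum_congr rfl fun i _ => by ring
        rw [this, hy]; ring
      · simp only [Sum.elim_inr]
        refine ⟨c j, ?_⟩
        have : ∑ i, a i * (π * α i j) = π * ∑ i, a i * α i j := by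
          rw [Finset.mul_sum]; exact Finset.sum_congr rfl fun i _ => by ring
        rw [this, hc j]; ring

theorem EqFlat.comp {A B C : Type} [CommRing A] [CommRing B] [CommRing C] {f : A →+* B}
    {g : B →+* C} {π : A} (hf : EqFlat f π) (hg : EqFlat g (f π)) : EqFlat (g.comp f) π := by
  intro ι _ a c hac
  obtain ⟨κ, _, β, w, e, hc, hβ⟩ := hg ι (fun i => f (a i)) c (by simpa using hac)
  -- handle all j simultaneously
  -- apply hf to each j
  choose κ' _ α v e' hb hα using fun j => hf ι a (fun i => β i j) (hβ j)
  refine ⟨Σ j, κ' j, inferInstance, fun i jk => α jk.1 i jk.2, fun jk => g (v jk.1 jk.2) * w jk.1,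
    fun i => ∑ j, g (e' j i) * w j + e i, ?_, ?_⟩
  · intro i
    rw [hc i, Fintype.sum_sigma]
    simp only [RingHom.comp_apply, mul_add, Finset.mul_sum]
    rw [← add_assoc, ← Finset.sum_add_distrib]
    congr 1
    refine Finset.sum_congr rfl fun j _ => ?_
    rw [hb j i, map_add, map_sum, add_mul, Finset.sum_mul, map_mul]
    congr 1
    · exact Finset.sum_congr rfl fun k _ => by rw [map_mul]; ring
    · ring
  · rintro ⟨j, k⟩
    exact hα j k

theorem EqFlat.colon {A B : Type} [CommRing A] [CommRing B] {f : A →+* B} {π : A}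
    (h : EqFlat f π) {J : Ideal A} (hJ : π ∈ J) {u : A} {b : B} (hb : f u * b ∈ J.map f) :
    ∃ (κ : Type) (_ : Fintype κ) (α : κ → A) (w : κ → B),
      b = ∑ j, f (α j) * w j ∧ ∀ j, u * α j ∈ J := by
  obtain ⟨n, s, g, hs⟩ := (Submodule.mem_span_set' (R := B)).1 hb
  have hg : ∀ i, ∃ x ∈ J, f x = g i := fun i => (g i).2
  choose x hxJ hx using hg
  obtain ⟨κ, _, α, w, e, h1, h2⟩ := h (Option (Fin n)) (fun o => o.elim u (fun i => - x i))
    (fun o => o.elim b s) (by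
      rw [Fintype.sum_option]
      simp only [Option.elim_none, Option.elim_some, map_neg, neg_mul, Finset.sum_neg_distrib]
      rw [← hs]
      simp [hx, mul_comm])
  refine ⟨Option κ, inferInstance, fun o => o.elim π (fun j => α none j),
    fun o => o.elim (e none) w, ?_, ?_⟩
  · rw [Fintype.sum_option]
    have := h1 none
    simp only [Option.elim_none, Option.elim_some] at this ⊢
    rw [this]; ring
  · rintro (_ | j)
    · exact J.mul_mem_left _ hJ
    · simp only [Option.elim_some]
      have := h2 j
      rw [Fintype.sum_option] at this
      simp only [Option.elim_none, Option.elim_some] at this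
      have h3 : u * α none j + ∑ i, -x i * α (some i) j ∈ J := by
        obtain ⟨y, hy⟩ := this
        rw [hy]; exact J.mul_mem_right _ hJ
      refine (J.add_mem_iff_left ?_).1 h3
      exact J.sum_mem fun i _ => J.mul_mem_right _ (J.neg_mem (hxJ i))

theorem EqFlat.colon_map {A B : Type} [CommRing A] [CommRing B] {f : A →+* B} {π : A}
    (h : EqFlat f π) {J J' : Ideal A} (hJ : π ∈ J) {u : A} {b : B} (hb : f u * b ∈ J.map f)
    (hJ' : ∀ a, u * a ∈ J → a ∈ J') : b ∈ J'.map f := by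
  obtain ⟨κ, _, α, w, h1, h2⟩ := h.colon hJ hb
  rw [h1]
  exact Ideal.sum_mem _ fun j _ => Ideal.mul_mem_right _ _ (Ideal.mem_map_of_mem f (hJ' _ (h2 j)))

theorem EqFlat.mem_max {A B : Type} [CommRing A] [CommRing B] [IsLocalRing A] {f : A →+* B} {π : A}
    (h : EqFlat f π) {J : Ideal A} (hJ : π ∈ J) {u : A} {b : B} (hb : f u * b ∈ J.map f)
    (hu : u ∉ J) : b ∈ (maximalIdeal A).map f := by
  refine h.colon_map hJ hb fun a ha => ?_
  rw [mem_maximalIdeal]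
  intro hun
  exact hu ((Ideal.mul_unit_mem_iff_mem J hun).1 ha)

theorem EqFlat.faithful {A B : Type} [CommRing A] [CommRing B] [IsLocalRing A] {f : A →+* B} {π : A}
    (h : EqFlat f π) (hm : (maximalIdeal A).map f ≠ ⊤) {J : Ideal A} (hJ : π ∈ J) {u : A}
    (hb : f u ∈ J.map f) : u ∈ J := by
  by_contra hu
  exact hm ((Ideal.eq_top_iff_one _).2 (h.mem_max hJ (b := 1) (by simpa using hb) hu))

end EqFlatSec

section PfdSec
open WittVector

structure Pfd (p : ℕ) [Fact p.Prime] (E T : Type) [CommRing E] [CharP E p] [PerfectRing E p]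
    [CommRing T] where
  θ : WittVector p E →+* T
  t : E
  w : WittVector p E
  surj : Function.Surjective θ
  hw : IsUnit w
  ker : ∀ a, θ a = 0 → ((p : WittVector p E) + teichmuller p t * w) ∣ a
  kd : θ ((p : WittVector p E) + teichmuller p t * w) = 0
  nzd : ∀ a, t * a = 0 → a = 0

variable {p : ℕ} [hp : Fact p.Prime] {E T : Type} [CommRing E] [CharP E p] [PerfectRing E p]
    [CommRing T]

theorem wv_sub_teich (x : WittVector p E) : ∃ y, x = teichmuller p (x.coeff 0) + p * y := by
  have h : x - teichmuller p (x.coeff 0) ∈ Ideal.span {(p : WittVector p E)} := by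
    rw [mem_span_p_iff_coeff_zero_eq_zero]
    have := map_sub (constantCoeff (p := p) (R := E)) x (teichmuller p (x.coeff 0))
    refine this.trans ?_
    simp
  obtain ⟨y, hy⟩ := Ideal.mem_span_singleton.1 h
  exact ⟨y, by rw [← hy]; ring⟩

theorem wv_p_dvd {x : WittVector p E} (h : x.coeff 0 = 0) : (p : WittVector p E) ∣ x :=
  Ideal.mem_span_singleton.1 ((mem_span_p_iff_coeff_zero_eq_zero x).2 h)

theorem wv_p_cancel {x : WittVector p E} (h : (p : WittVector p E) * x = 0) : x = 0 :=
  eq_zero_of_p_mul_eq_zero x (by rwa [mul_comm])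

theorem wv_coeff_zero_mul (x y : WittVector p E) : (x * y).coeff 0 = x.coeff 0 * y.coeff 0 :=
  map_mul (constantCoeff (p := p) (R := E)) x y
theorem wv_coeff_zero_add (x y : WittVector p E) : (x + y).coeff 0 = x.coeff 0 + y.coeff 0 :=
  map_add (constantCoeff (p := p) (R := E)) x y
theorem wv_coeff_zero_p : ((p : WittVector p E)).coeff 0 = 0 := coeff_p_zero p E

namespace Pfd

variable (P : Pfd p E T)

/-- Teichmuller map -/
noncomputable def τ : E →* T := P.θ.toMonoidHom.comp (teichmuller p)

theorem τ_def (a : E) : P.τ a = P.θ (teichmuller p a) := rfl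

theorem p_eq : (p : T) = - (P.τ P.t * P.θ P.w) := by
  have := P.kd
  rw [map_add, map_mul, map_natCast] at this
  rw [τ_def]; exact eq_neg_of_add_eq_zero_left this

theorem t_dvd_p : P.τ P.t ∣ (p : T) := by
  rw [P.p_eq, dvd_neg]; exact Dvd.intro _ rfl

theorem p_dvd_t : (p : T) ∣ P.τ P.t := by
  rw [P.p_eq, neg_dvd]
  exact (P.hw.map P.θ).mul_right_dvd.2 dvd_rfl

theorem w0_unit : IsUnit (P.w.coeff 0) := P.hw.map (constantCoeff (p := p) (R := E))

theorem lift (x : T) : ∃ a b, x = P.τ a + p * b := by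
  obtain ⟨y, rfl⟩ := P.surj x
  obtain ⟨z, hz⟩ := wv_sub_teich y
  refine ⟨y.coeff 0, P.θ z, ?_⟩
  conv_lhs => rw [hz]
  rw [map_add, map_mul, map_natCast, τ_def]

theorem dvd_iff (x : WittVector p E) : (p : T) ∣ P.θ x ↔ P.t ∣ x.coeff 0 := by
  constructor
  · rintro ⟨y, hy⟩
    obtain ⟨y, rfl⟩ := P.surj y
    have : P.θ (x - p * y) = 0 := by rw [map_sub, map_mul, map_natCast, hy, sub_self]
    obtain ⟨z, hz⟩ := P.ker _ this
    have hx : x = p * y + (p + teichmuller p P.t * P.w) * z := by rw [← hz]; ring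
    rw [hx]
    simp only [wv_coeff_zero_add, wv_coeff_zero_mul, wv_coeff_zero_p, zero_mul, zero_add,
      teichmuller_coeff_zero, mul_assoc]
    exact Dvd.intro _ rfl
  · rintro ⟨y, hy⟩
    obtain ⟨z, hz⟩ := wv_sub_teich x
    rw [hz, hy, map_add, map_mul, map_mul, map_mul, map_natCast, ← τ_def, ← τ_def]
    exact dvd_add (Dvd.dvd.mul_right P.p_dvd_t _) (Dvd.intro _ rfl)

theorem τ_dvd_iff (a : E) : (p : T) ∣ P.τ a ↔ P.t ∣ a := by
  rw [τ_def, P.dvd_iff, teichmuller_coeff_zero]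

theorem τ_add (a b : E) : (p : T) ∣ P.τ (a + b) - (P.τ a + P.τ b) := by
  rw [τ_def, τ_def, τ_def, ← map_add, ← map_sub, P.dvd_iff]
  have : (teichmuller p (a + b) - (teichmuller p a + teichmuller p b)).coeff 0 = 0 := by
    have := map_sub (constantCoeff (p := p) (R := E)) (teichmuller p (a + b)) (teichmuller p a + teichmuller p b)
    refine this.trans ?_
    rw [map_add constantCoeff]
    simp
  rw [this]; exact dvd_zero _

theorem p_nzd (P : Pfd p E T) {x : T} (h : (p : T) * x = 0) : x = 0 := by
  obtain ⟨y, rfl⟩ := P.surj x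
  have h1 : P.θ (p * y) = 0 := by rw [map_mul, map_natCast, h]
  obtain ⟨z, hz⟩ := P.ker _ h1
  have h2 : P.t * (P.w.coeff 0 * z.coeff 0) = 0 := by
    have := congrArg (fun v => v.coeff 0) hz
    simp only [wv_coeff_zero_add, wv_coeff_zero_mul, wv_coeff_zero_p, zero_mul, zero_add,
      teichmuller_coeff_zero, mul_assoc] at this
    exact this.symm
  have h3 : z.coeff 0 = 0 := P.w0_unit.mul_right_eq_zero.1 (P.nzd _ h2)
  obtain ⟨v, rfl⟩ := wv_p_dvd h3
  have h4 : y = (p + teichmuller p P.t * P.w) * v := by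
    rw [← sub_eq_zero]
    apply wv_p_cancel
    rw [mul_sub, hz]; ring
  rw [h4, map_mul, P.kd, zero_mul]

theorem p_pow_nzd (P : Pfd p E T) {x : T} (n : ℕ) (h : (p : T) ^ n * x = 0) : x = 0 := by
  induction n generalizing x with
  | zero => simpa using h
  | succ n ih =>
    rw [pow_succ, mul_assoc] at h
    exact P.p_nzd (ih h)

theorem t_nzd {x : T} (n : ℕ) (h : (P.τ P.t) ^ n * x = 0) : x = 0 := by
  apply P.p_pow_nzd n
  rw [P.p_eq, neg_pow, mul_pow]
  calc _ = (-1) ^ n * P.θ P.w ^ n * (P.τ P.t ^ n * x) := by ring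
    _ = 0 := by rw [h, mul_zero]

theorem s_nzd {s : E} {n : ℕ} (hs : s ∣ P.t ^ n) {x : T} (h : P.τ s * x = 0) : x = 0 := by
  apply P.t_nzd n
  obtain ⟨u, hu⟩ := hs
  rw [← map_pow, hu, map_mul, mul_right_comm, h, zero_mul]

end Pfd
end PfdSec

section PfdExt
open WittVector

variable {p : ℕ} [hp : Fact p.Prime] {E T : Type} [CommRing E] [CharP E p] [PerfectRing E p]
    [CommRing T]
namespace Pfd

theorem exists_ψ (P : Pfd p E T) : ∃ ψ : T →+* E ⧸ Ideal.span {P.t},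
    (∀ x, ψ (P.θ x) = Ideal.Quotient.mk _ (x.coeff 0)) := by
  have hk : RingHom.ker P.θ ≤ RingHom.ker
      ((Ideal.Quotient.mk (Ideal.span {P.t})).comp (constantCoeff (p := p) (R := E))) := by
    intro x hx
    rw [RingHom.mem_ker] at hx ⊢
    rw [RingHom.comp_apply, Ideal.Quotient.eq_zero_iff_mem, Ideal.mem_span_singleton]
    exact (P.dvd_iff x).1 (by rw [hx]; exact dvd_zero _)
  refine ⟨RingHom.liftOfSurjective P.θ P.surj ⟨_, hk⟩, fun x => ?_⟩
  exact RingHom.liftOfRightInverse_comp_apply P.θ _ _ ⟨_, hk⟩ x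

noncomputable def ψ (P : Pfd p E T) : T →+* E ⧸ Ideal.span {P.t} := P.exists_ψ.choose

theorem ψ_θ (P : Pfd p E T) (x) : P.ψ (P.θ x) = Ideal.Quotient.mk _ (x.coeff 0) :=
  P.exists_ψ.choose_spec x

theorem ψ_τ (P : Pfd p E T) (x) : P.ψ (P.τ x) = Ideal.Quotient.mk _ x := by
  rw [τ_def, ψ_θ, teichmuller_coeff_zero]

theorem ψ_zero_iff (P : Pfd p E T) (x : T) : P.ψ x = 0 ↔ (p : T) ∣ x := by
  obtain ⟨y, rfl⟩ := P.surj x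
  rw [ψ_θ, P.dvd_iff, Ideal.Quotient.eq_zero_iff_mem, Ideal.mem_span_singleton]

theorem dvd_sub_iff (P : Pfd p E T) (x y : T) : (p : T) ∣ x - y ↔ P.ψ x = P.ψ y := by
  rw [← ψ_zero_iff P, map_sub, sub_eq_zero]

variable {E' : Type} [CommRing E'] [CharP E' p] [PerfectRing E' p]

theorem exists_ext (P : Pfd p E T) (h : E →+* E') (hn : ∀ a, h P.t * a = 0 → a = 0) :
    ∃ (T' : Type) (_ : CommRing T') (P' : Pfd p E' T') (Θ : T →+* T'), P'.t = h P.t ∧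
      ∀ x, Θ (P.θ x) = P'.θ (WittVector.map h x) := by
  let d' : WittVector p E' := p + teichmuller p (h P.t) * WittVector.map h P.w
  have hd : WittVector.map h ((p : WittVector p E) + teichmuller p P.t * P.w) = d' := by
    simp [d', map_teichmuller]
  let P' : Pfd p E' (WittVector p E' ⧸ Ideal.span {d'}) :=
    { θ := Ideal.Quotient.mk _
      t := h P.t
      w := WittVector.map h P.w
      surj := Ideal.Quotient.mk_surjective
      hw := P.hw.map _
      ker := fun a ha => by
        rwa [Ideal.Quotient.eq_zero_iff_mem, Ideal.mem_span_singleton] at ha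
      kd := Ideal.Quotient.eq_zero_iff_mem.2 (Ideal.mem_span_singleton_self _)
      nzd := hn }
  have hk : RingHom.ker P.θ ≤ RingHom.ker (P'.θ.comp (WittVector.map h)) := by
    intro x hx
    rw [RingHom.mem_ker] at hx ⊢
    obtain ⟨z, rfl⟩ := P.ker _ hx
    rw [RingHom.comp_apply, map_mul, hd, map_mul]
    erw [P'.kd]
    rw [zero_mul]
  refine ⟨_, _, P', RingHom.liftOfSurjective P.θ P.surj ⟨_, hk⟩, rfl, fun x => ?_⟩
  exact RingHom.liftOfRightInverse_comp_apply P.θ _ _ ⟨_, hk⟩ x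

variable {T' : Type} [CommRing T'] {P : Pfd p E T} {P' : Pfd p E' T'} {Θ : T →+* T'} {h : E →+* E'}

theorem Θ_τ (hΘ : ∀ x, Θ (P.θ x) = P'.θ (WittVector.map h x)) (a : E) :
    Θ (P.τ a) = P'.τ (h a) := by
  rw [τ_def, τ_def, hΘ, map_teichmuller]

theorem ext_eqFlat (hΘ : ∀ x, Θ (P.θ x) = P'.θ (WittVector.map h x)) (ht : P'.t = h P.t)
    (hf : EqFlat h P.t) : EqFlat Θ (p : T) := by
  intro ι _ a b hab
  choose α a' ha using fun i => P.lift (a i)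
  choose β b' hb using fun i => P'.lift (b i)
  have hψp : P'.ψ (p : T') = 0 := (P'.ψ_zero_iff _).2 dvd_rfl
  have hψp0 : P.ψ (p : T) = 0 := (P.ψ_zero_iff _).2 dvd_rfl
  have h1 : h P.t ∣ ∑ i, h (α i) * β i := by
    rw [map_natCast, ← P'.ψ_zero_iff] at hab
    rw [← ht, ← Ideal.mem_span_singleton, ← Ideal.Quotient.eq_zero_iff_mem, ← hab]
    simp only [map_sum, map_mul]
    refine Finset.sum_congr rfl fun i _ => ?_
    rw [ha i, hb i]
    simp only [map_add, map_mul, map_natCast, Θ_τ hΘ, ψ_τ]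
    rw [← map_natCast P'.ψ, hψp]; ring
  obtain ⟨κ, _, γ, w, e, h2, h3⟩ := hf ι α β h1
  have h4 : ∀ i, (p : T') ∣ b i - ∑ j, Θ (P.τ (γ i j)) * P'.τ (w j) := by
    intro i
    rw [dvd_sub_iff P', hb i, h2 i]
    simp only [map_add, map_mul, map_sum, Θ_τ hΘ, ψ_τ, hψp]
    rw [← ht, Ideal.Quotient.eq_zero_iff_mem.2 (Ideal.mem_span_singleton_self P'.t)]; ring
  choose e' he' using h4
  refine ⟨κ, inferInstance, fun i j => P.τ (γ i j), fun j => P'.τ (w j), e', ?_, ?_⟩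
  · intro i; rw [map_natCast, ← he' i]; ring
  · intro j
    rw [← P.ψ_zero_iff]
    have := h3 j
    rw [← Ideal.mem_span_singleton, ← Ideal.Quotient.eq_zero_iff_mem] at this
    rw [← this]
    simp only [map_sum, map_mul, ψ_τ]
    refine Finset.sum_congr rfl fun i _ => ?_
    rw [ha i, map_add, map_mul, hψp0, ψ_τ]; ring

end Pfd
end PfdExt

section PerfRoots

variable {p : ℕ} [hp : Fact p.Prime]

theorem charP_of_nontriv (K : Type) [CommRing K] [Nontrivial K] (h : (p : K) = 0) : CharP K p :=
  (CharP.charP_iff_prime_eq_zero hp.out).2 h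

section
variable {E : Type} [CommRing E] [CharP E p] [PerfectRing E p]

/-- p^r-th root -/
noncomputable def prt (p : ℕ) [hp : Fact p.Prime] {E : Type} [CommRing E] [CharP E p]
    [PerfectRing E p] (r : ℕ) : E ≃+* E := (iterateFrobeniusEquiv E p r).symm

theorem prt_pow (r : ℕ) (a : E) : (prt p r a) ^ p ^ r = a :=
  (iterateFrobeniusEquiv E p r).apply_symm_apply a

theorem prt_of_pow (r : ℕ) (a : E) : prt p r (a ^ p ^ r) = a :=
  (iterateFrobeniusEquiv E p r).symm_apply_apply a

theorem prt_unique {r : ℕ} {a b : E} (h : b ^ p ^ r = a) : prt p r a = b := by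
  rw [← h, prt_of_pow]

theorem prt_add (r s : ℕ) (a : E) : prt p (r + s) a = prt p r (prt p s a) := by
  apply prt_unique
  rw [pow_add, pow_mul, prt_pow, prt_pow]

theorem prt_add_pow (r s : ℕ) (a : E) : (prt p (r + s) a) ^ p ^ s = prt p r a := by
  rw [prt_add, ← map_pow, prt_pow]

theorem prt_map {E' : Type} [CommRing E'] [CharP E' p] [PerfectRing E' p] (f : E →+* E')
    (r : ℕ) (a : E) : f (prt p r a) = prt p r (f a) := by
  symm; apply prt_unique
  rw [← map_pow, prt_pow]

theorem prt_dvd_of_dvd_pow {r : ℕ} {a b : E} (h : a ^ p ^ r ∣ b ^ p ^ r) : a ∣ b := by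
  have := map_dvd (prt p r) h
  rwa [prt_of_pow, prt_of_pow] at this

end

section
variable {K : Type} [CommRing K] [CharP K p]

theorem pc_root (x : PerfectClosure K p) : ∃ n a, x ^ p ^ n = PerfectClosure.of K p a := by
  induction x using PerfectClosure.induction_on with
  | _ x =>
    obtain ⟨n, a⟩ := x
    refine ⟨n, a, ?_⟩
    have := PerfectClosure.iterate_frobenius_mk (K := K) p n a
    rw [iterate_frobenius] at this
    exact this

theorem pc_of_eq {a b : K} (h : PerfectClosure.of K p a = PerfectClosure.of K p b) :
    ∃ n, a ^ p ^ n = b ^ p ^ n := by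
  rw [PerfectClosure.of_apply, PerfectClosure.of_apply, PerfectClosure.mk_eq_iff] at h
  obtain ⟨z, hz⟩ := h
  refine ⟨z, ?_⟩
  simpa [iterate_frobenius] using hz

theorem pc_nzd {t : K} (ht : ∀ a, t * a = 0 → a = 0) (x : PerfectClosure K p)
    (h : PerfectClosure.of K p t * x = 0) : x = 0 := by
  have htn : ∀ n a, t ^ n * a = 0 → a = 0 := by
    intro n
    induction n with
    | zero => intro a ha; simpa using ha
    | succ n ih => intro a ha; rw [pow_succ, mul_assoc] at ha; exact ht _ (ih _ ha)
  obtain ⟨n, a, ha⟩ := pc_root x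
  have h1 : PerfectClosure.of K p (t ^ p ^ n * a) = PerfectClosure.of K p 0 := by
    rw [map_mul, ← ha, map_pow, ← mul_pow, h, map_zero, zero_pow (pow_ne_zero _ hp.out.ne_zero)]
  obtain ⟨m, hm⟩ := pc_of_eq h1
  rw [zero_pow (pow_ne_zero _ hp.out.ne_zero), mul_pow, ← pow_mul] at hm
  have h2 := htn _ _ hm
  have h3 : x ^ p ^ (n + m) = 0 := by
    rw [pow_add, pow_mul, ha, ← map_pow, h2, map_zero]
  have := prt_of_pow (p := p) (n + m) x
  rw [h3, map_zero] at this
  exact this.symm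
end

end PerfRoots

section KeyLemma
open Polynomial WittVector
variable {p : ℕ} [hp : Fact p.Prime] {E : Type} [CommRing E] [CharP E p] [PerfectRing E p]

def satI (t γ : E) (k : ℕ) : Ideal E[X] where
  carrier := {f | ∃ i h, C (t ^ i) * f = (C γ * X - C (t ^ k)) * h}
  zero_mem' := ⟨0, 0, by simp⟩
  add_mem' := by
    rintro a b ⟨i, h, hi⟩ ⟨j, g, hj⟩
    refine ⟨i + j, C (t ^ j) * h + C (t ^ i) * g, ?_⟩
    rw [pow_add, C_mul]
    linear_combination C (t ^ j) * hi + C (t ^ i) * hj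
  smul_mem' := by
    rintro c a ⟨i, h, hi⟩
    refine ⟨i, c * h, ?_⟩
    rw [smul_eq_mul]
    linear_combination c * hi

theorem nzd_pow {t : E} (ht : ∀ a, t * a = 0 → a = 0) (n : ℕ) : ∀ a, t ^ n * a = 0 → a = 0 := by
  induction n with
  | zero => intro a ha; simpa using ha
  | succ n ih => intro a ha; rw [pow_succ, mul_assoc] at ha; exact ht _ (ih _ ha)

theorem satI_key {t γ : E} (ht : ∀ a, t * a = 0 → a = 0) {k s N : ℕ} (hk : 2 * p ^ s ≤ k) {a : E}
    {f : E[X]} (hf : C (a ^ p ^ N) - C (t ^ p ^ N) * f ∈ satI t γ k) : t ∣ prt p s γ * a := by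
  obtain ⟨i, h, hi⟩ := hf
  -- raise to the power p^(i+s)
  have hp2 : 2 ≤ p := hp.out.two_le
  set M := N + (i + s) with hM
  set q := p ^ M with hq
  have hqi : i ≤ q := by
    have h1 : i < 2 ^ i := Nat.lt_two_pow_self
    have h2 : 2 ^ i ≤ p ^ i := Nat.pow_le_pow_left hp2 i
    have h3 : p ^ i ≤ p ^ M := Nat.pow_le_pow_right (by omega) (by omega)
    omega
  obtain ⟨F, H, hFH⟩ : ∃ F H : E[X], C (t ^ i) * (C (a ^ q) - C (t ^ q) * F) =
      (C γ * X - C (t ^ k)) * H := by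
    obtain ⟨m, hm⟩ : ∃ m, p ^ (i + s) = m + 1 :=
      ⟨p ^ (i + s) - 1, (Nat.sub_add_cancel (Nat.one_le_pow _ _ (by omega))).symm⟩
    refine ⟨f ^ p ^ (i + s), h * (C (a ^ p ^ N) - C (t ^ p ^ N) * f) ^ m, ?_⟩
    have e1 : C (a ^ q) - C (t ^ q) * f ^ p ^ (i + s) =
        (C (a ^ p ^ N) - C (t ^ p ^ N) * f) ^ p ^ (i + s) := by
      rw [sub_pow_char_pow, mul_pow, ← C_pow, ← C_pow, ← pow_mul, ← pow_mul, ← pow_add, ← hM]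
    rw [e1, hm, pow_succ', ← mul_assoc, hi]; ring
  have h0 : t ^ i * a ^ q - t ^ (q + i) * F.coeff 0 = - (t ^ k * H.coeff 0) := by
    have := congrArg (fun P => P.coeff 0) hFH
    simp only [coeff_C_mul, coeff_sub, sub_mul, mul_assoc, coeff_C_zero, coeff_X_mul_zero] at this
    rw [pow_add]; linear_combination this
  have hs : ∀ j, - (t ^ (q + i) * F.coeff (j+1)) = γ * H.coeff j - t ^ k * H.coeff (j + 1) := by
    intro j
    have := congrArg (fun P => P.coeff (j+1)) hFH
    simp only [coeff_C_mul, coeff_sub, sub_mul, mul_assoc, coeff_C_succ, coeff_X_mul] at this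
    rw [pow_add]; linear_combination this
  have claim : ∀ j, t ^ (q + i) ∣ γ ^ j * t ^ i * a ^ q + t ^ (k * (j + 1)) * H.coeff j := by
    intro j
    induction j with
    | zero => refine ⟨F.coeff 0, ?_⟩; simp only [pow_zero, zero_add, mul_one, one_mul]; linear_combination h0
    | succ j ih =>
      obtain ⟨y, hy⟩ := ih
      refine ⟨γ * y + t ^ (k * (j+1)) * F.coeff (j+1), ?_⟩
      have e2 : t ^ (k * (j + 1 + 1)) = t ^ (k * (j+1)) * t ^ k := by rw [← pow_add]; ring_nf
      rw [e2, pow_succ]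
      linear_combination γ * hy + t ^ (k * (j+1)) * hs j
  set Q := p ^ (N + i) with hQ
  have hQq : Q * p ^ s = q := by rw [hQ, hq, hM, ← pow_add]; ring_nf
  have h1 := claim Q
  have h2 : t ^ (q + i) ∣ t ^ (k * (Q + 1)) * H.coeff Q := by
    refine Dvd.dvd.mul_right (pow_dvd_pow t ?_) _
    have : 2 * p ^ s * Q ≤ k * Q := Nat.mul_le_mul_right _ hk
    nlinarith
  have h3 := (dvd_add_left h2).1 h1
  obtain ⟨y, hy⟩ := h3
  have h4 : γ ^ Q * a ^ q = t ^ q * y := by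
    rw [← sub_eq_zero]
    apply nzd_pow ht i
    rw [pow_add] at hy
    linear_combination hy
  apply prt_dvd_of_dvd_pow (p := p) (r := M)
  rw [mul_pow, ← hq, ← hQq, mul_comm Q, pow_mul (prt p s γ), prt_pow, mul_comm (p ^ s), hQq, h4]
  exact Dvd.intro _ rfl

end KeyLemma

section KeyLemma2
open Polynomial WittVector
variable {p : ℕ} [hp : Fact p.Prime] {E : Type} [CommRing E] [CharP E p] [PerfectRing E p]

/-- existence of E_k -/
theorem exists_Ek {t γ : E} (ht : ∀ a, t * a = 0 → a = 0) {k s : ℕ} (hk : 2 * p ^ s ≤ k)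
    (hI : satI t γ k ≠ ⊤) :
    ∃ (E' : Type) (_ : CommRing E') (_ : CharP E' p) (_ : PerfectRing E' p) (j : E →+* E') (l : E'),
      j γ * l = j t ^ k ∧ (∀ a, j t * a = 0 → a = 0) ∧
      (∀ x, ∃ a y, j (prt p s γ) * x = j a + j t * y) ∧
      (∀ a x, j a = j t * x → t ∣ prt p s γ * a) := by
  have : Nontrivial (E[X] ⧸ satI t γ k) := Ideal.Quotient.nontrivial_iff.2 hI
  have : CharP (E[X] ⧸ satI t γ k) p := charP_of_nontriv _ (by
    rw [← map_natCast (Ideal.Quotient.mk (satI t γ k)), CharP.cast_eq_zero, map_zero])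
  let Q := E[X] ⧸ satI t γ k
  let E' := PerfectClosure Q p
  let mk := Ideal.Quotient.mk (satI t γ k)
  let of := PerfectClosure.of Q p
  let j : E →+* E' := (of.comp mk).comp C
  let l : E' := of (mk X)
  have hjl : j γ * l = j t ^ k := by
    change of (mk (C γ)) * of (mk X) = of (mk (C t)) ^ k
    rw [← map_mul, ← map_mul, ← map_pow, ← map_pow]
    congr 1
    rw [← sub_eq_zero, ← map_sub, Ideal.Quotient.eq_zero_iff_mem]
    exact ⟨0, 1, by simp⟩
  refine ⟨E', inferInstance, inferInstance, inferInstance, j, l, hjl, ?_, ?_, ?_⟩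
  · apply pc_nzd
    intro a ha
    obtain ⟨a, rfl⟩ := Ideal.Quotient.mk_surjective a
    rw [← map_mul, Ideal.Quotient.eq_zero_iff_mem] at ha
    rw [Ideal.Quotient.eq_zero_iff_mem]
    obtain ⟨i, h, hi⟩ := ha
    exact ⟨i + 1, h, by rw [← hi, pow_succ, C_mul]; ring⟩
  · -- β
    have hmono : ∀ n m, ∃ a y, j (prt p s γ) * (prt p (s + n) l) ^ m = j a + j t * y := by
      intro n m
      have h1 : j (prt p s γ) = (j (prt p (s + n) γ)) ^ p ^ n := by rw [← map_pow, prt_add_pow]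
      have h2 : j (prt p (s+n) γ) * prt p (s+n) l = (j (prt p (s + n) t)) ^ k := by
        rw [prt_map, prt_map, ← map_mul, ← map_pow, hjl]
      rcases le_total m (p ^ n) with hm | hm
      · obtain ⟨e, he⟩ := Nat.exists_eq_add_of_le hm
        refine ⟨(prt p (s+n) t) ^ (k * m) * prt p (s+n) γ ^ e, 0, ?_⟩
        rw [h1, he, map_mul, map_pow, pow_mul, ← h2, map_pow]; ring
      · obtain ⟨e, rfl⟩ := Nat.exists_eq_add_of_le hm
        have h3 : t ∣ (prt p (s+n) t) ^ (k * p ^ n) := by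
          have : (prt p (s+n) t) ^ p ^ (s + n) = t := prt_pow _ _
          conv_lhs => rw [← this]
          apply pow_dvd_pow
          rw [pow_add]
          exact Nat.mul_le_mul_right _ (by omega)
        obtain ⟨v, hv⟩ := h3
        refine ⟨0, j v * prt p (s+n) l ^ e, ?_⟩
        rw [map_zero, zero_add, ← mul_assoc, ← map_mul, ← hv, map_pow, pow_mul, ← h2, h1]; ring
    intro x
    obtain ⟨n, a, ha⟩ := pc_root x
    obtain ⟨f, rfl⟩ := Ideal.Quotient.mk_surjective a
    have hx : x = prt p (s + n) (of (mk (f ^ p ^ s))) := by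
      symm; apply prt_unique
      rw [add_comm, pow_add, pow_mul, ha, ← map_pow, ← map_pow]
    rw [hx]
    generalize f ^ p ^ s = g
    induction g using Polynomial.induction_on' with
    | add f g hf hg =>
      obtain ⟨a, y, h1⟩ := hf
      obtain ⟨b, z, h2⟩ := hg
      refine ⟨a + b, y + z, ?_⟩
      rw [map_add mk, map_add of, map_add (prt p (s+n)), map_add j]
      linear_combination h1 + h2
    | monomial m c =>
      obtain ⟨a, y, h1⟩ := hmono n m
      refine ⟨prt p (s+n) c * a, j (prt p (s+n) c) * y, ?_⟩
      have h3 : prt p (s+n) (of (mk (monomial m c))) = j (prt p (s+n) c) * (prt p (s+n) l) ^ m := by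
        rw [← C_mul_X_pow_eq_monomial, map_mul mk, map_mul of, map_mul (prt p (s+n)), prt_map,
          map_pow mk, map_pow of, map_pow (prt p (s+n))]
        rfl
      rw [h3, map_mul j]
      linear_combination j (prt p (s+n) c) * h1
  · intro a x hax
    obtain ⟨n, f, ha⟩ := pc_root x
    obtain ⟨f, rfl⟩ := Ideal.Quotient.mk_surjective f
    have h1 : of (mk (C (a ^ p ^ n))) = of (mk (C (t ^ p ^ n) * f)) := by
      have h2 : (j a) ^ p ^ n = (j t) ^ p ^ n * of (mk f) := by
        rw [hax, mul_pow, ha]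
      rw [map_mul mk, map_mul of, C_pow, C_pow, map_pow, map_pow, map_pow, map_pow]
      exact h2
    obtain ⟨m, hm⟩ := pc_of_eq h1
    rw [← map_pow mk, ← map_pow mk, ← sub_eq_zero, ← map_sub, Ideal.Quotient.eq_zero_iff_mem,
      mul_pow, ← C_pow, ← C_pow, ← pow_mul, ← pow_mul, ← pow_add] at hm
    exact satI_key ht hk hm

variable {T : Type} [CommRing T]

namespace Pfd

theorem root1 (P : Pfd p E T) {a : ℕ} (m : ℕ) : ∀ w : T, P.τ (prt p a P.t) ^ m ∣ w ^ p →
    P.τ (prt p (a + 1) P.t) ^ m ∣ w := by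
  have hst : prt p a P.t ∣ P.t := by
    conv_rhs => rw [← prt_pow (p := p) a P.t]
    exact dvd_pow_self _ (pow_ne_zero _ hp.out.ne_zero)
  have hs's : P.τ (prt p (a + 1) P.t) ^ p = P.τ (prt p a P.t) := by
    rw [← map_pow]; congr 1; simpa using prt_add_pow (p := p) a 1 P.t
  have hsp : P.τ (prt p a P.t) ∣ (p : T) := (map_dvd P.τ hst).trans P.t_dvd_p
  have hs'p : P.τ (prt p (a+1) P.t) ∣ (p : T) := by
    refine Dvd.dvd.trans ?_ hsp
    rw [← hs's]
    exact dvd_pow_self _ hp.out.ne_zero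
  induction m with
  | zero => intro w _; simp
  | succ m ih =>
    intro w hw
    have h1 : P.τ (prt p (a + 1) P.t) ∣ w := by
      obtain ⟨b, c, hbc⟩ := P.lift w
      have h2 : P.τ (prt p a P.t) ∣ w ^ p := (dvd_pow_self _ (Nat.succ_ne_zero m)).trans hw
      obtain ⟨y, hy⟩ := h2
      have h3 : prt p a P.t ∣ b ^ p := by
        have h4 := congrArg P.ψ hy
        have hψp : P.ψ (p : T) = 0 := (P.ψ_zero_iff _).2 dvd_rfl
        rw [hbc, map_pow, map_add, map_mul, hψp, zero_mul, add_zero, map_mul, ψ_τ, ψ_τ] at h4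
        obtain ⟨y', hy'⟩ := Ideal.Quotient.mk_surjective (P.ψ y)
        rw [← hy', ← map_mul, ← map_pow, Ideal.Quotient.eq, Ideal.mem_span_singleton] at h4
        exact (dvd_sub_left (Dvd.intro _ rfl)).1 (hst.trans h4)
      have h5 : prt p (a + 1) P.t ∣ b := by
        apply prt_dvd_of_dvd_pow (p := p) (r := 1)
        rw [prt_add_pow, pow_one]; exact h3
      rw [hbc]
      exact dvd_add (map_dvd P.τ h5) (hs'p.mul_right _)
    obtain ⟨w1, rfl⟩ := h1
    rw [mul_pow, hs's] at hw
    obtain ⟨y, hy⟩ := hw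
    have : P.τ (prt p a P.t) ^ m ∣ w1 ^ p := by
      refine ⟨y, ?_⟩
      rw [← sub_eq_zero]
      apply P.s_nzd (n := 1) (by simpa using hst)
      rw [mul_sub, hy]; ring
    rw [pow_succ']
    exact mul_dvd_mul_left _ (ih _ this)

theorem rootc (P : Pfd p E T) (r : ℕ) (m : ℕ) : ∀ (a : ℕ) (w : T), P.τ (prt p a P.t) ^ m ∣ w ^ p ^ r →
    P.τ (prt p (a + r) P.t) ^ m ∣ w := by
  induction r with
  | zero => intro a w hw; simpa using hw
  | succ r ih =>
    intro a w hw
    rw [pow_succ, pow_mul] at hw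
    have := ih _ _ (P.root1 m _ hw)
    rwa [add_right_comm] at this

theorem key (P : Pfd p E T) (γ : E) (y : T)
    (hy : ∀ r, P.τ γ ^ (p ^ r - 1) ∣ y ^ p ^ r) (r N : ℕ) :
    ∃ a b, P.τ (prt p r (γ * P.t)) * y = P.τ γ * a + p ^ N * b := by
  -- choose s
  have hp2 : 2 ≤ p := hp.out.two_le
  obtain ⟨s, hs⟩ : ∃ s, 2 * N * p ^ r ≤ p ^ s :=
    ⟨2 * N * p ^ r, (Nat.lt_two_pow_self).le.trans (Nat.pow_le_pow_left hp2 _)⟩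
  set k := 2 * p ^ s with hk
  obtain ⟨n, hn⟩ : ∃ n, k * p ^ r ≤ p ^ n :=
    ⟨k * p ^ r, (Nat.lt_two_pow_self).le.trans (Nat.pow_le_pow_left hp2 _)⟩
  set g := prt p s γ with hg
  have hgr : g ^ (2 * N) ∣ prt p r γ := by
    apply prt_dvd_of_dvd_pow (p := p) (r := r)
    rw [prt_pow, ← pow_mul]
    conv_rhs => rw [← prt_pow (p := p) s γ]
    exact pow_dvd_pow _ hs
  have htr : (prt p n P.t) ^ k ∣ prt p r P.t := by
    apply prt_dvd_of_dvd_pow (p := p) (r := r)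
    rw [prt_pow, ← pow_mul]
    conv_rhs => rw [← prt_pow (p := p) n P.t]
    exact pow_dvd_pow _ hn
  -- suffices
  have suff : (∃ a b, P.τ g ^ (2 * N) * P.τ (prt p n P.t) ^ k * y = P.τ γ * a + p ^ N * b) →
      ∃ a b, P.τ (prt p r (γ * P.t)) * y = P.τ γ * a + p ^ N * b := by
    rintro ⟨a, b, hab⟩
    obtain ⟨u, hu⟩ := hgr
    obtain ⟨v, hv⟩ := htr
    refine ⟨P.τ u * P.τ v * a, P.τ u * P.τ v * b, ?_⟩
    rw [map_mul, hu, hv, map_mul, map_mul, map_mul, map_pow, map_pow]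
    linear_combination P.τ u * P.τ v * hab
  apply suff
  by_cases hI : satI P.t γ k = ⊤
  · have h1 : P.t ∣ g * 1 := by
      refine satI_key (p := p) (N := 0) (f := 0) P.nzd hk.ge (k := k) ?_
      rw [hI]; exact Submodule.mem_top
    rw [mul_one, ← P.τ_dvd_iff] at h1
    obtain ⟨u, hu⟩ := h1
    refine ⟨0, (p : T) ^ N * u ^ (2 * N) * P.τ (prt p n P.t) ^ k * y, ?_⟩
    rw [hu]; ring
  obtain ⟨E', _, _, _, j, l, hjl, hnz, hβ, hγ⟩ := exists_Ek P.nzd hk.ge hI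
  obtain ⟨T', _, P', Θ, ht', hΘ⟩ := P.exists_ext j hnz
  have hΘτ : ∀ a, Θ (P.τ a) = P'.τ (j a) := Θ_τ hΘ
  -- w
  obtain ⟨b, hb⟩ := hy n
  obtain ⟨q, hq⟩ : ∃ q, p ^ n = q + 1 :=
      ⟨p ^ n - 1, (Nat.sub_add_cancel (Nat.one_le_pow _ _ (by omega))).symm⟩
  have hlg : P'.τ (j γ) * P'.τ l = P'.τ P'.t ^ k := by
    rw [← map_mul, hjl, map_pow, ht']
  have hw : P'.τ (prt p 0 P'.t) ^ (k * q) ∣ (P'.τ l * Θ y) ^ p ^ n := by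
    have : prt p 0 P'.t = P'.t := prt_unique (by simp)
    rw [this, mul_pow, ← map_pow Θ, hb, map_mul, map_pow, hΘτ, hq, Nat.add_sub_cancel, pow_mul, ← hlg]
    exact ⟨P'.τ l * Θ b, by ring⟩
  obtain ⟨w', hw'⟩ := P'.rootc n (k * q) 0 _ hw
  rw [zero_add] at hw'
  have htn : P'.τ (prt p n P'.t) ^ (q + 1) = P'.τ P'.t := by
    rw [← hq, ← map_pow, prt_pow]
  have h2 : P'.τ (j γ) * w' = P'.τ (prt p n P'.t) ^ k * Θ y := by
    rw [← sub_eq_zero]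
    have : ∀ m : ℕ, ∀ x : T', P'.τ (prt p n P'.t) ^ m * x = 0 → x = 0 := by
      intro m x hx
      rw [← map_pow] at hx
      refine P'.s_nzd (n := m) (pow_dvd_pow_of_dvd ?_ m) hx
      conv_rhs => rw [← prt_pow (p := p) n P'.t]
      exact dvd_pow_self _ (pow_ne_zero _ hp.out.ne_zero)
    apply this (k * q)
    rw [mul_sub, sub_eq_zero]
    calc P'.τ (prt p n P'.t) ^ (k * q) * (P'.τ (j γ) * w')
        = P'.τ (j γ) * (P'.τ (prt p n P'.t) ^ (k * q) * w') := by ring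
      _ = (P'.τ (j γ) * P'.τ l) * Θ y := by rw [← hw']; ring
      _ = P'.τ P'.t ^ k * Θ y := by rw [hlg]
      _ = _ := by rw [← htn]; ring
  -- βN
  have hβ1 : ∀ x : T', ∃ b y, P'.τ (j g) * x = Θ b + p * y := by
    intro x
    obtain ⟨e, x1, rfl⟩ := P'.lift x
    obtain ⟨a, z, haz⟩ := hβ e
    have : (p : T') ∣ P'.τ (j g) * (P'.τ e + p * x1) - Θ (P.τ a) := by
      rw [dvd_sub_iff P', hΘτ]
      have hψp : P'.ψ (p : T') = 0 := (P'.ψ_zero_iff _).2 dvd_rfl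
      rw [map_mul, map_add, map_mul, hψp, ψ_τ, ψ_τ, ψ_τ, zero_mul, add_zero, ← map_mul, haz, map_add,
        map_mul, ← ht', Ideal.Quotient.eq_zero_iff_mem.2 (Ideal.mem_span_singleton_self P'.t)]
      ring
    obtain ⟨y, hy⟩ := this
    exact ⟨P.τ a, y, by rw [← hy]; ring⟩
  have hβN : ∀ (M : ℕ) (x : T'), ∃ b y, P'.τ (j g) ^ M * x = Θ b + p ^ M * y := by
    intro M x
    induction M with
    | zero => exact ⟨0, x, by simp⟩
    | succ M ih =>
      obtain ⟨b, y, h⟩ := ih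
      obtain ⟨b', y', h'⟩ := hβ1 y
      refine ⟨P.τ g * b + p ^ M * b', y', ?_⟩
      rw [map_add, map_mul, map_mul, map_pow, map_natCast, hΘτ, pow_succ, pow_succ]
      linear_combination P'.τ (j g) * h + p ^ M * h'
  have hγN : ∀ (M : ℕ) (b : T), (p : T') ^ M ∣ Θ b → (p : T) ^ M ∣ P.τ g ^ M * b := by
    intro M
    induction M with
    | zero => intro b _; simp
    | succ M ih =>
      intro b hb
      obtain ⟨y, hy⟩ := hb
      have h1 : (p : T) ∣ P.τ g * b := by
        obtain ⟨a, b1, rfl⟩ := P.lift b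
        have h3 : (p : T') ∣ P'.τ (j a) := by
          rw [← hΘτ]
          have : Θ (P.τ a) = p ^ (M + 1) * y - p * Θ b1 := by
            rw [← hy, map_add, map_mul, map_natCast]; ring
          rw [this]
          exact dvd_sub (Dvd.dvd.mul_right (dvd_pow_self _ (Nat.succ_ne_zero _)) _) (Dvd.intro _ rfl)
        rw [P'.τ_dvd_iff, ht'] at h3
        obtain ⟨x, hx⟩ := h3
        have := hγ a x hx
        rw [← P.τ_dvd_iff, map_mul] at this
        rw [mul_add]
        exact dvd_add this ⟨P.τ g * b1, by ring⟩
      obtain ⟨b1, hb1⟩ := h1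
      have h2 : (p : T') ^ M ∣ Θ b1 := by
        refine ⟨P'.τ (j g) * y, ?_⟩
        rw [← sub_eq_zero]
        apply P'.p_nzd
        have := congrArg Θ hb1
        rw [map_mul, map_mul, map_natCast, hy, hΘτ] at this
        rw [mul_sub, ← this]; ring
      obtain ⟨z, hz⟩ := ih b1 h2
      refine ⟨z, ?_⟩
      rw [pow_succ, mul_assoc, hb1, mul_left_comm, hz]; ring
  obtain ⟨b2, y2, h3⟩ := hβN N w'
  have h4 : (p : T') ^ N ∣ Θ (P.τ γ * b2 - P.τ g ^ N * P.τ (prt p n P.t) ^ k * y) := by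
    refine ⟨- (P'.τ (j γ) * y2), ?_⟩
    simp only [map_sub, map_mul, map_pow, hΘτ]
    rw [prt_map j n P.t, ← ht']
    linear_combination -P'.τ (j γ) * h3 + P'.τ (j g) ^ N * h2
  obtain ⟨z, hz⟩ := hγN N _ h4
  refine ⟨P.τ g ^ N * b2, -z, ?_⟩
  linear_combination -hz

end Pfd
end KeyLemma2

section Rho
open MvPolynomial

variable {Z : Type} [CommRing Z] (p : ℕ) (β : ℕ → Z) (S : Set ℕ)

noncomputable def IS : Ideal (MvPolynomial ℕ Z) := Ideal.span ((fun n => X n ^ p - C (β n)) '' S)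

open Classical in
noncomputable def nf (n k : ℕ) : MvPolynomial ℕ Z :=
  if n ∈ S then C (β n) ^ (k / p) * X n ^ (k % p) else X n ^ k

noncomputable def rho : MvPolynomial ℕ Z →ₗ[Z] MvPolynomial ℕ Z :=
  (basisMonomials ℕ Z).constr Z (fun α => α.prod (nf p β S))

theorem nf_zero (n : ℕ) : nf p β S n 0 = 1 := by simp [nf]

theorem rho_monomial (α : ℕ →₀ ℕ) (c : Z) :
    rho p β S (monomial α c) = C c * α.prod (nf p β S) := by
  have h : monomial α c = c • (basisMonomials ℕ Z α) := by
    rw [coe_basisMonomials, smul_monomial, smul_eq_mul, mul_one]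
  rw [h, map_smul, rho, Module.Basis.constr_basis, smul_eq_C_mul]

theorem rho_X_mul (n m : ℕ) (u : MvPolynomial ℕ Z)
    (h : ∀ k, nf p β S n (k + m) = u * nf p β S n k) (P : MvPolynomial ℕ Z) :
    rho p β S (X n ^ m * P) = u * rho p β S P := by
  induction P using MvPolynomial.induction_on' with
  | add P Q hP hQ => rw [mul_add, map_add, hP, hQ, map_add, mul_add]
  | monomial α c =>
    rw [X_pow_eq_monomial, monomial_mul, one_mul, rho_monomial, rho_monomial]
    rw [← Finsupp.mul_prod_erase' α n (nf p β S) (fun i => nf_zero p β S i),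
      ← Finsupp.mul_prod_erase' (Finsupp.single n m + α) n (nf p β S) (fun i => nf_zero p β S i)]
    have h1 : (Finsupp.single n m + α) n = α n + m := by simp [add_comm]
    have h2 : (Finsupp.single n m + α).erase n = α.erase n := by
      rw [Finsupp.erase_add]; simp
    rw [h1, h2, h]; ring

theorem rho_mul_mem (hp : 0 < p) {n : ℕ} (hn : n ∈ S) (P : MvPolynomial ℕ Z) :
    rho p β S (X n ^ p * P) = C (β n) * rho p β S P := by
  apply rho_X_mul
  intro k
  simp only [nf, hn, if_true]
  rw [Nat.add_div_right _ hp, Nat.add_mod_right, pow_succ]; ring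

theorem rho_mul_not_mem {n : ℕ} (hn : n ∉ S) (m : ℕ) (P : MvPolynomial ℕ Z) :
    rho p β S (X n ^ m * P) = X n ^ m * rho p β S P := by
  apply rho_X_mul
  intro k
  simp only [nf, hn, if_false]
  ring

theorem rho_C_mul (c : Z) (P : MvPolynomial ℕ Z) : rho p β S (C c * P) = C c * rho p β S P := by
  rw [← smul_eq_C_mul, map_smul, smul_eq_C_mul]

theorem rho_one : rho p β S 1 = 1 := by
  have := rho_monomial p β S 0 1
  simpa using this

theorem rho_IS (hp : 0 < p) {P : MvPolynomial ℕ Z} (hP : P ∈ IS p β S) : rho p β S P = 0 := by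
  refine Submodule.span_induction (p := fun x _ => ∀ a, rho p β S (a * x) = 0) ?_ ?_ ?_ ?_ hP 1 |> fun h => by simpa using h
  · rintro _ ⟨n, hn, rfl⟩ a
    simp only
    rw [mul_sub, map_sub, mul_comm a, mul_comm a, rho_mul_mem p β S hp hn, rho_C_mul, sub_self]
  · intro a; simp
  · intro x y _ _ hx hy a; rw [mul_add, map_add, hx, hy, add_zero]
  · intro b x _ hx a; rw [smul_eq_mul, ← mul_assoc]; exact hx _

theorem rho_sub_mem (hp : 0 < p) (P : MvPolynomial ℕ Z) : P - rho p β S P ∈ IS p β S := by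
  induction P using MvPolynomial.induction_on' with
  | add P Q hP hQ =>
    rw [map_add]
    have := Ideal.add_mem _ hP hQ
    convert this using 1; ring
  | monomial α c =>
    rw [rho_monomial, monomial_eq, ← mul_sub]
    apply Ideal.mul_mem_left
    rw [← Ideal.Quotient.eq, map_finsuppProd, map_finsuppProd]
    refine Finset.prod_congr rfl fun n _ => ?_
    by_cases hn : n ∈ S
    · simp only [nf, hn, if_true]
      have h1 : Ideal.Quotient.mk (IS p β S) (X n ^ p) = Ideal.Quotient.mk (IS p β S) (C (β n)) := by
        rw [Ideal.Quotient.eq]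
        exact Ideal.subset_span ⟨n, hn, rfl⟩
      conv_lhs => rw [← Nat.div_add_mod (α n) p, pow_add, pow_mul, map_mul, map_pow, h1]
      rw [map_mul, map_pow, map_pow]
    · simp only [nf, hn, if_false]

theorem nzd_Xpow (hp : 0 < p) (n : ℕ) (b : Z) (a : MvPolynomial ℕ Z)
    (h : (X n ^ p - C b) * a = 0) : a = 0 := by
  by_contra ha
  have hne : a.support.Nonempty := by
    rw [Finset.nonempty_iff_ne_empty, Ne, MvPolynomial.support_eq_empty]; exact ha
  obtain ⟨α, hα, hmax⟩ := Finset.exists_max_image a.support (fun α => α n) hne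
  have h1 : X n ^ p * a = C b * a := by rw [← sub_eq_zero, ← sub_mul]; exact h
  have h2 := congrArg (coeff (Finsupp.single n p + α)) h1
  rw [coeff_C_mul, X_pow_eq_monomial, coeff_monomial_mul, one_mul] at h2
  have h3 : coeff (Finsupp.single n p + α) a = 0 := by
    by_contra h4
    have := hmax _ (MvPolynomial.mem_support_iff.2 h4)
    simp at this
    omega
  rw [h3, mul_zero] at h2
  exact (MvPolynomial.mem_support_iff.1 hα) h2

theorem IS_regular (hp : 0 < p) {n : ℕ} (hn : n ∉ S) {a : MvPolynomial ℕ Z}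
    (h : (X n ^ p - C (β n)) * a ∈ IS p β S) : a ∈ IS p β S := by
  have h1 := rho_IS p β S hp h
  rw [sub_mul, map_sub, rho_mul_not_mem p β S hn, rho_C_mul, ← sub_mul] at h1
  have h2 := nzd_Xpow p hp n _ _ h1
  have := rho_sub_mem p β S hp a
  rwa [h2, sub_zero] at this

end Rho

section RegSeq

theorem mvflat {K Z : Type} [CommRing K] [CommRing Z] [Algebra K Z] [Module.Free K Z]
    {ι : Type} [Fintype ι] (a : ι → K) (P : ι → MvPolynomial ℕ Z)
    (h : ∑ i, MvPolynomial.C (algebraMap K Z (a i)) * P i = 0) :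
    ∃ (k : ℕ) (A : ι → Fin k → K) (W : Fin k → MvPolynomial ℕ Z),
      (∀ i, P i = ∑ j, MvPolynomial.C (algebraMap K Z (A i j)) * W j) ∧
      ∀ j, ∑ i, a i * A i j = 0 := by
  have e : ∀ (x : K) (y : MvPolynomial ℕ Z), x • y = MvPolynomial.C (algebraMap K Z x) * y := by
    intro x y
    rw [← MvPolynomial.smul_eq_C_mul, algebraMap_smul]
  have h3 : ∑ i, a i • P i = 0 := by
    rw [← h]; exact Finset.sum_congr rfl fun i _ => e _ _
  obtain ⟨k, A, W, h1, h2⟩ := Module.Flat.isTrivialRelation_of_sum_smul_eq_zero (R := K) (M := MvPolynomial ℕ Z) h3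
  refine ⟨k, A, W, fun i => ?_, h2⟩
  rw [h1 i]; exact Finset.sum_congr rfl fun j _ => e _ _

theorem mvff {K Z : Type} [CommRing K] [CommRing Z] [Nontrivial Z] [Algebra K Z] [Module.Free K Z]
    (I : Ideal K) (h : (1 : MvPolynomial ℕ Z) ∈ I.map (MvPolynomial.C.comp (algebraMap K Z))) :
    (1 : K) ∈ I := by
  rw [← Ideal.comap_map_eq_self_of_faithfullyFlat (B := MvPolynomial ℕ Z) I,
        Ideal.mem_comap, map_one]
  exact h

theorem regseq {E : Type} [CommRing E] (t : E) (ht : ∀ a, t * a = 0 → a = 0) (htu : ¬ IsUnit t)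
    (p : ℕ) (hp : 0 < p) (b : ℕ → Polynomial E) (hb : (b 0).Monic) (hbd : 0 < (b 0).natDegree)
    (e : ℕ → MvPolynomial ℕ (Polynomial E))
    (he0 : MvPolynomial.C (Polynomial.C t) ∣ e 0 - MvPolynomial.C (b 0))
    (hes : ∀ n, MvPolynomial.C (Polynomial.C t) ∣
      e (n + 1) - (MvPolynomial.C (b (n + 1)) - MvPolynomial.X n ^ p))
    {Q : Type} [CommRing Q] (mk : MvPolynomial ℕ (Polynomial E) →+* Q) (hmk : Function.Surjective mk)
    (hmk0 : ∀ a, mk a = 0 ↔ a ∈ Ideal.span (Set.range e)) (f : E →+* Q)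
    (hf : f = mk.comp (MvPolynomial.C.comp Polynomial.C)) :
    (∀ a, f t * a = 0 → a = 0) ∧ EqFlat f t ∧ (∀ 𝔞 : Ideal E, t ∈ 𝔞 → 𝔞.map f = ⊤ → 𝔞 = ⊤) := by
  let Cc := MvPolynomial ℕ (Polynomial E)
  let ι : E →+* Cc := MvPolynomial.C.comp Polynomial.C
  let q : E →+* E ⧸ Ideal.span {t} := Ideal.Quotient.mk _
  have hq : Function.Surjective q := Ideal.Quotient.mk_surjective
  have hqk : RingHom.ker q = Ideal.span {t} := Ideal.mk_ker
  have hqt : q t = 0 := Ideal.Quotient.eq_zero_iff_mem.2 (Ideal.mem_span_singleton_self t)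
  have : Nontrivial (E ⧸ Ideal.span {t}) := by
    rw [Ideal.Quotient.nontrivial_iff, Ne, Ideal.span_singleton_eq_top]; exact htu
  let f0 := (b 0).map q
  have hf0 : f0.Monic := hb.map q
  have hf0d : 0 < f0.natDegree := by rw [hb.natDegree_map]; exact hbd
  let Z := AdjoinRoot f0
  have : Module.Free (E ⧸ Ideal.span {t}) Z := hf0.free_adjoinRoot
  have : Nontrivial Z := by
    refine ⟨⟨1, 0, ?_⟩⟩
    rw [← map_one (AdjoinRoot.mk f0), Ne, AdjoinRoot.mk_eq_zero]
    exact hf0.not_dvd_of_natDegree_lt one_ne_zero (by simpa using hf0d)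
  let κ : Polynomial E →+* Z := (AdjoinRoot.mk f0).comp (Polynomial.mapRingHom q)
  have hκs : Function.Surjective κ :=
    AdjoinRoot.mk_surjective.comp (Polynomial.map_surjective q hq)
  have hκ0 : κ (b 0) = 0 := by
    change AdjoinRoot.mk f0 f0 = 0
    exact AdjoinRoot.mk_self
  have hκt : κ (Polynomial.C t) = 0 := by
    change AdjoinRoot.mk f0 ((Polynomial.C t).map q) = 0
    rw [Polynomial.map_C, hqt]; simp
  have hκk : RingHom.ker κ ≤ Ideal.span {Polynomial.C t, b 0} := by
    intro g hg
    rw [RingHom.mem_ker] at hg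
    change AdjoinRoot.mk f0 (g.map q) = 0 at hg
    rw [AdjoinRoot.mk_eq_zero] at hg
    obtain ⟨h, hh⟩ := hg
    obtain ⟨h, rfl⟩ := Polynomial.map_surjective q hq h
    have : g - b 0 * h ∈ RingHom.ker (Polynomial.mapRingHom q) := by
      rw [RingHom.mem_ker, map_sub, map_mul, sub_eq_zero]; exact hh
    rw [Polynomial.ker_mapRingHom, hqk, Ideal.map_span, Set.image_singleton,
      Ideal.mem_span_singleton] at this
    obtain ⟨k, hk⟩ := this
    rw [Ideal.mem_span_pair]
    exact ⟨k, h, by linear_combination -hk⟩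
  let red : Cc →+* MvPolynomial ℕ Z := MvPolynomial.map κ
  have hreds : Function.Surjective red := MvPolynomial.map_surjective κ hκs
  have hredt : red (ι t) = 0 := by
    change MvPolynomial.map κ (MvPolynomial.C (Polynomial.C t)) = 0
    rw [MvPolynomial.map_C, hκt, map_zero]
  have hrede0 : red (e 0) = 0 := by
    obtain ⟨y, hy⟩ := he0
    have h1 : e 0 = MvPolynomial.C (b 0) + ι t * y := by rw [← sub_eq_iff_eq_add']; exact hy
    rw [h1, map_add, map_mul, hredt, zero_mul, add_zero]
    change MvPolynomial.map κ (MvPolynomial.C (b 0)) = 0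
    rw [MvPolynomial.map_C, hκ0, map_zero]
  let β : ℕ → Z := fun n => κ (b (n + 1))
  have hredes : ∀ n, red (e (n + 1)) = - (MvPolynomial.X n ^ p - MvPolynomial.C (β n)) := by
    intro n
    obtain ⟨y, hy⟩ := hes n
    have h1 : e (n+1) = MvPolynomial.C (b (n+1)) - MvPolynomial.X n ^ p + ι t * y := by
      rw [← sub_eq_iff_eq_add']; exact hy
    rw [h1, map_add, map_mul, hredt, zero_mul, add_zero]
    change MvPolynomial.map κ (MvPolynomial.C (b (n+1)) - MvPolynomial.X n ^ p) = _
    rw [map_sub, map_pow, MvPolynomial.map_X, MvPolynomial.map_C, neg_sub]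
  -- kernel of red
  have hredk : RingHom.ker red ≤ Ideal.span {ι t, e 0} := by
    change RingHom.ker (MvPolynomial.map κ) ≤ _
    rw [MvPolynomial.ker_map]
    refine (Ideal.map_mono hκk).trans ?_
    rw [Ideal.map_span, Ideal.span_le]
    rintro _ ⟨g, (rfl | rfl), rfl⟩
    · exact Ideal.subset_span (Or.inl rfl)
    · obtain ⟨y, hy⟩ := he0
      rw [SetLike.mem_coe, Ideal.mem_span_pair]
      exact ⟨-y, 1, by change -y * (MvPolynomial.C (Polynomial.C t)) + _ = _; linear_combination hy⟩
  let J : ℕ → Ideal Cc := fun n => Ideal.span (e '' {m | m < n})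
  have hJ1 : ∀ n, Ideal.span {ι t, e 0} ≤ J (n + 1) ⊔ Ideal.span {ι t} := by
    intro n
    rw [Ideal.span_le]
    rintro _ (rfl | rfl)
    · exact Ideal.mem_sup_right (Ideal.mem_span_singleton_self _)
    · exact Ideal.mem_sup_left (Ideal.subset_span ⟨0, Nat.succ_pos n, rfl⟩)
  have pre : ∀ n a, red a ∈ IS p β {m | m < n} ↔ a ∈ J (n + 1) ⊔ Ideal.span {ι t} := by
    intro n a
    have hmap : (J (n+1) ⊔ Ideal.span {ι t}).map red = IS p β {m | m < n} := by
      rw [Ideal.map_sup, Ideal.map_span, Ideal.map_span, Set.image_singleton, hredt]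
      apply le_antisymm
      · rw [sup_le_iff, Ideal.span_le, Ideal.span_le]
        constructor
        · rintro _ ⟨_, ⟨m, hm, rfl⟩, rfl⟩
          rcases m with _ | m
          · rw [hrede0]; exact Ideal.zero_mem _
          · rw [hredes]
            exact neg_mem (Ideal.subset_span ⟨m, Nat.lt_of_succ_lt_succ hm, rfl⟩)
        · rintro _ rfl; exact Ideal.zero_mem _
      · rw [IS, Ideal.span_le]
        rintro _ ⟨m, hm, rfl⟩
        refine Ideal.mem_sup_left ?_
        have : (MvPolynomial.X m ^ p - MvPolynomial.C (β m)) = - red (e (m+1)) := by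
          rw [hredes, neg_neg]
        simp only
        rw [this]
        exact neg_mem (Ideal.subset_span ⟨_, ⟨m + 1, Nat.succ_lt_succ hm, rfl⟩, rfl⟩)
    rw [← hmap, ← Ideal.mem_comap, Ideal.comap_map_of_surjective red hreds]
    constructor
    · intro h
      refine (sup_le le_rfl ?_ : _ ≤ J (n + 1) ⊔ Ideal.span {ι t}) h
      exact hredk.trans (hJ1 n)
    · intro h; exact Ideal.mem_sup_left h
  have preU : ∀ a, red a ∈ IS p β Set.univ → a ∈ Ideal.span (Set.range e) ⊔ Ideal.span {ι t} := by
    intro a ha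
    have hmap : IS p β Set.univ ≤ (Ideal.span (Set.range e) ⊔ Ideal.span {ι t}).map red := by
      rw [IS, Ideal.span_le]
      rintro _ ⟨m, hm, rfl⟩
      have : (MvPolynomial.X m ^ p - MvPolynomial.C (β m)) = - red (e (m+1)) := by
        rw [hredes, neg_neg]
      simp only
      rw [this]
      exact neg_mem (Ideal.mem_map_of_mem _ (Ideal.mem_sup_left (Ideal.subset_span ⟨m+1, rfl⟩)))
    have h2 := hmap ha
    rw [← Ideal.mem_comap, Ideal.comap_map_of_surjective red hreds] at h2
    refine (sup_le le_rfl ?_ : _ ≤ Ideal.span (Set.range e) ⊔ Ideal.span {ι t}) h2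
    refine hredk.trans ?_
    rw [Ideal.span_le]
    rintro _ (rfl | rfl)
    · exact Ideal.mem_sup_right (Ideal.mem_span_singleton_self _)
    · exact Ideal.mem_sup_left (Ideal.subset_span ⟨0, rfl⟩)
  have redU : ∀ a, a ∈ Ideal.span (Set.range e) ⊔ Ideal.span {ι t} → red a ∈ IS p β Set.univ := by
    intro a ha
    rw [← Ideal.mem_comap]
    refine (sup_le ?_ ?_ : _ ≤ Ideal.comap red (IS p β Set.univ)) ha
    · rw [Ideal.span_le]
      rintro _ ⟨m, rfl⟩
      rw [SetLike.mem_coe, Ideal.mem_comap]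
      rcases m with _ | m
      · rw [hrede0]; exact Ideal.zero_mem _
      · rw [hredes]
        exact neg_mem (Ideal.subset_span ⟨m, trivial, rfl⟩)
    · rw [Ideal.span_le]
      rintro _ rfl
      rw [SetLike.mem_coe, Ideal.mem_comap, hredt]; exact Ideal.zero_mem _
  -- regularity mod t
  have hregt : ∀ n a, e n * a ∈ J n ⊔ Ideal.span {ι t} → a ∈ J n ⊔ Ideal.span {ι t} := by
    intro n a ha
    rcases n with _ | n
    · have hJ0 : J 0 = ⊥ := by
        change Ideal.span (e '' {m | m < 0}) = ⊥
        simp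
      rw [hJ0, bot_sup_eq] at ha ⊢
      let r : Cc →+* MvPolynomial ℕ (Polynomial (E ⧸ Ideal.span {t})) :=
        MvPolynomial.map (Polynomial.mapRingHom q)
      have hrk : RingHom.ker r = Ideal.span {ι t} := by
        change RingHom.ker (MvPolynomial.map _) = _
        rw [MvPolynomial.ker_map, Polynomial.ker_mapRingHom, hqk, Ideal.map_span, Ideal.map_span,
          Set.image_singleton, Set.image_singleton]
        rfl
      rw [← hrk, RingHom.mem_ker] at ha ⊢
      have hrt : r (ι t) = 0 := by
        rw [← RingHom.mem_ker, hrk]; exact Ideal.mem_span_singleton_self _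
      have hre0 : r (e 0) = MvPolynomial.C f0 := by
        obtain ⟨y, hy⟩ := he0
        have h1 : e 0 = MvPolynomial.C (b 0) + ι t * y := by rw [← sub_eq_iff_eq_add']; exact hy
        rw [h1, map_add, map_mul, hrt, zero_mul, add_zero]
        exact MvPolynomial.map_C _ _
      rw [map_mul, hre0] at ha
      ext1 m
      have := congrArg (MvPolynomial.coeff m) ha
      rw [MvPolynomial.coeff_C_mul, MvPolynomial.coeff_zero, hf0.mul_right_eq_zero_iff] at this
      rw [this, MvPolynomial.coeff_zero]
    · rw [← pre] at ha ⊢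
      rw [map_mul, hredes, neg_mul, Ideal.neg_mem_iff] at ha
      exact IS_regular p β _ hp (by simp) ha
  have hR : ∀ n a, ι t * a ∈ J n → a ∈ J n := by
    intro n
    induction n with
    | zero =>
      intro a ha
      have hJ0 : J 0 = ⊥ := by
        change Ideal.span (e '' {m | m < 0}) = ⊥
        simp
      rw [hJ0, Ideal.mem_bot] at ha ⊢
      ext m k
      have := congrArg (fun P => (MvPolynomial.coeff m P).coeff k) ha
      have h2 : t * (MvPolynomial.coeff m a).coeff k = 0 := by
        rw [← Polynomial.coeff_C_mul, ← MvPolynomial.coeff_C_mul]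
        exact this
      rw [ht _ h2]; simp
    | succ n ih =>
      intro a ha
      have hJs : J (n + 1) = Ideal.span {e n} ⊔ J n := by
        change Ideal.span _ = _ ⊔ Ideal.span _
        rw [← Ideal.span_union, Set.singleton_union, ← Set.image_insert_eq]
        congr 2
        ext m; simp only [Set.mem_setOf_eq, Set.mem_insert_iff]; omega
      rw [hJs, Ideal.mem_span_singleton_sup] at ha
      obtain ⟨c, i, hi, hci⟩ := ha
      have h1 : c ∈ J n ⊔ Ideal.span {ι t} := by
        apply hregt
        rw [mul_comm, ← eq_sub_iff_add_eq] at hci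
        rw [mul_comm] at hci
        rw [mul_comm (e n), hci]
        refine Ideal.sub_mem _ (Ideal.mem_sup_right ?_) (Ideal.mem_sup_left hi)
        exact Ideal.mul_mem_right _ _ (Ideal.mem_span_singleton_self _)
      rw [sup_comm, Ideal.mem_span_singleton_sup] at h1
      obtain ⟨c', i', hi', hc'⟩ := h1
      have h2 : ι t * (a - e n * c') ∈ J n := by
        have : ι t * (a - e n * c') = i + e n * i' := by
          rw [mul_sub, ← hci, ← hc']; ring
        rw [this]
        exact Ideal.add_mem _ hi (Ideal.mul_mem_left _ _ hi')
      rw [hJs, Ideal.mem_span_singleton_sup]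
      exact ⟨c', _, ih _ h2, by ring⟩
  have hJle : ∀ n, J n ≤ Ideal.span (Set.range e) :=
    fun n => Ideal.span_mono (Set.image_subset_range _ _)
  have hRU : ∀ a, ι t * a ∈ Ideal.span (Set.range e) → a ∈ Ideal.span (Set.range e) := by
    intro a ha
    have hmem : ∀ x ∈ Ideal.span (Set.range e), ∃ n, x ∈ J n := by
      intro x hx
      have hmono : Monotone J := fun m n hmn =>
        Ideal.span_mono (Set.image_mono (fun k hk => lt_of_lt_of_le hk hmn))
      refine Submodule.span_induction (p := fun x _ => ∃ n, x ∈ J n) ?_ ?_ ?_ ?_ hx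
      · rintro _ ⟨n, rfl⟩; exact ⟨n + 1, Ideal.subset_span ⟨n, Nat.lt_succ_self n, rfl⟩⟩
      · exact ⟨0, Ideal.zero_mem _⟩
      · rintro x y _ _ ⟨m, hm⟩ ⟨n, hn⟩
        exact ⟨max m n, Ideal.add_mem _ (hmono (le_max_left _ _) hm) (hmono (le_max_right _ _) hn)⟩
      · rintro c x _ ⟨m, hm⟩; exact ⟨m, Ideal.mul_mem_left _ _ hm⟩
    obtain ⟨n, hn⟩ := hmem _ ha
    exact hJle n (hR n a hn)
  have hmke : ∀ a b, mk a = mk b ↔ a - b ∈ Ideal.span (Set.range e) := by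
    intro a b; rw [← hmk0, map_sub, sub_eq_zero]
  have hfι : ∀ a, f a = mk (ι a) := fun a => by rw [hf]; rfl
  have hredι : ∀ a, red (ι a) = MvPolynomial.C (algebraMap (E ⧸ Ideal.span {t}) Z (q a)) := by
    intro a
    change MvPolynomial.map κ (MvPolynomial.C (Polynomial.C a)) = _
    rw [MvPolynomial.map_C]
    congr 1
    change AdjoinRoot.mk f0 ((Polynomial.C a).map q) = _
    rw [Polynomial.map_C]; rfl
  refine ⟨?_, ?_, ?_⟩
  · intro a ha
    obtain ⟨a, rfl⟩ := hmk a
    rw [hfι, ← map_mul, hmk0] at ha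
    exact (hmk0 _).2 (hRU a ha)
  · intro ι' _ a bb hab
    choose B hB using fun i => hmk (bb i)
    have h1 : ∑ i, ι (a i) * B i ∈ Ideal.span (Set.range e) ⊔ Ideal.span {ι t} := by
      obtain ⟨y, hy⟩ := hab
      obtain ⟨y, rfl⟩ := hmk y
      have : ∑ i, ι (a i) * B i - ι t * y ∈ Ideal.span (Set.range e) := by
        rw [← hmke, map_sum, map_mul, ← hfι, ← hy]
        exact Finset.sum_congr rfl fun i _ => by rw [map_mul, hB, hfι]
      have h2 : ∑ i, ι (a i) * B i = (∑ i, ι (a i) * B i - ι t * y) + ι t * y := by ring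
      rw [h2]
      exact Ideal.add_mem _ (Ideal.mem_sup_left this)
        (Ideal.mem_sup_right (Ideal.mul_mem_right _ _ (Ideal.mem_span_singleton_self _)))
    have h2 := rho_IS p β _ hp (redU _ h1)
    have h3 : ∑ i, MvPolynomial.C (algebraMap (E ⧸ Ideal.span {t}) Z (q (a i))) *
        rho p β Set.univ (red (B i)) = 0 := by
      rw [map_sum, map_sum] at h2
      rw [← h2]
      refine Finset.sum_congr rfl fun i _ => ?_
      rw [map_mul, hredι, rho_C_mul]
    obtain ⟨k, A, W, hW1, hW2⟩ := mvflat _ _ h3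
    choose α hα using fun i j => hq (A i j)
    choose V hV using fun j => hreds (W j)
    have h4 : ∀ i, B i - ∑ j, ι (α i j) * V j ∈ Ideal.span (Set.range e) ⊔ Ideal.span {ι t} := by
      intro i
      apply preU
      have h5 : red (∑ j, ι (α i j) * V j) = rho p β Set.univ (red (B i)) := by
        rw [map_sum, hW1 i]
        refine Finset.sum_congr rfl fun j _ => ?_
        rw [map_mul, hV, hredι, hα]
      rw [map_sub, h5]
      exact rho_sub_mem p β _ hp _
    have h6 : ∀ i, ∃ y, bb i = ∑ j, f (α i j) * mk (V j) + f t * y := by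
      intro i
      have := h4 i
      rw [sup_comm, Ideal.mem_span_singleton_sup] at this
      obtain ⟨c, x, hx, hc⟩ := this
      refine ⟨mk c, ?_⟩
      have h7 : B i = ∑ j, ι (α i j) * V j + ι t * c + x := by linear_combination -hc
      rw [← hB i, h7, map_add, map_add, (hmk0 _).2 hx, add_zero, map_sum, map_mul, hfι]
      congr 1
      exact Finset.sum_congr rfl fun j _ => by rw [map_mul, hfι]
    choose y hy using h6
    refine ⟨Fin k, inferInstance, α, fun j => mk (V j), y, hy, ?_⟩
    intro j
    rw [← Ideal.mem_span_singleton, ← hqk, RingHom.mem_ker, map_sum, ← hW2 j]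
    exact Finset.sum_congr rfl fun i _ => by rw [map_mul, hα]
  · intro 𝔞 hta h𝔞
    have h1 : (1 : Q) ∈ 𝔞.map f := by
      rw [h𝔞]; trivial
    obtain ⟨n, s, g, hs⟩ := (Submodule.mem_span_set'
      (R := Q)).1 h1
    have hg : ∀ i, ∃ x ∈ 𝔞, f x = g i := fun i => (g i).2
    choose x hx𝔞 hx using hg
    choose B hB using fun i => hmk (s i)
    have h2 : 1 - ∑ i, ι (x i) * B i ∈ Ideal.span (Set.range e) := by
      rw [← hmke, map_one, ← hs, map_sum]
      exact Finset.sum_congr rfl fun i _ => by rw [map_mul, hB, ← hx, smul_eq_mul, mul_comm, hfι]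
    have h3 := rho_IS p β _ hp (redU _ (Ideal.mem_sup_left h2))
    rw [map_sub, map_sub, map_one, rho_one, sub_eq_zero, map_sum, map_sum] at h3
    have h5 : (1 : E ⧸ Ideal.span {t}) ∈ 𝔞.map q := by
      apply mvff (Z := Z)
      rw [h3]
      refine Ideal.sum_mem _ fun i _ => ?_
      rw [map_mul, hredι, rho_C_mul]
      refine Ideal.mul_mem_right _ _ ?_
      exact Ideal.mem_map_of_mem (MvPolynomial.C.comp (algebraMap (E ⧸ Ideal.span {t}) Z))
        (Ideal.mem_map_of_mem _ (hx𝔞 i))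
    rw [Ideal.mem_map_iff_of_surjective q hq] at h5
    obtain ⟨y, hy, hy1⟩ := h5
    have h6 : y - 1 ∈ 𝔞 := by
      have : y - 1 ∈ RingHom.ker q := by rw [RingHom.mem_ker, map_sub, map_one, hy1, sub_self]
      rw [hqk, Ideal.mem_span_singleton] at this
      obtain ⟨c, hc⟩ := this
      rw [hc]; exact Ideal.mul_mem_right _ _ hta
    rw [Ideal.eq_top_iff_one]
    have := Ideal.sub_mem _ hy h6
    simpa using this

end RegSeq

section PC
variable {p : ℕ} [Fact p.Prime] {E : Type} [CommRing E] [CharP E p] [PerfectRing E p]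
  {G : Type} [CommRing G] [CharP G p]

theorem pc_root_fin {ι : Type} [Fintype ι] (b : ι → PerfectClosure G p) :
    ∃ n, ∀ i, ∃ a, b i ^ p ^ n = PerfectClosure.of G p a := by
  choose N a ha using fun i => pc_root (p := p) (b i)
  refine ⟨Finset.univ.sup N, fun i => ?_⟩
  have h : N i ≤ Finset.univ.sup N := Finset.le_sup (Finset.mem_univ i)
  obtain ⟨k, hk⟩ := Nat.exists_eq_add_of_le h
  refine ⟨a i ^ p ^ k, ?_⟩
  rw [hk, pow_add, pow_mul, ha, map_pow]

theorem pc_eqFlat {f : E →+* G} {t : E} (hf : ∀ m, EqFlat f (t ^ p ^ m)) :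
    EqFlat ((PerfectClosure.of G p).comp f) t := by
  intro ι _ a b hab
  obtain ⟨y, hy⟩ := hab
  obtain ⟨n, hn⟩ := pc_root_fin (p := p) (fun i : Option ι => i.elim y b)
  choose β hβ using fun i => hn (some i)
  obtain ⟨η, hη⟩ := hn none
  simp only [Option.elim] at hβ hη
  have h1 : PerfectClosure.of G p (∑ i, f (a i) ^ p ^ n * β i) =
      PerfectClosure.of G p (f t ^ p ^ n * η) := by
    rw [map_sum, map_mul, ← hη, map_pow, ← mul_pow]
    rw [RingHom.comp_apply] at hy
    rw [← hy, sum_pow_char_pow]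
    refine Finset.sum_congr rfl fun i _ => ?_
    rw [map_mul, map_pow, ← hβ, mul_pow, RingHom.comp_apply]
  obtain ⟨m, hm⟩ := pc_of_eq h1
  rw [sum_pow_char_pow, mul_pow, ← pow_mul, ← pow_add] at hm
  have h2 : ∑ i, f (a i ^ p ^ (n + m)) * (β i ^ p ^ m) = f (t ^ p ^ (n + m)) * η ^ p ^ m := by
    rw [map_pow, ← hm]
    refine Finset.sum_congr rfl fun i _ => ?_
    rw [mul_pow, map_pow, ← pow_mul, ← pow_add]
  obtain ⟨κ, _, α, w, e, hw, hd⟩ := hf (n + m) ι (fun i => a i ^ p ^ (n+m)) (fun i => β i ^ p ^ m) ⟨_, h2⟩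
  refine ⟨κ, inferInstance, fun i j => prt p (n+m) (α i j),
    fun j => prt p (n+m) (PerfectClosure.of G p (w j)),
    fun i => prt p (n+m) (PerfectClosure.of G p (e i)), ?_, ?_⟩
  · intro i
    have h3 : b i = prt p (n+m) (PerfectClosure.of G p (β i ^ p ^ m)) := by
      symm
      apply prt_unique
      rw [map_pow, ← hβ, ← pow_mul, ← pow_add]
    have h4 : ∀ x : E, prt p (n+m) (PerfectClosure.of G p (f x)) =
        (PerfectClosure.of G p).comp f (prt p (n+m) x) := by
      intro x
      apply prt_unique
      rw [← map_pow, prt_pow]; rfl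
    rw [h3, hw, map_add, map_add, map_sum, map_sum, map_mul, map_mul, h4, prt_of_pow]
    congr 1
    refine Finset.sum_congr rfl fun j _ => ?_
    rw [map_mul, map_mul, h4]
  · intro j
    apply prt_dvd_of_dvd_pow (p := p) (r := n + m)
    rw [sum_pow_char_pow]
    convert hd j using 1
    refine Finset.sum_congr rfl fun i _ => ?_
    rw [mul_pow, prt_pow]

theorem pc_proper {f : E →+* G} {𝔞 : Ideal E} (h : 𝔞.map ((PerfectClosure.of G p).comp f) = ⊤) :
    𝔞.map f = ⊤ := by
  have h1 : (1 : PerfectClosure G p) ∈ 𝔞.map ((PerfectClosure.of G p).comp f) := by rw [h]; trivial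
  obtain ⟨k, s, g, hs⟩ := (Submodule.mem_span_set' (R := PerfectClosure G p)).1 h1
  have hg : ∀ i, ∃ x ∈ 𝔞, (PerfectClosure.of G p).comp f x = g i := fun i => (g i).2
  choose x hx𝔞 hx using hg
  obtain ⟨n, hn⟩ := pc_root_fin (p := p) s
  choose β hβ using hn
  have h2 : PerfectClosure.of G p (∑ i, β i * f (x i) ^ p ^ n) = PerfectClosure.of G p 1 := by
    rw [map_one, ← one_pow (p ^ n), ← hs, sum_pow_char_pow, map_sum]
    refine Finset.sum_congr rfl fun i _ => ?_
    rw [smul_eq_mul, ← hx, mul_pow, hβ, map_mul, map_pow, RingHom.comp_apply]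
  obtain ⟨m, hm⟩ := pc_of_eq h2
  rw [one_pow] at hm
  rw [Ideal.eq_top_iff_one, ← hm]
  refine Ideal.pow_mem_of_mem _ ?_ _ (pow_pos (Fact.out : p.Prime).pos _)
  refine Ideal.sum_mem _ fun i _ => Ideal.mul_mem_left _ _ ?_
  exact Ideal.pow_mem_of_mem _ (Ideal.mem_map_of_mem _ (hx𝔞 i)) _ (pow_pos (Fact.out : p.Prime).pos _)

end PC

theorem exists_quot {A : Type} [CommRing A] (I : Ideal A) : ∃ (Q : Type) (_ : CommRing Q)
    (q : A →+* Q), Function.Surjective q ∧ ∀ a, q a = 0 ↔ a ∈ I :=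
  ⟨A ⧸ I, inferInstance, Ideal.Quotient.mk I, Ideal.Quotient.mk_surjective,
    fun _ => Ideal.Quotient.eq_zero_iff_mem⟩

section Andre
variable {p : ℕ} [Fact p.Prime] {E : Type} [CommRing E] [CharP E p] [PerfectRing E p]
open WittVector

theorem andre (t : E) (ht : ∀ a, t * a = 0 → a = 0) (htu : ¬ IsUnit t) (w : WittVector p E)
    (F : Polynomial (WittVector p E)) (hF : F.Monic) (hFd : 0 < F.natDegree) :
    ∃ (E' : Type) (_ : CommRing E') (_ : CharP E' p) (_ : PerfectRing E' p) (h : E →+* E') (z : E')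
      (x : WittVector p E'), (∀ a, h t * a = 0 → a = 0) ∧ EqFlat h t ∧
      (∀ 𝔞 : Ideal E, t ∈ 𝔞 → 𝔞.map h = ⊤ → 𝔞 = ⊤) ∧
      F.eval₂ (WittVector.map h) (teichmuller p z) =
        WittVector.map h ((p : WittVector p E) + teichmuller p t * w) * x := by
  have hp : 0 < p := (Fact.out : p.Prime).pos
  let Cp := MvPolynomial ℕ (Polynomial E)
  let ι : E →+* Cp := MvPolynomial.C.comp Polynomial.C
  let Fz : WittVector p (Polynomial E) :=
    F.eval₂ (WittVector.map Polynomial.C) (teichmuller p Polynomial.X)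
  let b : ℕ → Polynomial E := fun n => Fz.coeff n
  have hb0 : b 0 = F.map constantCoeff := by
    change constantCoeff Fz = _
    rw [Polynomial.hom_eval₂]
    have h1 : (constantCoeff (p := p) (R := Polynomial E)).comp (WittVector.map Polynomial.C) =
        Polynomial.C.comp (constantCoeff (p := p) (R := E)) := by
      ext x
      rfl
    have h2 : constantCoeff (teichmuller p (Polynomial.X : Polynomial E)) = Polynomial.X :=
      teichmuller_coeff_zero p _
    rw [h1, h2]; rfl
  have hnt : Nontrivial E := by
    by_contra hG
    rw [not_nontrivial_iff_subsingleton] at hG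
    exact htu (isUnit_of_subsingleton t)
  · have hbm : (b 0).Monic := by rw [hb0]; exact hF.map _
    have hbd : 0 < (b 0).natDegree := by rw [hb0, hF.natDegree_map]; exact hFd
    let X : WittVector p Cp := WittVector.mk p (fun n => MvPolynomial.X n)
    let d' : WittVector p Cp := WittVector.map ι ((p : WittVector p E) + teichmuller p t * w)
    let e : ℕ → Cp := fun n => MvPolynomial.C (b n) - (d' * X).coeff n
    have hιu : ¬ IsUnit (ι t) := by
      intro h
      apply htu
      have := h.map ((Polynomial.evalRingHom 0).comp (MvPolynomial.constantCoeff (σ := ℕ) (R := Polynomial E)))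
      have h2 : ((Polynomial.evalRingHom 0).comp (MvPolynomial.constantCoeff (σ := ℕ)
          (R := Polynomial E))) (MvPolynomial.C (Polynomial.C t)) = t := by simp
      rw [← h2]; exact this
    obtain ⟨Q, iQ, q, hqs, hq0⟩ := exists_quot (Ideal.span {ι t})
    have hqt : q (ι t) = 0 := (hq0 _).2 (Ideal.mem_span_singleton_self _)
    have : Nontrivial Q := by
      refine ⟨⟨q 1, 0, fun h => hιu ?_⟩⟩
      rw [hq0] at h
      rwa [← Ideal.span_singleton_eq_top, Ideal.eq_top_iff_one]
    have : CharP Q p := charP_of_nontriv Q (by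
      rw [← map_natCast q, CharP.cast_eq_zero Cp p, map_zero])
    have hqd : WittVector.map q d' = (p : WittVector p Q) := by
      change WittVector.map q (WittVector.map ι ((p : WittVector p E) + teichmuller p t * w)) = _
      rw [map_add, map_add, map_mul, map_mul, map_teichmuller, map_teichmuller, hqt, map_natCast,
        map_natCast, teichmuller_zero, zero_mul, add_zero]
    have hq : ∀ n, q ((d' * X).coeff n) = (WittVector.map q X * (p : WittVector p Q)).coeff n := by
      intro n
      rw [← WittVector.map_coeff, map_mul, hqd, mul_comm]
    have he0 : MvPolynomial.C (Polynomial.C t) ∣ e 0 - MvPolynomial.C (b 0) := by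
      rw [← Ideal.mem_span_singleton]
      change _ ∈ Ideal.span {ι t}
      rw [← hq0]
      simp only [e]
      rw [sub_sub_cancel_left, map_neg, hq, mul_charP_coeff_zero, neg_zero]
    have hes : ∀ n, MvPolynomial.C (Polynomial.C t) ∣
        e (n + 1) - (MvPolynomial.C (b (n + 1)) - MvPolynomial.X n ^ p) := by
      intro n
      rw [← Ideal.mem_span_singleton]
      change _ ∈ Ideal.span {ι t}
      rw [← hq0]
      simp only [e]
      rw [sub_sub_sub_cancel_left, map_sub, hq, mul_charP_coeff_succ, map_pow, map_coeff]
      exact sub_self _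
    obtain ⟨G, iG, mk, hmk, hmk0⟩ := exists_quot (Ideal.span (Set.range e))
    obtain ⟨h1, h2, h3⟩ := regseq t ht htu p hp b hbm hbd e he0 hes mk hmk hmk0 (mk.comp ι) rfl
    set f := mk.comp ι with hf
    have : Nontrivial G := by
      by_contra hG
      rw [not_nontrivial_iff_subsingleton] at hG
      apply htu
      rw [← Ideal.span_singleton_eq_top]
      exact h3 _ (Ideal.mem_span_singleton_self t) (Subsingleton.elim _ _)
    have : CharP G p := charP_of_nontriv G (by
      rw [← map_natCast mk, CharP.cast_eq_zero Cp p, map_zero])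
    let of := PerfectClosure.of G p
    refine ⟨PerfectClosure G p, inferInstance, inferInstance, inferInstance, of.comp f,
      of (mk (MvPolynomial.C Polynomial.X)), WittVector.map (of.comp mk) X, ?_, ?_, ?_, ?_⟩
    · intro a ha
      exact pc_nzd h1 a ha
    · apply pc_eqFlat
      intro m
      obtain ⟨k, hk⟩ := Nat.exists_eq_succ_of_ne_zero (pow_pos hp m).ne'
      rw [hk]
      exact h2.pow h1 k
    · intro 𝔞 h𝔞 h𝔞'
      exact h3 𝔞 h𝔞 (pc_proper h𝔞')
    · have e1 : F.eval₂ (WittVector.map (of.comp f)) (teichmuller p (of (mk (MvPolynomial.C Polynomial.X))))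
          = WittVector.map (of.comp (mk.comp MvPolynomial.C)) Fz := by
        rw [Polynomial.hom_eval₂, map_teichmuller]
        rfl
      have e2 : WittVector.map (of.comp f) ((p : WittVector p E) + teichmuller p t * w) = WittVector.map (of.comp mk) d' := rfl
      rw [e1, e2, ← map_mul]
      ext n
      rw [map_coeff, map_coeff]
      change of (mk (MvPolynomial.C (b n))) = of (mk ((d' * X).coeff n))
      congr 1
      rw [← sub_eq_zero, ← map_sub, hmk0]
      exact Ideal.subset_span ⟨n, rfl⟩

end Andre

section AndreStep
variable {p : ℕ} [Fact p.Prime] {E T : Type} [CommRing E] [CharP E p] [PerfectRing E p] [CommRing T]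
open WittVector

theorem Pfd.andre_step (P : Pfd p E T) (hT : ¬ IsUnit (p : T)) (F : Polynomial T) (hF : F.Monic)
    (hFd : 0 < F.natDegree) :
    ∃ (E' T' : Type) (_ : CommRing E') (_ : CharP E' p) (_ : PerfectRing E' p) (_ : CommRing T')
      (P' : Pfd p E' T') (Θ : T →+* T') (z : E') (h : E →+* E'), EqFlat Θ (p : T) ∧
      (∀ 𝔞 : Ideal T, (p : T) ∈ 𝔞 → 𝔞.map Θ = ⊤ → 𝔞 = ⊤) ∧
      F.eval₂ Θ (P'.τ z) = 0 ∧ ∀ a, Θ (P.τ a) = P'.τ (h a) := by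
  have htu : ¬ IsUnit P.t := fun h => hT (isUnit_of_dvd_unit P.p_dvd_t (h.map P.τ))
  obtain ⟨F', hF'1, hF'2, hF'3⟩ := Polynomial.lifts_and_natDegree_eq_and_monic
    ((Polynomial.mem_lifts F).2 (Polynomial.map_surjective P.θ P.surj F)) hF
  obtain ⟨E', _, _, _, h, z, x, h1, h2, h3, h4⟩ := andre P.t P.nzd htu P.w F' hF'3 (by rwa [hF'2])
  obtain ⟨T', _, P', Θ, ht, hΘ⟩ := P.exists_ext h h1
  refine ⟨E', T', _, _, _, _, P', Θ, z, h, Pfd.ext_eqFlat hΘ ht h2, ?_, ?_, Pfd.Θ_τ hΘ⟩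
  · intro 𝔞 hp𝔞 h𝔞
    let q : E →+* E ⧸ Ideal.span {P.t} := Ideal.Quotient.mk _
    let 𝔟 : Ideal E := (𝔞.map P.ψ).comap q
    have ht𝔟 : P.t ∈ 𝔟 := by
      change q P.t ∈ 𝔞.map P.ψ
      have : q P.t = 0 := Ideal.Quotient.eq_zero_iff_mem.2 (Ideal.mem_span_singleton_self _)
      rw [this]; exact Ideal.zero_mem _
    have hψs : Function.Surjective P.ψ := by
      intro y
      obtain ⟨y, rfl⟩ := Ideal.Quotient.mk_surjective y
      exact ⟨P.τ y, P.ψ_τ y⟩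
    have h𝔟 : 𝔟.map h = ⊤ := by
      have h5 : 𝔞.map Θ ≤ ((𝔟.map h).map (Ideal.Quotient.mk (Ideal.span {P'.t}))).comap P'.ψ := by
        rw [Ideal.map_le_iff_le_comap]
        intro a ha
        obtain ⟨α, b, rfl⟩ := P.lift a
        rw [Ideal.mem_comap, Ideal.mem_comap]
        have : P'.ψ (Θ (P.τ α + p * b)) = Ideal.Quotient.mk _ (h α) := by
          rw [map_add, map_mul, map_natCast, Pfd.Θ_τ hΘ, map_add, map_mul, Pfd.ψ_τ,
            (P'.ψ_zero_iff (p : T')).2 dvd_rfl, zero_mul, add_zero]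
        rw [this]
        refine Ideal.mem_map_of_mem _ (Ideal.mem_map_of_mem _ ?_)
        change q α ∈ 𝔞.map P.ψ
        have h6 : q α = P.ψ (P.τ α + p * b) := by
          rw [map_add, map_mul, Pfd.ψ_τ, (P.ψ_zero_iff (p : T)).2 dvd_rfl, zero_mul, add_zero]
        rw [h6]
        exact Ideal.mem_map_of_mem _ ha
      rw [h𝔞, top_le_iff, Ideal.eq_top_iff_one, Ideal.mem_comap, map_one,
        Ideal.mem_map_iff_of_surjective _ Ideal.Quotient.mk_surjective] at h5
      obtain ⟨y, hy, hy1⟩ := h5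
      rw [← map_one (Ideal.Quotient.mk (Ideal.span {P'.t})), Ideal.Quotient.eq,
        Ideal.mem_span_singleton] at hy1
      obtain ⟨c, hc⟩ := hy1
      rw [Ideal.eq_top_iff_one]
      have : (1 : E') = y - h P.t * c := by rw [← ht, ← hc]; ring
      rw [this]
      exact Ideal.sub_mem _ hy (Ideal.mul_mem_right _ _ (Ideal.mem_map_of_mem _ ht𝔟))
    have h6 := h3 𝔟 ht𝔟 h𝔟
    rw [Ideal.eq_top_iff_one, Ideal.mem_comap, map_one, Ideal.mem_map_iff_of_surjective _ hψs] at h6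
    obtain ⟨y, hy, hy1⟩ := h6
    rw [← map_one P.ψ, ← P.dvd_sub_iff] at hy1
    obtain ⟨c, hc⟩ := hy1
    rw [Ideal.eq_top_iff_one]
    have : (1 : T) = y - p * c := by rw [← hc]; ring
    rw [this]
    exact Ideal.sub_mem _ hy (Ideal.mul_mem_right _ _ hp𝔞)
  · rw [← hF'1, Polynomial.eval₂_map]
    have : Θ.comp P.θ = P'.θ.comp (WittVector.map h) := by ext x; exact hΘ x
    rw [this, P'.τ_def, ← Polynomial.hom_eval₂, h4, map_mul, ← hΘ, P.kd, map_zero, zero_mul]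

end AndreStep

section FinalArg

theorem artin_rees_colon {R : Type} [CommRing R] [IsDomain R] [IsNoetherianRing R] (p g : R)
    (hg : g ≠ 0) (k : ℕ) : ∃ N, ∀ a, g * a ∈ Ideal.span {p ^ N} → a ∈ Ideal.span {p ^ k} := by
  obtain ⟨k0, hk0⟩ := Ideal.exists_pow_inf_eq_pow_smul (Ideal.span {p}) (Ideal.span {g} : Submodule R R)
  refine ⟨k0 + k, fun a ha => ?_⟩
  have h1 := hk0 (k0 + k) (Nat.le_add_right _ _)
  have h2 : g * a ∈ (Ideal.span {p} ^ (k0 + k) • ⊤ ⊓ Ideal.span {g} : Submodule R R) := by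
    refine ⟨?_, ?_⟩
    · simpa [Ideal.span_singleton_pow] using ha
    · exact Ideal.mul_mem_right _ _ (Ideal.mem_span_singleton_self _)
  rw [h1, Nat.add_sub_cancel_left] at h2
  have h3 : g * a ∈ Ideal.span {p ^ k} * Ideal.span {g} := by
    rw [← Ideal.span_singleton_pow]
    exact Submodule.smul_mono le_rfl inf_le_right h2
  rw [Ideal.span_singleton_mul_span_singleton, Ideal.mem_span_singleton] at h3
  obtain ⟨b, hb⟩ := h3
  rw [Ideal.mem_span_singleton]
  refine ⟨b, mul_left_cancel₀ hg ?_⟩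
  rw [hb]; ring

theorem final_T {p : ℕ} [Fact p.Prime] {E T : Type} [CommRing E] [CharP E p] [PerfectRing E p]
    [CommRing T] (P : Pfd p E T) {R : Type} [CommRing R] [IsDomain R] [IsNoetherianRing R]
    [IsLocalRing R] (hp : (p : R) ∈ maximalIdeal R) (hp0 : (p : R) ≠ 0) (φ : R →+* T)
    (hφ : EqFlat φ (p : R)) (hm : (maximalIdeal R).map φ ≠ ⊤)
    {J : Ideal R} {N0 : ℕ} (hJ : (p : R) ^ (N0 + 1) ∈ J) {u : R} (hu : u ∉ J) {c : R} {n : ℕ}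
    (hc : c ∉ maximalIdeal R ^ (n + 1)) {g : R} (hg : g ≠ 0) {γ : E} (hγ : φ g = P.τ γ)
    {ι : Type} [Fintype ι] (j : ι → R) (hj : ∀ i, j i ∈ J) (y0 : T) (y : ι → T)
    (hy0 : ∀ r, P.τ γ ^ (p ^ r - 1) ∣ y0 ^ p ^ r)
    (hy : ∀ i r, P.τ γ ^ (p ^ r - 1) ∣ y i ^ p ^ r)
    (h1 : y0 ^ (n + 1) = φ (g ^ (n + 1) * c)) (h2 : y0 * φ u = ∑ i, φ (j i) * y i) : False := by
  have hpow : ∀ k, EqFlat φ ((p : R) ^ (k + 1)) := fun k => hφ.pow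
    (fun b hb => P.p_nzd (by rwa [map_natCast] at hb)) k
  have hppos : 0 < p := (Fact.out : p.Prime).pos
  obtain ⟨N, hN⟩ := artin_rees_colon (p : R) (g ^ (n + 1)) (pow_ne_zero _ hg) (max N0 n + 1)
  have hN' : ∀ k a, k ≤ max N0 n + 1 → g ^ (n + 1) * a ∈ Ideal.span {(p : R) ^ (N + 1)} →
      a ∈ Ideal.span {(p : R) ^ k} := by
    intro k a hk ha
    have h3 : a ∈ Ideal.span {(p : R) ^ (max N0 n + 1)} := by
      apply hN
      rw [Ideal.mem_span_singleton] at ha ⊢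
      exact (pow_dvd_pow _ (Nat.le_succ N)).trans ha
    rw [Ideal.mem_span_singleton] at h3 ⊢
    exact (pow_dvd_pow _ hk).trans h3
  have hcolon : ∀ (k : ℕ) (b : T), k ≤ max N0 n + 1 → (p : T) ^ (N + 1) ∣ φ g ^ (n + 1) * b →
      b ∈ (Ideal.span {(p : R) ^ k}).map φ := by
    intro k b hk hb
    refine (hpow N).colon_map (J := Ideal.span {(p : R) ^ (N + 1)}) (u := g ^ (n + 1))
      (Ideal.mem_span_singleton_self _) ?_ (fun a ha => hN' k a hk ha)
    rw [Ideal.map_span, Set.image_singleton, Ideal.mem_span_singleton, map_pow, map_natCast, map_pow]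
    exact hb
  have hmT : ∀ k, (p : R) ^ k ∈ maximalIdeal R ^ k := fun k => Ideal.pow_mem_pow hp k
  have key : ∀ r, P.τ (prt p r (γ * P.t)) ^ (n + 1) ∈ (maximalIdeal R).map φ := by
    intro r
    set ρ := P.τ (prt p r (γ * P.t)) with hρ
    obtain ⟨a0, b0, hab0⟩ := P.key γ y0 hy0 r (N + 1)
    choose a b hab using fun i => P.key γ (y i) (hy i) r (N + 1)
    rw [← hρ, ← hγ] at hab0
    simp only [← hρ, ← hγ] at hab
    have ha0 : a0 ∈ (maximalIdeal R).map φ := by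
      refine (hpow N0).mem_max hJ ?_ hu
      have h3 : a0 * φ u - ∑ i, φ (j i) * a i ∈ (Ideal.span {(p : R) ^ (N0 + 1)}).map φ := by
        apply hcolon _ _ (by omega)
        have h4 : φ g * (a0 * φ u - ∑ i, φ (j i) * a i) =
            (p : T) ^ (N + 1) * (∑ i, φ (j i) * b i - b0 * φ u) := by
          have e1 : φ g * a0 = ρ * y0 - p ^ (N+1) * b0 := by rw [hab0]; ring
          have e2 : ∀ i, φ g * a i = ρ * y i - p ^ (N+1) * b i := by intro i; rw [hab]; ring
          rw [mul_sub, mul_sub, ← mul_assoc, e1, Finset.mul_sum, Finset.mul_sum, sub_mul, mul_assoc, h2,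
            Finset.mul_sum]
          have e3 : ∑ i, φ g * (φ (j i) * a i) = ∑ i, ρ * (φ (j i) * y i) -
              ∑ i, (p : T) ^ (N+1) * (φ (j i) * b i) := by
            rw [← Finset.sum_sub_distrib]
            refine Finset.sum_congr rfl fun i _ => ?_
            rw [mul_left_comm, e2]; ring
          rw [e3]; ring
        rw [pow_succ (φ g), mul_assoc, h4]
        exact Dvd.dvd.mul_left (dvd_mul_right _ _) _
      have h5 : φ u * a0 = (a0 * φ u - ∑ i, φ (j i) * a i) + ∑ i, φ (j i) * a i := by ring
      rw [h5]
      refine Ideal.add_mem _ (Ideal.map_mono ?_ h3) (Ideal.sum_mem _ fun i _ =>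
        Ideal.mul_mem_right _ _ (Ideal.mem_map_of_mem _ (hj i)))
      rw [Ideal.span_singleton_le_iff_mem]; exact hJ
    have h6 : a0 ^ (n + 1) - φ c * ρ ^ (n + 1) ∈ (maximalIdeal R ^ (n + 1)).map φ := by
      refine Ideal.map_mono ?_ (hcolon (n + 1) _ (by omega) ?_)
      · rw [Ideal.span_singleton_le_iff_mem]; exact hmT _
      · have e1 : φ g ^ (n + 1) * (a0 ^ (n + 1) - φ c * ρ ^ (n + 1)) =
            (φ g * a0) ^ (n + 1) - (ρ * y0) ^ (n + 1) := by
          rw [mul_pow ρ, h1, map_mul, map_pow]; ring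
        rw [e1]
        refine dvd_trans ?_ (sub_dvd_pow_sub_pow _ _ _)
        rw [hab0]
        exact ⟨-b0, by ring⟩
    have h7 : φ c * ρ ^ (n + 1) ∈ (maximalIdeal R ^ (n + 1)).map φ := by
      have e1 : φ c * ρ ^ (n + 1) = a0 ^ (n + 1) - (a0 ^ (n + 1) - φ c * ρ ^ (n + 1)) := by ring
      rw [e1]
      refine Ideal.sub_mem _ ?_ h6
      rw [Ideal.map_pow]
      exact Ideal.pow_mem_pow ha0 _
    exact (hpow n).mem_max (hmT _) h7 hc
  have hall : ∀ r, (g * p) ^ (n + 1) ∈ maximalIdeal R ^ p ^ r := by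
    intro r
    obtain ⟨k, hk⟩ := Nat.exists_eq_succ_of_ne_zero (pow_pos hppos r).ne'
    have h3 := Ideal.pow_mem_pow (key r) (p ^ r)
    rw [← Ideal.map_pow, ← pow_mul, mul_comm (n+1), pow_mul, ← map_pow, prt_pow, map_mul, ← hγ] at h3
    have h4 : φ ((g * p) ^ (n + 1)) ∈ (maximalIdeal R ^ p ^ r).map φ := by
      obtain ⟨s, hs⟩ := P.t_dvd_p
      have : φ ((g * p) ^ (n + 1)) = (φ g * P.τ P.t) ^ (n + 1) * s ^ (n + 1) := by
        rw [map_pow, map_mul, map_natCast, hs]; ring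
      rw [this]
      exact Ideal.mul_mem_right _ _ h3
    refine (hpow k).faithful hm ?_ h4
    have := hmT (p ^ r)
    rw [hk] at this ⊢
    exact this
  have h0 : (g * p) ^ (n + 1) ∈ (⨅ i : ℕ, maximalIdeal R ^ i) := by
    rw [Ideal.mem_iInf]
    intro i
    exact Ideal.pow_le_pow_right (Nat.lt_pow_self (Fact.out : p.Prime).one_lt).le (hall i)
  rw [Ideal.iInf_pow_eq_bot_of_isLocalRing _ (IsLocalRing.maximalIdeal.isMaximal R).ne_top] at h0
  exact pow_ne_zero _ (mul_ne_zero hg hp0) h0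

end FinalArg

section PrimElt
open Polynomial

theorem prim_elt {R K Ω : Type} [CommRing R] [IsDomain R] [CharZero R] [Field K] [Algebra R K]
    [IsFractionRing R K] [Field Ω] [Algebra K Ω] [Algebra R Ω] [IsScalarTower R K Ω]
    (S : Set Ω) (hS : S.Finite) (hSi : ∀ x ∈ S, IsIntegral R x) :
    ∃ (z : Ω) (f : R[X]) (g : R), f.Monic ∧ 0 < f.natDegree ∧ g ≠ 0 ∧
      (∀ G : R[X], aeval z G = 0 → f ∣ G) ∧
      ∀ x ∈ Algebra.adjoin R S, ∃ G : R[X], aeval z G = algebraMap R Ω g * x := by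
  classical
  have : CharZero K := charZero_of_injective_algebraMap (IsFractionRing.injective R K)
  have : Finite S := hS
  let L := IntermediateField.adjoin K S
  have : FiniteDimensional K L :=
    IntermediateField.finiteDimensional_adjoin fun x hx => (hSi x hx).tower_top
  obtain ⟨α, hα⟩ := Field.exists_primitive_element K L
  obtain ⟨b, hb, hbμ⟩ := IsLocalization.integerNormalization_spec (nonZeroDivisors R) (minpoly K α)
  have hb0 : b ≠ 0 := nonZeroDivisors.ne_zero hb
  have hbK : algebraMap R K b ≠ 0 := by
    rwa [Ne, (IsFractionRing.injective R K).eq_iff' (map_zero _)]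
  have hαi : IsIntegral K α := Algebra.IsIntegral.isIntegral α
  set μ := minpoly K α with hμ
  have hμm : μ.Monic := minpoly.monic hαi
  let z : L := algebraMap K L (algebraMap R K b) * α
  have hz : IntermediateField.adjoin K {z} = ⊤ := by
    rw [eq_top_iff, ← hα, IntermediateField.adjoin_simple_le_iff]
    have : α = algebraMap K L (algebraMap R K b)⁻¹ * z := by
      rw [← mul_assoc, ← map_mul, inv_mul_cancel₀ hbK, map_one, one_mul]
    rw [this]
    exact mul_mem (IntermediateField.algebraMap_mem _ _) (IntermediateField.mem_adjoin_simple_self K z)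
  have hlift : μ.scaleRoots (algebraMap R K b) ∈ lifts (algebraMap R K) := by
    rw [lifts_iff_coeff_lifts]
    intro n
    rw [coeff_scaleRoots]
    rcases lt_trichotomy n μ.natDegree with h | h | h
    · obtain ⟨k, hk⟩ := Nat.exists_eq_add_of_lt h
      have : μ.natDegree - n = k + 1 := by omega
      rw [this]
      refine ⟨(IsLocalization.integerNormalization (nonZeroDivisors R) μ).coeff n * b ^ k, ?_⟩
      have h2 := congrArg (fun P => P.coeff n) hbμ
      simp only [coeff_map, coeff_smul] at h2
      rw [map_mul, h2, Algebra.smul_def, map_pow]; ring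
    · rw [h, hμm.coeff_natDegree]; exact ⟨1, by simp⟩
    · rw [coeff_eq_zero_of_natDegree_lt h]; exact ⟨0, by simp⟩
  obtain ⟨f, hf1, hf2, hf3⟩ := lifts_and_natDegree_eq_and_monic hlift ((monic_scaleRoots_iff _).2 hμm)
  have hzi : IsIntegral K z := Algebra.IsIntegral.isIntegral z
  have hfz : aeval z (f.map (algebraMap R K)) = 0 := by
    rw [hf1]; exact scaleRoots_aeval_eq_zero (minpoly.aeval K α)
  have hfd : f.natDegree = μ.natDegree := by rw [hf2, natDegree_scaleRoots]
  have hfmin : f.map (algebraMap R K) = minpoly K z := by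
    refine eq_of_monic_of_dvd_of_natDegree_le (minpoly.monic hzi) (hf3.map _) (minpoly.dvd K z hfz) ?_
    rw [(Field.primitive_element_iff_minpoly_natDegree_eq K z).1 hz, hf3.natDegree_map, hfd,
      (Field.primitive_element_iff_minpoly_natDegree_eq K α).1 hα]
  have hpol : ∀ x : Ω, x ∈ L → ∃ (g : R), g ≠ 0 ∧ ∃ G : R[X], aeval (z : Ω) G = algebraMap R Ω g * x := by
    intro x hx
    have h1 : (⟨x, hx⟩ : L) ∈ (IntermediateField.adjoin K {z}).toSubalgebra := by
      rw [hz]; trivial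
    rw [IntermediateField.adjoin_simple_toSubalgebra_of_isAlgebraic hzi.isAlgebraic,
      Algebra.adjoin_singleton_eq_range_aeval] at h1
    obtain ⟨G, hG⟩ := h1
    obtain ⟨g, hg, hgG⟩ := IsLocalization.integerNormalization_spec (nonZeroDivisors R) G
    refine ⟨g, nonZeroDivisors.ne_zero hg, IsLocalization.integerNormalization (nonZeroDivisors R) G, ?_⟩
    have h2 : aeval (z : Ω) G = x := by
      have := congrArg (algebraMap L Ω) hG
      change algebraMap L Ω (aeval z G) = x at this
      rw [← aeval_algebraMap_apply] at this
      exact this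
    rw [← aeval_map_algebraMap K, hgG, ← algebraMap_smul K, map_smul, h2, Algebra.smul_def,
      ← IsScalarTower.algebraMap_apply]
  have hAL : ∀ x ∈ Algebra.adjoin R S, x ∈ L := by
    intro x hx
    have : Algebra.adjoin R S ≤ L.toSubalgebra.restrictScalars R := by
      rw [Algebra.adjoin_le_iff]
      exact IntermediateField.subset_adjoin K S
    exact this hx
  obtain ⟨s, hs⟩ := fg_adjoin_of_finite hS hSi
  have hsL : ∀ x ∈ s, x ∈ L := fun x hx => hAL x (by
    rw [← Subalgebra.mem_toSubmodule, ← hs]; exact Submodule.subset_span hx)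
  choose! g hg0 hgG using hpol
  refine ⟨z, f, ∏ x ∈ s, g x, hf3, ?_, Finset.prod_ne_zero_iff.2 fun x hx => hg0 x (hsL x hx), ?_, ?_⟩
  · rw [hfd]; exact minpoly.natDegree_pos hαi
  · intro G hG
    rw [← map_dvd_map _ (IsFractionRing.injective R K) hf3, hfmin]
    apply minpoly.dvd
    apply (algebraMap L Ω).injective
    rw [map_zero, ← aeval_algebraMap_apply, aeval_map_algebraMap]
    exact hG
  · intro x hx
    rw [← Subalgebra.mem_toSubmodule, ← hs] at hx
    refine Submodule.span_induction (p := fun x _ => ∃ G : R[X], aeval (z : Ω) G =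
      algebraMap R Ω (∏ x ∈ s, g x) * x) ?_ ?_ ?_ ?_ hx
    · intro x hx
      obtain ⟨G, hG⟩ := hgG x (hsL x hx)
      refine ⟨C (∏ y ∈ s.erase x, g y) * G, ?_⟩
      rw [map_mul, aeval_C, hG, ← Finset.prod_erase_mul s g hx, map_mul]; ring
    · exact ⟨0, by simp⟩
    · rintro x y _ _ ⟨G, hG⟩ ⟨H, hH⟩
      exact ⟨G + H, by rw [map_add, hG, hH]; ring⟩
    · rintro a x _ ⟨G, hG⟩
      exact ⟨C a * G, by rw [map_mul, hG, aeval_C, Algebra.smul_def]; ring⟩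

end PrimElt

section Assemble
open Polynomial

theorem wepf_of_base (R : Type) [CommRing R] [IsDomain R] [IsNoetherianRing R] [IsLocalRing R]
    (p : ℕ) [Fact p.Prime] [CharZero R] (hp : (p : R) ∈ maximalIdeal R)
    (E T : Type) [CommRing E] [CharP E p] [PerfectRing E p] [CommRing T] (P : Pfd p E T)
    (φ : R →+* T) (hφ : EqFlat φ (p : R)) (hm : (maximalIdeal R).map φ ≠ ⊤) (I : Ideal R) :
    wepfIdeal p R I = ↑I := by
  have hp0 : (p : R) ≠ 0 := Nat.cast_ne_zero.2 (Fact.out : p.Prime).ne_zero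
  apply Set.Subset.antisymm
  swap
  · intro u hu N hN
    refine ⟨1, one_ne_zero, fun n N _ _ d _ => ?_⟩
    exact Ideal.mem_sup_left (Ideal.mul_mem_left _ _ (Ideal.mem_map_of_mem _ (Ideal.mem_sup_left hu)))
  intro u hu
  by_contra huI
  change u ∉ I at huI
  obtain ⟨N, hN⟩ : ∃ N : ℕ, u ∉ I ⊔ Ideal.span {(p : R) ^ (N + 1)} := by
    by_contra! hcon
    apply huI
    rw [← Ideal.Quotient.eq_zero_iff_mem, ← Submodule.mem_bot R,
      ← Ideal.iInf_pow_smul_eq_bot_of_isLocalRing (M := R ⧸ I) (Ideal.span {(p : R)}) (by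
        intro h
        rw [Ideal.span_singleton_eq_top] at h
        exact (mem_maximalIdeal _).1 hp h), Submodule.mem_iInf]
    intro i
    have := hcon i
    rw [sup_comm, Ideal.mem_span_singleton_sup] at this
    obtain ⟨a, b, hb, hab⟩ := this
    rw [← hab, map_add, Ideal.Quotient.eq_zero_iff_mem.2 hb, add_zero]
    have e1 : Ideal.Quotient.mk I (a * (p : R) ^ (i + 1)) = (p : R) ^ i • Ideal.Quotient.mk I (a * p) := by
      rw [← Ideal.Quotient.mk_eq_mk, ← Ideal.Quotient.mk_eq_mk, ← Submodule.Quotient.mk_smul, smul_eq_mul]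
      congr 1; ring
    rw [e1]
    exact Submodule.smul_mem_smul (Ideal.pow_mem_pow (Ideal.mem_span_singleton_self _) _) trivial
  set J := I ⊔ Ideal.span {(p : R) ^ (N + 1)} with hJ
  have hpJ : (p : R) ^ (N + 1) ∈ J := Ideal.mem_sup_right (Ideal.mem_span_singleton_self _)
  obtain ⟨c, hc0, hc⟩ := hu (N + 1) (Nat.succ_pos N)
  obtain ⟨n, hn⟩ : ∃ n, c ∉ maximalIdeal R ^ (n + 1) := by
    by_contra! hcon
    apply hc0
    have h0 : c ∈ (⨅ i : ℕ, maximalIdeal R ^ i) := by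
      rw [Ideal.mem_iInf]
      intro i
      exact Ideal.pow_le_pow_right (Nat.le_succ i) (hcon i)
    rwa [Ideal.iInf_pow_eq_bot_of_isLocalRing _ (IsLocalRing.maximalIdeal.isMaximal R).ne_top] at h0
  let Ω := AlgebraicClosure (FractionRing R)
  obtain ⟨d, hd⟩ := IsAlgClosed.exists_pow_nat_eq (algebraMap R Ω c) (Nat.succ_pos n)
  have hdi : IsIntegral R d := IsIntegral.of_pow (Nat.succ_pos n) (by rw [hd]; exact isIntegral_algebraMap)
  have h1 := hc (n + 1) (N + 1) (Nat.succ_pos n) (Nat.succ_pos N) ⟨d, hdi⟩ (Subtype.ext (by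
    change d ^ (n + 1) = _; rw [hd]; rfl))
  rw [sup_eq_left.2 (by
    rw [Ideal.span_singleton_le_iff_mem]
    have := Ideal.mem_map_of_mem (algebraMap R (RPlus R)) hpJ
    rwa [map_pow, map_natCast] at this)] at h1
  obtain ⟨k, s, j, hs⟩ := (Submodule.mem_span_set' (R := RPlus R)).1 h1
  have hg : ∀ i, ∃ x ∈ J, algebraMap R (RPlus R) x = j i := fun i => (j i).2
  choose x hxJ hx using hg
  have h2 : d * algebraMap R Ω u = ∑ i, algebraMap R Ω (x i) * (s i : Ω) := by
    have h3 := congrArg (algebraMap (RPlus R) Ω) hs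
    have h4 : algebraMap (RPlus R) Ω (⟨d, hdi⟩ * algebraMap R (RPlus R) u) = d * algebraMap R Ω u := by
      rw [map_mul]; rfl
    rw [h4, map_sum] at h3
    rw [← h3]
    refine Finset.sum_congr rfl fun i _ => ?_
    rw [← hx, smul_eq_mul, map_mul, mul_comm]; rfl
  let S : Set Ω := insert d (Set.range fun i => (s i : Ω))
  obtain ⟨z, f, g, hfm, hfd, hg0, hfk, hgA⟩ := prim_elt (R := R) (K := FractionRing R) S
    ((Set.finite_range _).insert d) (by
      rintro y (rfl | ⟨i, rfl⟩)
      · exact hdi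
      · exact (s i).2)
  have hdS : d ∈ Algebra.adjoin R S := Algebra.subset_adjoin (Set.mem_insert _ _)
  have hsS : ∀ i, (s i : Ω) ∈ Algebra.adjoin R S := fun i =>
    Algebra.subset_adjoin (Set.mem_insert_of_mem _ ⟨i, rfl⟩)
  have hnu : ∀ {T' : Type} [CommRing T'] (φ' : R →+* T'), (maximalIdeal R).map φ' ≠ ⊤ → ¬ IsUnit (p : T') := by
    intro T' _ φ' h hu
    apply h
    refine Ideal.eq_top_of_isUnit_mem _ ?_ hu
    rw [← map_natCast φ']; exact Ideal.mem_map_of_mem _ hp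
  have hnt : ∀ {T' : Type} [CommRing T'] (φ' : R →+* T'), (maximalIdeal R).map φ' ≠ ⊤ → Nontrivial T' := by
    intro T' _ φ' h
    by_contra hT
    rw [not_nontrivial_iff_subsingleton] at hT
    exact h (Subsingleton.elim _ _)
  have hpm : ∀ {T' : Type} [CommRing T'] (φ' : R →+* T'), (p : T') ∈ (maximalIdeal R).map φ' := by
    intro T' _ φ'
    rw [← map_natCast φ']; exact Ideal.mem_map_of_mem _ hp
  have := hnt φ hm
  obtain ⟨E1, T1, _, _, _, _, P1, Θ1, z1, _, hΘ1, hpr1, hz1, -⟩ := P.andre_step (hnu φ hm) (f.map φ)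
    (hfm.map φ) (by rwa [hfm.natDegree_map])
  let φ1 := Θ1.comp φ
  have hφ1 : EqFlat φ1 (p : R) := hφ.comp (by rwa [map_natCast])
  have hm1 : (maximalIdeal R).map φ1 ≠ ⊤ := by
    intro h
    rw [← Ideal.map_map] at h
    exact hm (hpr1 _ (hpm φ) h)
  rw [eval₂_map] at hz1
  have := hnt φ1 hm1
  obtain ⟨E2, T2, _, _, _, _, P2, Θ2, γ, _, hΘ2, hpr2, hz2, -⟩ := P1.andre_step (hnu φ1 hm1)
    (X - C (φ1 g)) (monic_X_sub_C _) (by rw [natDegree_X_sub_C]; exact one_pos)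
  let φ2 := Θ2.comp φ1
  have hφ2 : EqFlat φ2 (p : R) := hφ1.comp (by rwa [map_natCast])
  have hm2 : (maximalIdeal R).map φ2 ≠ ⊤ := by
    intro h
    rw [← Ideal.map_map] at h
    exact hm1 (hpr2 _ (hpm φ1) h)
  have hγ : φ2 g = P2.τ γ := by
    rw [eval₂_sub, eval₂_X, eval₂_C, sub_eq_zero] at hz2
    exact hz2.symm
  let zT := Θ2 (P1.τ z1)
  have hzT : f.eval₂ φ2 zT = 0 := by
    have := congrArg Θ2 hz1
    rw [hom_eval₂, map_zero] at this
    exact this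
  have hker : ∀ G H : R[X], aeval z G = aeval z H → G.eval₂ φ2 zT = H.eval₂ φ2 zT := by
    intro G H hGH
    obtain ⟨Q, hQ⟩ := hfk (G - H) (by rw [map_sub, hGH, sub_self])
    rw [← sub_eq_zero, ← eval₂_sub, hQ, eval₂_mul, hzT, zero_mul]
  choose! G hG using hgA
  have hpows : ∀ y ∈ Algebra.adjoin R S, ∀ r, P2.τ γ ^ (p ^ r - 1) ∣ ((G y).eval₂ φ2 zT) ^ p ^ r := by
    intro y hy r
    refine ⟨(G (y ^ p ^ r)).eval₂ φ2 zT, ?_⟩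
    have := hker (G y ^ p ^ r) (C (g ^ (p ^ r - 1)) * G (y ^ p ^ r)) (by
      rw [map_pow, hG y hy, map_mul, hG _ (pow_mem hy _), aeval_C, map_pow, mul_pow, ← mul_assoc,
        pow_sub_one_mul (pow_pos (Fact.out : p.Prime).pos r).ne'])
    rw [eval₂_pow, eval₂_mul, eval₂_C, map_pow, hγ] at this
    exact this
  refine final_T P2 hp hp0 φ2 hφ2 hm2 hpJ hN hn hg0 hγ x hxJ ((G d).eval₂ φ2 zT)
    (fun i => (G (s i)).eval₂ φ2 zT) (hpows d hdS) (fun i => hpows _ (hsS i)) ?_ ?_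
  · have := hker (G d ^ (n + 1)) (C (g ^ (n + 1) * c)) (by
      rw [map_pow, hG d hdS, aeval_C, map_mul, map_pow, mul_pow, hd])
    rw [eval₂_pow, eval₂_C] at this
    exact this
  · have := hker (G d * C u) (∑ i, C (x i) * G (s i)) (by
      rw [map_mul, hG d hdS, aeval_C, mul_assoc, h2, map_sum, Finset.mul_sum]
      refine Finset.sum_congr rfl fun i _ => ?_
      rw [map_mul, hG _ (hsS i), aeval_C]; ring)
    rw [eval₂_mul, eval₂_C, eval₂_finset_sum] at this
    rw [this]
    refine Finset.sum_congr rfl fun i _ => ?_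
    rw [eval₂_mul, eval₂_C]

end Assemble

section FReg

inductive Reg : ∀ (A : Type) [CommRing A] (_ : List A), Prop
  | nil (A : Type) [CommRing A] (h : IsField A) : Reg A []
  | cons (A : Type) [CommRing A] (B : Type) [CommRing B] (q : A →+* B)
      (hq : Function.Surjective q) (x : A) (xs : List A) (hk : ∀ a, q a = 0 ↔ x ∣ a)
      (hx : ∀ a, x * a = 0 → a = 0) (h : Reg B (xs.map q)) : Reg A (x :: xs)

theorem wb_cancel (n : ℕ) (a : WithBot ℕ∞) (h : ((n + 1 : ℕ) : WithBot ℕ∞) ≤ a + 1) :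
    (n : WithBot ℕ∞) ≤ a := by
  induction a with
  | bot => simp at h
  | coe a =>
    have h' : ((n + 1 : ℕ) : ℕ∞) ≤ a + 1 := by exact_mod_cast h
    have h2 : (n : ℕ∞) ≤ a := by
      push_cast at h'
      exact (ENat.add_le_add_iff_right (by simp)).1 h'
    exact_mod_cast h2

theorem dim_le_length {A : Type} [CommRing A] [IsNoetherianRing A] [IsLocalRing A] (xs : List A)
    (h : Ideal.ofList xs = maximalIdeal A) : ringKrullDim A ≤ (xs.length : WithBot ℕ∞) := by
  classical
  refine (ringKrullDim_le_spanFinrank_maximalIdeal A).trans ?_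
  rw [← h]
  have h1 := Submodule.spanFinrank_span_le_encard (R := A) ({r | r ∈ xs} : Set A)
  have h2 : ({r | r ∈ xs} : Set A) = (xs.toFinset : Set A) := by ext; simp
  have h3 : (Ideal.ofList xs).spanFinrank ≤ xs.toFinset.card := by
    have : ((Ideal.ofList xs).spanFinrank : ℕ∞) ≤ (xs.toFinset.card : ℕ∞) := by
      refine h1.trans ?_
      rw [h2, Set.encard_coe_eq_coe_finsetCard]
    exact_mod_cast this
  have := h3.trans (List.toFinset_card_le xs)
  exact_mod_cast this

theorem quot_facts {A B : Type} [CommRing A] [CommRing B] [IsNoetherianRing A] [IsLocalRing A]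
    (q : A →+* B) (hq : Function.Surjective q) (x : A) (hk : ∀ a, q a = 0 ↔ x ∣ a)
    (hx : x ∈ maximalIdeal A) : IsNoetherianRing B ∧ IsLocalRing B ∧
      ringKrullDim A ≤ ringKrullDim B + 1 := by
  have i1 := isNoetherianRing_of_surjective A B q hq
  have : Nontrivial B := by
    refine ⟨⟨q 1, q 0, fun h => ?_⟩⟩
    rw [map_zero, hk] at h
    exact (mem_maximalIdeal _).1 hx (isUnit_of_dvd_one h)
  have i2 := IsLocalRing.of_surjective' q hq
  refine ⟨i1, i2, ?_⟩
  have h1 := ringKrullDim_le_ringKrullDim_quotient_add_card ({x} : Finset A) (by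
    simp only [Finset.coe_singleton, Set.singleton_subset_iff, SetLike.mem_coe]
    rw [IsLocalRing.ringJacobson_eq_maximalIdeal]; exact hx)
  simp only [Finset.card_singleton, Nat.cast_one] at h1
  refine h1.trans ?_
  gcongr
  let f : (A ⧸ Ideal.span (({x} : Finset A) : Set A)) ≃+* B :=
    (Ideal.quotEquivOfEq (by
      ext a; rw [RingHom.mem_ker, hk, Finset.coe_singleton, Ideal.mem_span_singleton])).trans
      (RingHom.quotientKerEquivOfSurjective hq)
  exact (ringKrullDim_eq_of_ringEquiv f).le

theorem reg_of_dim (n : ℕ) : ∀ (A : Type) [CommRing A] [IsNoetherianRing A] [IsLocalRing A]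
    (xs : List A), xs.length = n → Ideal.ofList xs = maximalIdeal A →
    (n : WithBot ℕ∞) ≤ ringKrullDim A → IsDomain A ∧ Reg A xs := by
  induction n with
  | zero =>
    intro A _ _ _ xs hl hm hd
    obtain rfl := List.length_eq_zero_iff.1 hl
    rw [Ideal.ofList_nil] at hm
    have := IsLocalRing.isField_iff_maximalIdeal_eq.2 hm.symm
    exact ⟨this.isDomain, Reg.nil A this⟩
  | succ n ih =>
    intro A _ _ _ xs hl hm hd
    obtain ⟨x, xs, rfl⟩ : ∃ x ys, xs = x :: ys := by
      cases xs with
      | nil => simp at hl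
      | cons a l => exact ⟨a, l, rfl⟩
    have hl' : xs.length = n := by simpa using hl
    have hxm : x ∈ maximalIdeal A := by
      rw [← hm]; exact Ideal.subset_span (by simp)
    obtain ⟨B, iB, q, hq, hk0⟩ := exists_quot (Ideal.span {x})
    have hk : ∀ a, q a = 0 ↔ x ∣ a := fun a => by rw [hk0, Ideal.mem_span_singleton]
    obtain ⟨i1, i2, hdB⟩ := quot_facts q hq x hk hxm
    have hmap : ∀ {C : Type} [CommRing C] [IsLocalRing C] (f : A →+* C),
        Function.Surjective f → f x = 0 → Ideal.ofList (xs.map f) = maximalIdeal C := by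
      intro C _ _ f hf hfx
      rw [← IsLocalRing.map_maximalIdeal_of_surjective f hf, ← hm, Ideal.map_ofList, List.map_cons,
        Ideal.ofList_cons, hfx]
      simp
    obtain ⟨dB, rB⟩ := ih B (xs.map q) (by simpa using hl') (hmap q hq ((hk x).2 dvd_rfl))
      (wb_cancel _ _ (hd.trans hdB))
    obtain ⟨l, hl2⟩ := Order.le_krullDim_iff.1 hd
    let Q : Ideal A := l.head.asIdeal
    have hQp : Q.IsPrime := l.head.2
    have hdQ : ((n + 1 : ℕ) : WithBot ℕ∞) ≤ ringKrullDim (A ⧸ Q) := by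
      rw [ringKrullDim_quotient]
      rw [Order.le_krullDim_iff]
      let l' : LTSeries (PrimeSpectrum.zeroLocus (R := A) Q) :=
        { length := l.length
          toFun := fun i => ⟨l i, by
            rw [PrimeSpectrum.mem_zeroLocus]
            exact (LTSeries.head_le l i : l.head ≤ l i)⟩
          step := fun i => l.step i }
      exact ⟨l', hl2⟩
    obtain ⟨C, iC, c, hc, hck, hdC, dC⟩ : ∃ (C : Type) (_ : CommRing C) (c : A →+* C),
        Function.Surjective c ∧ (∀ a, c a = 0 ↔ a ∈ Q) ∧
        ((n + 1 : ℕ) : WithBot ℕ∞) ≤ ringKrullDim C ∧ IsDomain C :=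
      ⟨A ⧸ Q, inferInstance, Ideal.Quotient.mk Q, Ideal.Quotient.mk_surjective,
        fun _ => Ideal.Quotient.eq_zero_iff_mem, hdQ, inferInstance⟩
    have iC1 := isNoetherianRing_of_surjective A C c hc
    have iC2 := IsLocalRing.of_surjective' c hc
    have hxQ : x ∉ Q := by
      intro hx
      have := dim_le_length (xs.map c) (hmap c hc ((hck x).2 hx))
      have h2 := hdC.trans this
      rw [List.length_map, hl'] at h2
      have : n + 1 ≤ n := by exact_mod_cast h2
      omega
    have hcxm : c x ∈ maximalIdeal C := by
      rw [← IsLocalRing.map_maximalIdeal_of_surjective c hc]; exact Ideal.mem_map_of_mem c hxm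
    obtain ⟨D, iD, r, hr, hrk0⟩ := exists_quot (Ideal.span {c x})
    have hrk : ∀ a, r a = 0 ↔ c x ∣ a := fun a => by rw [hrk0, Ideal.mem_span_singleton]
    obtain ⟨j1, j2, hdD⟩ := quot_facts r hr (c x) hrk hcxm
    have hdD' : (n : WithBot ℕ∞) ≤ ringKrullDim D := wb_cancel _ _ (hdC.trans hdD)
    have hrc : Function.Surjective (r.comp c) := hr.comp hc
    have hrx : r.comp c x = 0 := (hrk _).2 dvd_rfl
    let s : B →+* D := RingHom.liftOfSurjective q hq ⟨r.comp c, by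
      intro a ha
      obtain ⟨b, rfl⟩ := (hk a).1 ha
      rw [RingHom.mem_ker, map_mul, hrx, zero_mul]⟩
    have hsq : ∀ a, s (q a) = r (c a) := fun a =>
      RingHom.liftOfRightInverse_comp_apply _ _ _ _ a
    have hs : Function.Surjective s := by
      intro d
      obtain ⟨a, rfl⟩ := hrc d
      exact ⟨q a, hsq a⟩
    have hsi : ∀ b, s b = 0 → b = 0 := by
      intro b hb
      by_contra hb0
      have h1 := ringKrullDim_succ_le_of_surjective s hs (mem_nonZeroDivisors_of_ne_zero hb0) hb
      have h2 := dim_le_length (xs.map q) (hmap q hq ((hk x).2 dvd_rfl))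
      rw [List.length_map, hl'] at h2
      have h3 : ((n + 1 : ℕ) : WithBot ℕ∞) ≤ (n : WithBot ℕ∞) := by
        refine le_trans ?_ (h1.trans h2)
        push_cast
        gcongr
      have : n + 1 ≤ n := by exact_mod_cast h3
      omega
    have hQ0 : Q = ⊥ := by
      refine Submodule.eq_bot_of_le_smul_of_le_jacobson_bot (maximalIdeal A) Q
        (IsNoetherian.noetherian Q) ?_ (IsLocalRing.maximalIdeal_le_jacobson _)
      intro a ha
      have h1 : q a = 0 := hsi _ (by rw [hsq, (hck a).2 ha, map_zero])
      obtain ⟨b, rfl⟩ := (hk a).1 h1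
      have hb : b ∈ Q := (hQp.mem_or_mem ha).resolve_left hxQ
      exact Submodule.smul_mem_smul hxm hb
    have dA : IsDomain A := by
      have : Function.Injective c := by
        rw [injective_iff_map_eq_zero]
        intro a ha
        have := (hck a).1 ha
        rwa [hQ0] at this
      exact this.isDomain c
    refine ⟨dA, Reg.cons A B q hq x xs hk ?_ rB⟩
    intro a ha
    refine (mul_eq_zero.1 ha).resolve_left ?_
    rintro rfl
    exact hxQ Q.zero_mem
end FReg

section FReg2

theorem krull_closed {A : Type} [CommRing A] [IsNoetherianRing A] [IsLocalRing A] (I : Ideal A)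
    (a : A) (h : ∀ k, a ∈ I ⊔ maximalIdeal A ^ k) : a ∈ I := by
  have h1 := Ideal.iInf_pow_smul_eq_bot_of_isLocalRing (M := A ⧸ I) (maximalIdeal A)
    (Ideal.IsPrime.ne_top inferInstance)
  rw [← Ideal.Quotient.eq_zero_iff_mem, ← Submodule.mem_bot A, ← h1, Submodule.mem_iInf]
  intro k
  obtain ⟨u, hu, v, hv, rfl⟩ := Submodule.mem_sup.1 (h k)
  rw [map_add, Ideal.Quotient.eq_zero_iff_mem.2 hu, zero_add]
  have : Ideal.Quotient.mk I v = v • (1 : A ⧸ I) := by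
    rw [Algebra.smul_def, mul_one]; rfl
  rw [this]
  exact Submodule.smul_mem_smul hv trivial

theorem exists_order {A : Type} [CommRing A] [IsNoetherianRing A] [IsLocalRing A] {x : A}
    (hx : x ∈ maximalIdeal A) (a : A) (ha : a ≠ 0) : ∃ n b, a = x ^ n * b ∧ ¬ x ∣ b := by
  have : FiniteMultiplicity x a := by
    by_contra hc
    refine ha ?_
    have : a ∈ (⊥ : Ideal A) := by
      refine krull_closed _ _ fun k => ?_
      have : x ^ k ∣ a := by
        by_contra hk
        refine hc ⟨k, fun h => hk ((pow_dvd_pow x (Nat.le_succ k)).trans h)⟩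
      obtain ⟨b, rfl⟩ := this
      exact Ideal.mem_sup_right (Ideal.mul_mem_right _ _ (Ideal.pow_mem_pow hx k))
    exact this
  obtain ⟨c, h1, h2⟩ := this.exists_eq_pow_mul_and_not_dvd
  exact ⟨_, c, h1, h2⟩

theorem Reg.isMax {A : Type} [CommRing A] {xs : List A} (h : Reg A xs) :
    (Ideal.ofList xs).IsMaximal := by
  induction h with
  | nil A h =>
    rw [Ideal.ofList_nil]
    let _ := h.toField
    exact Ideal.bot_isMaximal
  | cons A B q hq x xs hk hx h ih =>
    have : Ideal.ofList (x :: xs) = (Ideal.ofList (xs.map q)).comap q := by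
      rw [← Ideal.map_ofList, Ideal.comap_map_of_surjective q hq, Ideal.ofList_cons, sup_comm]
      congr 1
      ext a
      rw [Ideal.mem_span_singleton, Ideal.mem_comap, Ideal.mem_bot, hk]
    rw [this]
    exact Ideal.comap_isMaximal_of_surjective q hq

theorem map_mem_max {A B : Type} [CommRing A] [CommRing B] [IsLocalRing A] [IsLocalRing B]
    (q : A →+* B) (hq : Function.Surjective q) {xs : List A} (h : ∀ y ∈ xs, y ∈ maximalIdeal A) :
    ∀ y ∈ xs.map q, y ∈ maximalIdeal B := by
  intro y hy
  obtain ⟨z, hz, rfl⟩ := List.mem_map.1 hy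
  rw [← IsLocalRing.map_maximalIdeal_of_surjective q hq]
  exact Ideal.mem_map_of_mem q (h z hz)

theorem Reg.dom {A : Type} [CommRing A] {xs : List A} (h : Reg A xs) :
    ∀ [IsNoetherianRing A] [IsLocalRing A], (∀ y ∈ xs, y ∈ maximalIdeal A) → IsDomain A := by
  induction h with
  | nil A h => intro _ _ _; exact h.isDomain
  | cons A B q hq x xs hk hx h ih =>
    intro _ _ hm
    have hxm := hm x (by simp)
    obtain ⟨i1, i2, -⟩ := quot_facts q hq x hk hxm
    have dB := ih (map_mem_max q hq fun y hy => hm y (by simp [hy]))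
    have hxn : ∀ n a, x ^ n * a = 0 → a = 0 := by
      intro n
      induction n with
      | zero => intro a h; simpa using h
      | succ n ihn => intro a h; exact hx _ (ihn _ (by rw [← mul_assoc, ← pow_succ]; exact h))
    have : NoZeroDivisors A := ⟨by
      intro a b hab
      by_contra! hc
      obtain ⟨n, a', rfl, ha'⟩ := exists_order hxm a hc.1
      obtain ⟨m, b', rfl, hb'⟩ := exists_order hxm b hc.2
      have : a' * b' = 0 := hxn (n + m) _ (by rw [← hab]; ring)
      have : q a' * q b' = 0 := by rw [← map_mul, this, map_zero]
      rcases mul_eq_zero.1 this with h | h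
      · exact ha' ((hk _).1 h)
      · exact hb' ((hk _).1 h)⟩
    exact NoZeroDivisors.to_isDomain A

theorem pow_dvd_add {A : Type} [CommRing A] {p : ℕ} (hp : p.Prime) {d u v : A} (hd : d ∣ (p : A))
    (hu : d ∣ u ^ p) (hv : d ∣ v ^ p) : d ∣ (u + v) ^ p := by
  obtain ⟨r, hr⟩ := exists_add_pow_prime_eq hp u v
  rw [hr]
  refine dvd_add (dvd_add hu hv) ?_
  rw [mul_assoc, mul_assoc]
  exact hd.mul_right _

theorem Reg.istar {A : Type} [CommRing A] {xs : List A} (h : Reg A xs) {p : ℕ} (hp : p.Prime) :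
    ∀ [IsNoetherianRing A] [IsLocalRing A], (∀ y ∈ xs, y ∈ maximalIdeal A) →
    ∀ a b : A, b ^ p ∣ (p : A) → b ^ p ∣ a ^ p → b ∣ a := by
  induction h with
  | nil A h =>
    intro _ _ _ a b _ hb
    have := h.isDomain
    by_cases hb0 : b = 0
    · subst hb0
      rw [zero_pow hp.ne_zero, zero_dvd_iff] at hb
      rw [eq_zero_of_pow_eq_zero hb] 
    · obtain ⟨c, hc⟩ := h.mul_inv_cancel hb0
      exact (IsUnit.of_mul_eq_one c hc).dvd
  | cons A B q hq x xs hk hx h ih =>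
    intro _ _ hm
    have dA : IsDomain A := (Reg.cons A B q hq x xs hk hx h).dom hm
    have hxm := hm x (by simp)
    obtain ⟨i1, i2, -⟩ := quot_facts q hq x hk hxm
    have hm' := (map_mem_max q hq fun y hy => hm y (List.mem_cons_of_mem _ hy))
    have dB := h.dom hm'
    have ih' := ih hm'
    have hx0 : x ≠ 0 := by
      rintro rfl
      exact one_ne_zero (hx 1 (by simp))
    have hxp : Prime x := by
      refine ⟨hx0, (mem_maximalIdeal _).1 hxm, fun a b hab => ?_⟩
      rw [← hk, map_mul, mul_eq_zero, hk, hk] at hab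
      exact hab
    have base : ∀ a b : A, ¬ x ∣ b → b ^ p ∣ (p : A) → b ^ p ∣ a ^ p → b ∣ a := by
      intro a b hxb hbp hba
      have step : ∀ a, b ^ p ∣ a ^ p → ∃ a' a'', a = b * a' + x * a'' ∧ b ^ p ∣ a'' ^ p := by
        intro a ha
        have h1 : q b ∣ q a := ih' _ _ (by
          have := map_dvd q hbp; simpa using this) (by
          have := map_dvd q ha; simpa using this)
        obtain ⟨c, hc⟩ := h1
        obtain ⟨a', rfl⟩ := hq c
        have h2 : q (a - b * a') = 0 := by rw [map_sub, map_mul, hc, sub_self]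
        obtain ⟨a'', ha''⟩ := (hk _).1 h2
        refine ⟨a', a'', by rw [← ha'']; ring, ?_⟩
        have h3 : b ^ p ∣ (a + (- (b * a'))) ^ p := by
          refine pow_dvd_add hp hbp ha ?_
          have : (-(b * a')) ^ p = b ^ p * (- a') ^ p := by rw [← mul_pow]; ring
          rw [this]; exact dvd_mul_right _ _
        rw [← sub_eq_add_neg, ha'', mul_pow] at h3
        obtain ⟨u, hu⟩ := h3
        have h4 : x ^ p ∣ u := by
          refine hxp.pow_dvd_of_dvd_mul_left (a := b ^ p) p (fun h => hxb (hxp.dvd_of_dvd_pow h)) ?_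
          exact hu ▸ dvd_mul_right _ _
        obtain ⟨v, rfl⟩ := h4
        refine ⟨v, mul_left_cancel₀ (pow_ne_zero p hx0) ?_⟩
        rw [hu]; ring
      have : ∀ k a, b ^ p ∣ a ^ p → ∃ a' a'', a = b * a' + x ^ k * a'' := by
        intro k
        induction k with
        | zero => intro a _; exact ⟨0, a, by simp⟩
        | succ k ihk =>
          intro a ha
          obtain ⟨a', a'', rfl, h2⟩ := step a ha
          obtain ⟨c, d, rfl⟩ := ihk a'' h2
          exact ⟨a' + x * c, d, by ring⟩
      rw [← Ideal.mem_span_singleton]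
      refine krull_closed _ _ fun k => ?_
      obtain ⟨a', a'', rfl⟩ := this k a hba
      refine Ideal.add_mem _ (Ideal.mem_sup_left (Ideal.mul_mem_right _ _
        (Ideal.mem_span_singleton_self b))) (Ideal.mem_sup_right
        (Ideal.mul_mem_right _ _ (Ideal.pow_mem_pow hxm k)))
    have main : ∀ n (a b : A), ¬ x ∣ b → (x ^ n * b) ^ p ∣ (p : A) → (x ^ n * b) ^ p ∣ a ^ p →
        x ^ n * b ∣ a := by
      intro n
      induction n with
      | zero => intro a b; simpa using base a b
      | succ n ihn =>
        intro a b hb h1 h2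
        have h3 : x ∣ a := by
          refine hxp.dvd_of_dvd_pow (dvd_trans ?_ h2)
          refine dvd_pow ?_ hp.ne_zero
          rw [pow_succ', mul_assoc]; exact dvd_mul_right _ _
        obtain ⟨a, rfl⟩ := h3
        have e : x ^ (n + 1) * b = x * (x ^ n * b) := by ring
        rw [e] at h1 h2 ⊢
        rw [mul_pow, mul_pow x a] at h2
        refine mul_dvd_mul_left x (ihn a b hb ?_ ?_)
        · rw [mul_pow] at h1; exact (dvd_mul_left _ _).trans h1
        · exact (mul_dvd_mul_iff_left (pow_ne_zero p hx0)).1 h2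
    intro a b h1 h2
    by_cases hb : b = 0
    · subst hb
      rw [zero_pow hp.ne_zero, zero_dvd_iff] at h2
      rw [pow_eq_zero_iff hp.ne_zero] at h2
      rw [h2]
    · obtain ⟨n, b', rfl, hb'⟩ := exists_order hxm b hb
      exact main n a b' hb' h1 h2
end FReg2

section FRoot
open Polynomial

structure RootExt (p : ℕ) {A B : Type} [CommRing A] [CommRing B] (φ : A →+* B) (y : B) (a : A) :
    Prop where
  pow : y ^ p = φ a
  surj : ∀ b, ∃ v : Fin p → A, b = ∑ i, φ (v i) * y ^ (i : ℕ)
  inj : ∀ v : Fin p → A, ∑ i, φ (v i) * y ^ (i : ℕ) = 0 → ∀ i, v i = 0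

theorem exists_rootExt (p : ℕ) [hp : Fact p.Prime] {A : Type} [CommRing A] [Nontrivial A] (a : A) :
    ∃ (B : Type) (_ : CommRing B) (φ : A →+* B) (y : B), RootExt p φ y a := by
  have hmon : (X ^ p - C a : A[X]).Monic := monic_X_pow_sub_C a hp.out.ne_zero
  have hdeg : (X ^ p - C a : A[X]).natDegree = p := natDegree_X_pow_sub_C
  let b := (AdjoinRoot.powerBasis' hmon).basis.reindex (finCongr hdeg)
  have hb : ∀ i : Fin p, b i = AdjoinRoot.root (X ^ p - C a) ^ (i : ℕ) := by
    intro i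
    simp [b]
    rfl
  refine ⟨AdjoinRoot (X ^ p - C a), inferInstance, AdjoinRoot.of _, AdjoinRoot.root _, ?_, ?_, ?_⟩
  · have := AdjoinRoot.eval₂_root (X ^ p - C a)
    rw [eval₂_sub, eval₂_pow, eval₂_X, eval₂_C] at this
    exact sub_eq_zero.1 this
  · intro c
    refine ⟨fun i => b.repr c i, ?_⟩
    conv_lhs => rw [← b.sum_repr c]
    refine Finset.sum_congr rfl fun i _ => ?_
    rw [Algebra.smul_def, hb]; rfl
  · intro v hv i
    have h1 : ∑ i, v i • b i = 0 := by
      rw [← hv]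
      refine Finset.sum_congr rfl fun i _ => ?_
      rw [Algebra.smul_def, hb]; rfl
    exact Fintype.linearIndependent_iff.1 b.linearIndependent v h1 i

section
variable {p : ℕ} [hp : Fact p.Prime] {A B : Type} [CommRing A] [CommRing B] {φ : A →+* B} {y : B}
  {a : A}

theorem RootExt.injective (h : RootExt p φ y a) : Function.Injective φ := by
  rw [injective_iff_map_eq_zero]
  intro c hc
  have := h.inj (fun _ => c) (by simp [hc]) ⟨0, hp.out.pos⟩
  exact this

theorem RootExt.dvd (h : RootExt p φ y a) (x : A) (v : Fin p → A)
    (hd : φ x ∣ ∑ i, φ (v i) * y ^ (i : ℕ)) : ∀ i, x ∣ v i := by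
  obtain ⟨b, hb⟩ := hd
  obtain ⟨w, rfl⟩ := h.surj b
  intro i
  have := h.inj (fun i => v i - x * w i) (by
    simp only [map_sub, map_mul, sub_mul, Finset.sum_sub_distrib]
    rw [hb, Finset.mul_sum, sub_eq_zero]
    exact Finset.sum_congr rfl fun i _ => by ring) i
  exact ⟨w i, sub_eq_zero.1 this⟩

theorem RootExt.dvd' (h : RootExt p φ y a) (x c : A) (hd : φ x ∣ φ c) : x ∣ c := by
  have := h.dvd x (fun i => if (i : ℕ) = 0 then c else 0) (by
    rw [Finset.sum_eq_single ⟨0, hp.out.pos⟩]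
    · simpa using hd
    · intro b _ hb
      rw [if_neg, map_zero, zero_mul]
      intro h0; exact hb (Fin.ext h0)
    · simp) ⟨0, hp.out.pos⟩
  simpa using this

theorem RootExt.nzd (h : RootExt p φ y a) (x : A) (hx : ∀ c, x * c = 0 → c = 0) (b : B)
    (hb : φ x * b = 0) : b = 0 := by
  obtain ⟨v, rfl⟩ := h.surj b
  have := h.inj (fun i => x * v i) (by
    rw [← hb, Finset.mul_sum]
    exact Finset.sum_congr rfl fun i _ => by rw [map_mul]; ring)
  refine Finset.sum_eq_zero fun i _ => ?_
  rw [hx _ (this i), map_zero, zero_mul]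

theorem RootExt.quot (h : RootExt p φ y a) {A1 B1 : Type} [CommRing A1] [CommRing B1]
    (q : A →+* A1) (hq : Function.Surjective q) (r : B →+* B1) (hr : Function.Surjective r) (x : A)
    (hqk : ∀ c, q c = 0 ↔ x ∣ c) (hrk : ∀ c, r c = 0 ↔ φ x ∣ c) :
    ∃ φ1 : A1 →+* B1, (∀ c, φ1 (q c) = r (φ c)) ∧ RootExt p φ1 (r y) (q a) := by
  let φ1 : A1 →+* B1 := RingHom.liftOfSurjective q hq ⟨r.comp φ, by
    intro c hc
    rw [RingHom.mem_ker, RingHom.comp_apply, hrk]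
    exact map_dvd φ ((hqk c).1 hc)⟩
  have e : ∀ c, φ1 (q c) = r (φ c) := fun c => RingHom.liftOfRightInverse_comp_apply _ _ _ _ c
  refine ⟨φ1, e, ?_, ?_, ?_⟩
  · rw [← map_pow, h.pow, e]
  · intro b
    obtain ⟨b, rfl⟩ := hr b
    obtain ⟨v, rfl⟩ := h.surj b
    refine ⟨fun i => q (v i), ?_⟩
    simp [e]
  · intro v hv i
    choose w hw using fun i => hq (v i)
    have : r (∑ i, φ (w i) * y ^ (i : ℕ)) = 0 := by
      rw [← hv]
      simp [← hw, e]
    rw [← hw, hqk]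
    exact h.dvd x w ((hrk _).1 this) i
end

theorem Reg.transfer {C D A : Type} [CommRing A] [CommRing C] [CommRing D] (l : List A)
    (q : A →+* C) (hq : Function.Surjective q) (f : A →+* D) (hf : Function.Surjective f)
    (hk : ∀ a, q a = 0 ↔ f a = 0) (h : Reg C (l.map q)) : Reg D (l.map f) := by
  let e : C →+* D := RingHom.liftOfSurjective q hq ⟨f, fun a ha => (hk a).1 ha⟩
  have he : ∀ c, e (q c) = f c := fun c => RingHom.liftOfRightInverse_comp_apply _ _ _ _ c
  have he2 : Function.Bijective e := by
    constructor
    · rw [injective_iff_map_eq_zero]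
      intro c hc
      obtain ⟨a, rfl⟩ := hq c
      rw [he] at hc
      exact (hk a).2 hc
    · intro d
      obtain ⟨a, rfl⟩ := hf d
      exact ⟨q a, he a⟩
  let E := RingEquiv.ofBijective e he2
  have key : ∀ {C : Type} [CommRing C] (m : List C), Reg C m → ∀ (D : Type) [CommRing D]
      (E : C ≃+* D), Reg D (m.map E) := by
    intro C _ m h D _ E
    cases h with
    | nil _ h => exact Reg.nil D (E.symm.toMulEquiv.isField h)
    | cons _ B q hq x xs hk hx h =>
      refine Reg.cons D B (q.comp E.symm.toRingHom) (hq.comp E.symm.surjective) (E x) (xs.map E)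
        ?_ ?_ ?_
      · intro d
        obtain ⟨c, rfl⟩ := E.surjective d
        simp only [RingHom.comp_apply, RingEquiv.toRingHom_eq_coe, RingHom.coe_coe,
          RingEquiv.symm_apply_apply, hk]
        exact (map_dvd_iff E).symm
      · intro d hd
        obtain ⟨c, rfl⟩ := E.surjective d
        rw [← map_mul, map_eq_zero_iff E E.injective] at hd
        rw [hx c hd, map_zero]
      · have : (xs.map E).map (q.comp E.symm.toRingHom) = xs.map q := by
          rw [List.map_map]
          refine List.map_congr_left fun z _ => ?_
          simp
        rw [this]; exact h
  have := key _ h D E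
  rw [List.map_map] at this
  convert this using 2
  ext a
  exact (he a).symm

theorem Reg.root {p : ℕ} [hp : Fact p.Prime] (l1 : List Unit) : ∀ {A B : Type} [CommRing A]
    [CommRing B] {φ : A →+* B} {y : B} {x : A} (_ : RootExt p φ y x) (l l2 : List A),
    l.length = l1.length → Reg A (l ++ x :: l2) → Reg B (l.map φ ++ y :: l2.map φ) := by
  induction l1 with
  | nil =>
    intro A B _ _ φ y x h l l2 hl hR
    obtain rfl := List.length_eq_zero_iff.1 hl
    rw [List.nil_append] at hR
    rw [List.map_nil, List.nil_append]
    cases hR with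
    | cons _ C q hq _ _ hk hx hC =>
      obtain ⟨D, iD, r, hr, hr0⟩ := exists_quot (Ideal.span {y})
      have hrk : ∀ b, r b = 0 ↔ y ∣ b := fun b => by rw [hr0, Ideal.mem_span_singleton]
      refine Reg.cons B D r hr y _ hrk ?_ ?_
      · intro b hb
        refine h.nzd x hx b ?_
        rw [← h.pow]
        obtain ⟨k, hk⟩ := Nat.exists_eq_succ_of_ne_zero hp.out.ne_zero
        rw [hk, pow_succ, mul_assoc, hb, mul_zero]
      · rw [List.map_map]
        refine Reg.transfer l2 q hq (r.comp φ) ?_ ?_ hC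
        · intro d
          obtain ⟨b, rfl⟩ := hr d
          obtain ⟨v, rfl⟩ := h.surj b
          refine ⟨v ⟨0, hp.out.pos⟩, ?_⟩
          have hry : r y = 0 := (hrk y).2 dvd_rfl
          rw [map_sum, Finset.sum_eq_single ⟨0, hp.out.pos⟩]
          · simp
          · intro i _ hi
            have : (i : ℕ) ≠ 0 := fun h0 => hi (Fin.ext h0)
            rw [map_mul, map_pow, hry, zero_pow this, mul_zero]
          · simp
        · intro a
          rw [hk, RingHom.comp_apply, hrk]
          constructor
          · rintro ⟨c, rfl⟩
            rw [map_mul, ← h.pow]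
            exact (dvd_pow_self y hp.out.ne_zero).mul_right _
          · intro hd
            obtain ⟨b, hb⟩ := hd
            obtain ⟨v, rfl⟩ := h.surj b
            obtain ⟨k, hk⟩ := Nat.exists_eq_succ_of_ne_zero hp.out.ne_zero
            subst hk
            rw [Fin.sum_univ_castSucc] at hb
            have := h.inj (Fin.cons (a - x * v (Fin.last k)) (fun j => - v j.castSucc)) (by
              rw [Fin.sum_univ_succ]
              simp only [Fin.cons_zero, Fin.cons_succ, Fin.val_zero, pow_zero, mul_one, Fin.val_succ,
                map_neg, map_sub, map_mul, ← h.pow]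
              rw [hb, mul_add, Finset.mul_sum]
              simp only [Fin.val_castSucc, Fin.val_last, neg_mul, Finset.sum_neg_distrib]
              have : ∀ i : Fin k, φ (v i.castSucc) * y ^ ((i : ℕ) + 1) =
                y * (φ (v i.castSucc) * y ^ (i : ℕ)) := fun i => by ring
              simp only [this]
              rw [show y ^ k.succ = y * y ^ k from pow_succ' y k]
              ring) 0
            rw [Fin.cons_zero] at this
            exact ⟨_, sub_eq_zero.1 this⟩
  | cons _ l1 ih =>
    intro A B _ _ φ y x h l l2 hl hR
    obtain ⟨x0, l, rfl⟩ : ∃ x0 l', l = x0 :: l' := by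
      cases l with
      | nil => simp at hl
      | cons a l => exact ⟨a, l, rfl⟩
    rw [List.cons_append] at hR
    rw [List.map_cons, List.cons_append]
    cases hR with
    | cons _ C q hq _ _ hk hx hC =>
      obtain ⟨D, iD, r, hr, hr0⟩ := exists_quot (Ideal.span {φ x0})
      have hrk : ∀ b, r b = 0 ↔ φ x0 ∣ b := fun b => by rw [hr0, Ideal.mem_span_singleton]
      refine Reg.cons B D r hr _ _ hrk (h.nzd x0 hx) ?_
      obtain ⟨φ1, e, h1⟩ := h.quot q hq r hr x0 hk hrk
      rw [List.map_append, List.map_cons] at hC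
      have := ih h1 _ _ (by simpa using hl) hC
      rw [List.map_map, List.map_map] at this
      rw [List.map_append, List.map_cons, List.map_map, List.map_map]
      have e' : (φ1 ∘ q : A → D) = r ∘ φ := funext e
      rw [e'] at this
      exact this

theorem Reg.resid {p : ℕ} [hp : Fact p.Prime] {A : Type} [CommRing A] {xs : List A} (hR : Reg A xs) :
    ∀ {B : Type} [CommRing B] {φ : A →+* B} {y : B} {a : A} (_ : RootExt p φ y a),
    (∀ r : A, r ^ p - a ∉ Ideal.ofList xs) → Reg B (xs.map φ) := by
  induction hR with
  | nil A hF =>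
    intro B _ φ y a h hn
    rw [List.map_nil]
    refine Reg.nil B ?_
    let _ := hF.toField
    have hirr : Irreducible (X ^ p - C a : A[X]) := by
      refine X_pow_sub_C_irreducible_of_prime hp.out fun b hb => hn b ?_
      rw [hb, sub_self]
      exact Ideal.zero_mem _
    have := Fact.mk hirr
    let g : AdjoinRoot (X ^ p - C a : A[X]) →+* B := AdjoinRoot.lift φ y (by simp [h.pow])
    have : Nontrivial B := by
      refine ⟨⟨φ 1, φ 0, fun hh => one_ne_zero (h.injective hh)⟩⟩
    have hg : Function.Bijective g := by
      refine ⟨g.injective, fun b => ?_⟩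
      obtain ⟨v, rfl⟩ := h.surj b
      refine ⟨∑ i, AdjoinRoot.of _ (v i) * AdjoinRoot.root _ ^ (i : ℕ), ?_⟩
      simp [g]
    exact (RingEquiv.ofBijective g hg).symm.toMulEquiv.isField (Field.toIsField _)
  | cons A C q hq x xs hk hx hC ih =>
    intro B _ φ y a h hn
    rw [List.map_cons]
    obtain ⟨D, iD, r, hr, hr0⟩ := exists_quot (Ideal.span {φ x})
    have hrk : ∀ b, r b = 0 ↔ φ x ∣ b := fun b => by rw [hr0, Ideal.mem_span_singleton]
    refine Reg.cons B D r hr _ _ hrk (h.nzd x hx) ?_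
    obtain ⟨φ1, e, h1⟩ := h.quot q hq r hr x hk hrk
    have := ih h1 (by
      intro c hc
      obtain ⟨c, rfl⟩ := hq c
      rw [← map_pow, ← map_sub, ← Ideal.map_ofList, Ideal.mem_map_iff_of_surjective q hq] at hc
      obtain ⟨d, hd, hd2⟩ := hc
      refine hn c ?_
      have h0 : q (c ^ p - a - d) = 0 := by rw [map_sub, hd2, sub_self]
      obtain ⟨u, hu⟩ := (hk _).1 h0
      rw [Ideal.ofList_cons]
      have : c ^ p - a = x * u + d := by rw [← hu]; ring
      rw [this]
      exact Ideal.add_mem _ (Ideal.mem_sup_left (Ideal.mul_mem_right _ _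
        (Ideal.mem_span_singleton_self x))) (Ideal.mem_sup_right hd))
    rw [List.map_map] at this ⊢
    have e' : (φ1 ∘ q : A → D) = r ∘ φ := funext e
    rw [e'] at this
    exact this
end FRoot

section FStage

structure Stg (B : Type) [CommRing B] (ys : List B) : Prop where
  noeth : IsNoetherianRing B
  loc : IsLocalRing B
  reg : Reg B ys
  nu : ∀ y ∈ ys, ¬ IsUnit y

theorem Stg.max {B : Type} [CommRing B] [IsLocalRing B] {ys : List B} (h : Stg B ys) :
    Ideal.ofList ys = maximalIdeal B := IsLocalRing.eq_maximalIdeal h.reg.isMax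

theorem Stg.dom {B : Type} [CommRing B] {ys : List B} (h : Stg B ys) : IsDomain B := by
  have := h.noeth
  have := h.loc
  exact h.reg.dom fun y hy => (mem_maximalIdeal _).2 (h.nu y hy)

structure Mic (p : ℕ) {A B : Type} [CommRing A] [CommRing B] (φ : A →+* B) : Prop where
  fin : φ.Finite
  flat : φ.Flat
  inj : Function.Injective φ
  Q : ∀ c, ∃ a, (p : B) ∣ c ^ p - φ a

theorem Mic.id (p : ℕ) {A : Type} [CommRing A] : Mic p (RingHom.id A) :=
  ⟨RingHom.Finite.id A, RingHom.Flat.id A, fun _ _ h => h, fun c => ⟨c ^ p, by simp⟩⟩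

variable {p : ℕ} [hp : Fact p.Prime]

theorem RootExt.finite {A B : Type} [CommRing A] [CommRing B] {φ : A →+* B} {y : B}
    {a : A} (h : RootExt p φ y a) : φ.Finite ∧ φ.Flat := by
  let _ := φ.toAlgebra
  let f : (Fin p → A) →ₗ[A] B := Fintype.linearCombination A (fun i : Fin p => y ^ (i : ℕ))
  have hf : ∀ v, f v = ∑ i, φ (v i) * y ^ (i : ℕ) := fun v => by
    rw [Fintype.linearCombination_apply]
    exact Finset.sum_congr rfl fun i _ => by rw [Algebra.smul_def]; rfl
  have hb : Function.Bijective f := by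
    constructor
    · rw [injective_iff_map_eq_zero]
      intro v hv
      ext i
      exact h.inj v (by rw [← hf, hv]) i
    · intro b
      obtain ⟨v, rfl⟩ := h.surj b
      exact ⟨v, hf v⟩
  let e := LinearEquiv.ofBijective f hb
  exact ⟨Module.Finite.equiv e, Module.Flat.of_linearEquiv e.symm⟩

theorem Stg.root {A B : Type} [CommRing A] [CommRing B] {φ : A →+* B} {y : B} {a : A}
    {xs : List A} {ys : List B} (hA : Stg A xs) (h : RootExt p φ y a) (hB : Reg B ys)
    (hz : ∀ z ∈ ys, ∃ x ∈ xs, ∃ k, z ^ k = φ x) : Stg B ys := by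
  have := hA.noeth
  have := hA.loc
  have hfin := h.finite.1
  have hnt : (Ideal.ofList ys) ≠ ⊤ := hB.isMax.ne_top
  have hnu : ∀ y ∈ ys, ¬ IsUnit y := fun y hy hu =>
    hnt (Ideal.eq_top_of_isUnit_mem _ (Ideal.subset_span hy) hu)
  refine ⟨?_, ?_, hB, hnu⟩
  · let _ := φ.toAlgebra
    have : Module.Finite A B := hfin
    exact IsNoetherianRing.of_finite A B
  · refine IsLocalRing.of_unique_max_ideal ⟨Ideal.ofList ys, hB.isMax, fun M hM => ?_⟩
    have hM' : M.IsMaximal := hM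
    have h1 : (M.comap φ).IsMaximal :=
      Ideal.isMaximal_comap_of_isIntegral_of_isMaximal' φ hfin.to_isIntegral M
    have h2 := IsLocalRing.eq_maximalIdeal h1
    refine (hB.isMax.eq_of_le hM'.ne_top ?_).symm
    refine Ideal.span_le.2 fun z hz' => ?_
    obtain ⟨x, hx, k, hk⟩ := hz z hz'
    have : x ∈ M.comap φ := by
      rw [h2]; exact (mem_maximalIdeal _).2 (hA.nu x hx)
    rw [Ideal.mem_comap, ← hk] at this
    exact hM'.isPrime.mem_of_pow_mem k this

theorem Mic.comp_root {A B C : Type} [CommRing A] [CommRing B] [CommRing C] {φ : A →+* B}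
    (h : Mic p φ) {ψ : B →+* C} {y : C} {s : A} (hR : RootExt p ψ y (φ s)) :
    Mic p (ψ.comp φ) := by
  refine ⟨hR.finite.1.comp h.fin, h.flat.comp hR.finite.2, hR.injective.comp h.inj, ?_⟩
  intro c
  obtain ⟨v, rfl⟩ := hR.surj c
  have hmul : ∀ c d : C, (∃ a, (p : C) ∣ c ^ p - ψ.comp φ a) → (∃ a, (p : C) ∣ d ^ p - ψ.comp φ a) →
      ∃ a, (p : C) ∣ (c * d) ^ p - ψ.comp φ a := by
    rintro c d ⟨a, u, ha⟩ ⟨b, v, hb⟩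
    refine ⟨a * b, u * d ^ p + ψ.comp φ a * v, ?_⟩
    rw [sub_eq_iff_eq_add] at ha hb
    rw [map_mul, mul_pow, ha, hb]; ring
  refine Finset.sum_induction _ (fun c => ∃ a, (p : C) ∣ c ^ p - ψ.comp φ a) ?_ ?_ ?_
  · rintro c d ⟨a, u, ha⟩ ⟨b, v, hb⟩
    obtain ⟨r, hr⟩ := exists_add_pow_prime_eq hp.out c d
    refine ⟨a + b, u + v + c * d * r, ?_⟩
    rw [sub_eq_iff_eq_add] at ha hb
    rw [hr, map_add, ha, hb]; ring
  · exact ⟨0, by simp [hp.out.ne_zero]⟩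
  · intro i _
    refine hmul _ _ ?_ ?_
    · obtain ⟨a, ha⟩ := h.Q (v i)
      refine ⟨a, ?_⟩
      have := map_dvd ψ ha
      simpa using this
    · refine ⟨s ^ (i : ℕ), ?_⟩
      rw [map_pow, RingHom.comp_apply, ← hR.pow, ← pow_mul, ← pow_mul, mul_comm, sub_self]
      exact dvd_zero _

theorem phase1 {A : Type} [CommRing A] {xs : List A} (hA : Stg A xs) (l : List A) :
    ∃ (B : Type) (_ : CommRing B) (φ : A →+* B), Stg B (xs.map φ) ∧ Mic p φ ∧
      ∀ s ∈ l, ∃ c, φ s - c ^ p ∈ Ideal.ofList (xs.map φ) := by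
  induction l with
  | nil => exact ⟨A, inferInstance, RingHom.id A, by simpa using hA, Mic.id p, by simp⟩
  | cons s l ih =>
    obtain ⟨B, iB, φ, hB, hφ, hl⟩ := ih
    by_cases hs : ∃ c, φ s - c ^ p ∈ Ideal.ofList (xs.map φ)
    · refine ⟨B, iB, φ, hB, hφ, ?_⟩
      intro t ht
      rcases List.mem_cons.1 ht with rfl | ht
      · exact hs
      · exact hl t ht
    · push Not at hs
      have := hB.loc
      obtain ⟨C, iC, ψ, y, hR⟩ := exists_rootExt p (φ s)
      have e : xs.map (ψ.comp φ) = (xs.map φ).map ψ := by rw [List.map_map]; rfl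
      refine ⟨C, iC, ψ.comp φ, ?_, hφ.comp_root hR, ?_⟩
      · rw [e]
        refine hB.root hR (hB.reg.resid hR fun r hr => hs r ?_) ?_
        · rw [← neg_sub]; exact neg_mem hr
        · intro z hz
          obtain ⟨x, hx, rfl⟩ := List.mem_map.1 hz
          exact ⟨x, hx, 1, pow_one _⟩
      · intro t ht
        rcases List.mem_cons.1 ht with rfl | ht
        · refine ⟨y, ?_⟩
          rw [hR.pow, RingHom.comp_apply, sub_self]; exact Ideal.zero_mem _
        · obtain ⟨c, hc⟩ := hl t ht
          refine ⟨ψ c, ?_⟩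
          rw [e, ← Ideal.map_ofList, RingHom.comp_apply, ← map_pow, ← map_sub]
          exact Ideal.mem_map_of_mem ψ hc

theorem phase2 {A B0 : Type} [CommRing A] [CommRing B0] {φ0 : A →+* B0} (l2 : List A) :
    ∀ (l1 : List A), Stg B0 ((l1 ++ l2).map φ0) → ∀ (B : Type) [CommRing B] (ψ : B0 →+* B)
      (ys : List B), Stg B (ys ++ l2.map (ψ.comp φ0)) → Mic p (ψ.comp φ0) →
      (l1.map (ψ.comp φ0)) = ys.map (· ^ p) →
    ∃ (C : Type) (_ : CommRing C) (χ : B0 →+* C) (zs : List C), Stg C zs ∧ Mic p (χ.comp φ0) ∧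
      (l1 ++ l2).map (χ.comp φ0) = zs.map (· ^ p) := by
  induction l2 with
  | nil =>
    intro l1 _ B _ ψ ys h1 h2 h3
    exact ⟨B, inferInstance, ψ, ys, by simpa using h1, h2, by simpa using h3⟩
  | cons x l2 ih =>
    intro l1 h0 B _ ψ ys h1 h2 h3
    have := h1.loc
    obtain ⟨C, iC, χ, y, hR⟩ := exists_rootExt p (ψ.comp φ0 x)
    rw [List.map_cons] at h1
    have hr := Reg.root (ys.map fun _ => ()) hR ys _ (by simp) h1.reg
    have e : ys.map χ ++ y :: (l2.map (ψ.comp φ0)).map χ =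
        (ys.map χ ++ [y]) ++ l2.map ((χ.comp ψ).comp φ0) := by
      rw [List.map_map, List.append_assoc]; rfl
    have hS : Stg C (ys.map χ ++ y :: (l2.map (ψ.comp φ0)).map χ) := by
      refine h1.root hR hr ?_
      intro z hz
      rcases List.mem_append.1 hz with hz | hz
      · obtain ⟨w, hw, rfl⟩ := List.mem_map.1 hz
        exact ⟨w, List.mem_append_left _ hw, 1, pow_one _⟩
      · rcases List.mem_cons.1 hz with rfl | hz
        · exact ⟨_, List.mem_append_right _ (List.mem_cons_self), p, hR.pow⟩
        · obtain ⟨w, hw, rfl⟩ := List.mem_map.1 hz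
          exact ⟨w, List.mem_append_right _ (List.mem_cons_of_mem _ hw), 1, pow_one _⟩
    rw [e] at hS
    have := ih (l1 ++ [x]) (by simpa using h0) C (χ.comp ψ) (ys.map χ ++ [y]) hS
      (h2.comp_root hR) (by
        have h4 := congrArg (List.map χ) h3
        rw [List.map_map, List.map_map] at h4
        rw [List.map_append, List.map_append, List.map_map]
        congr 1
        · refine Eq.trans ?_ (h4.trans ?_)
          · rfl
          · refine List.map_congr_left fun a _ => by simp
        · rw [List.map_singleton, List.map_singleton, hR.pow]; rfl)
    simpa using this
end FStage

section FMacro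

theorem exists_gens {A B : Type} [CommRing A] [CommRing B] {φ : A →+* B} (h : φ.Finite) :
    ∃ (n : ℕ) (e : Fin n → B), ∀ b, ∃ a : Fin n → A, b = ∑ i, φ (a i) * e i := by
  let _ := φ.toAlgebra
  have : Module.Finite A B := h
  obtain ⟨n, e, he⟩ := Module.Finite.exists_fin (R := A) (M := B)
  refine ⟨n, e, fun b => ?_⟩
  have hb : b ∈ Submodule.span A (Set.range e) := he ▸ trivial
  obtain ⟨a, ha⟩ := (Submodule.mem_span_range_iff_exists_fun A).1 hb
  refine ⟨a, ha.symm.trans (Finset.sum_congr rfl fun i _ => ?_)⟩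
  rw [Algebra.smul_def]; rfl

theorem precomplete_of_finite {A B : Type} [CommRing A] [CommRing B] {φ : A →+* B} (h : φ.Finite)
    (I : Ideal A) (J : Ideal B) (hIJ : I.map φ ≤ J) (N : ℕ) (hN : J ^ N ≤ I.map φ)
    [IsPrecomplete I A] : IsPrecomplete J B := by
  obtain ⟨n, e, he⟩ := exists_gens h
  have key : ∀ k b, b ∈ (I.map φ) ^ k → ∃ a : Fin n → A, (∀ i, a i ∈ I ^ k) ∧
      b = ∑ i, φ (a i) * e i := by
    intro k b hb
    rw [← Ideal.map_pow] at hb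
    refine Submodule.span_induction (p := fun b _ => ∃ a : Fin n → A, (∀ i, a i ∈ I ^ k) ∧
      b = ∑ i, φ (a i) * e i) ?_ ?_ ?_ ?_ hb
    · rintro _ ⟨x, hx, rfl⟩
      obtain ⟨a, ha⟩ := he 1
      refine ⟨fun i => x * a i, fun i => Ideal.mul_mem_right _ _ hx, ?_⟩
      rw [← mul_one (φ x), ha, Finset.mul_sum]
      exact Finset.sum_congr rfl fun i _ => by rw [map_mul]; ring
    · exact ⟨0, fun i => Ideal.zero_mem _, by simp⟩
    · rintro x y _ _ ⟨a, ha, rfl⟩ ⟨b, hb, rfl⟩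
      refine ⟨a + b, fun i => Ideal.add_mem _ (ha i) (hb i), ?_⟩
      rw [← Finset.sum_add_distrib]
      exact Finset.sum_congr rfl fun i _ => by rw [Pi.add_apply, map_add]; ring
    · rintro r x _ ⟨a, ha, rfl⟩
      choose c hc using fun i => he (r * e i)
      refine ⟨fun j => ∑ i, a i * c i j, fun j => Ideal.sum_mem _ fun i _ =>
        Ideal.mul_mem_right _ _ (ha i), ?_⟩
      rw [smul_eq_mul, Finset.mul_sum]
      have : ∀ i, r * (φ (a i) * e i) = ∑ j, φ (a i) * (φ (c i j) * e j) := by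
        intro i
        rw [← Finset.mul_sum, ← hc]; ring
      simp only [this]
      rw [Finset.sum_comm]
      refine Finset.sum_congr rfl fun j _ => ?_
      rw [map_sum, Finset.sum_mul]
      exact Finset.sum_congr rfl fun i _ => by rw [map_mul]; ring
  refine ⟨fun f hf => ?_⟩
  have hf' : ∀ {m n}, m ≤ n → f m - f n ∈ J ^ m := fun {m n} hmn => by
    have := hf hmn
    rwa [SModEq.sub_mem, smul_eq_mul, Ideal.mul_top] at this
  have hstep : ∀ k, f ((N + 1) * (k + 1)) - f ((N + 1) * k) ∈ (I.map φ) ^ k := by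
    intro k
    have h1 := hf' (m := (N + 1) * k) (n := (N + 1) * (k + 1)) (Nat.mul_le_mul_left _ (Nat.le_succ k))
    rw [← neg_sub]
    refine neg_mem (?_ : _ ∈ _)
    rw [pow_mul] at h1
    exact Ideal.pow_right_mono ((Ideal.pow_le_pow_right (Nat.le_succ N)).trans hN) k h1
  choose a ha hae using fun k => key k _ (hstep k)
  have hG : ∀ i, ∃ L : A, ∀ k, (∑ j ∈ Finset.range k, a j i) - L ∈ I ^ k := by
    intro i
    obtain ⟨L, hL⟩ := IsPrecomplete.prec (I := I) (M := A) inferInstance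
      (f := fun k => ∑ j ∈ Finset.range k, a j i) (by
        intro m n hmn
        rw [SModEq.sub_mem, smul_eq_mul, Ideal.mul_top, ← neg_sub]
        refine neg_mem (?_ : _ ∈ _)
        rw [← Finset.sum_Ico_eq_sub _ hmn]
        refine Ideal.sum_mem _ fun j hj => ?_
        exact Ideal.pow_le_pow_right (Finset.mem_Ico.1 hj).1 (ha j i))
    refine ⟨L, fun k => ?_⟩
    have := hL k
    rwa [SModEq.sub_mem, smul_eq_mul, Ideal.mul_top] at this
  choose L hL using hG
  have hsum : ∀ k, f ((N + 1) * k) = f 0 + ∑ i, φ (∑ j ∈ Finset.range k, a j i) * e i := by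
    intro k
    induction k with
    | zero => simp
    | succ k ih =>
      have := hae k
      rw [sub_eq_iff_eq_add, ih] at this
      rw [this]
      simp only [Finset.sum_range_succ, map_add, add_mul, Finset.sum_add_distrib]
      ring
  refine ⟨f 0 + ∑ i, φ (L i) * e i, fun k => ?_⟩
  rw [SModEq.sub_mem, smul_eq_mul, Ideal.mul_top]
  have h1 := hf' (m := k) (n := (N + 1) * k) (Nat.le_mul_of_pos_left _ (Nat.succ_pos _))
  have h2 : f ((N + 1) * k) - (f 0 + ∑ i, φ (L i) * e i) ∈ J ^ k := by
    rw [hsum, add_sub_add_left_eq_sub, ← Finset.sum_sub_distrib]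
    refine Ideal.sum_mem _ fun i _ => ?_
    rw [← sub_mul, ← map_sub]
    refine Ideal.mul_mem_right _ _ (Ideal.pow_right_mono hIJ k ?_)
    rw [← Ideal.map_pow]
    exact Ideal.mem_map_of_mem φ (hL i k)
  have := Ideal.add_mem _ h1 h2
  rwa [sub_add_sub_cancel] at this

def FF (p : ℕ) (A : Type) [CommRing A] (I : Ideal A) : Prop :=
  ∃ (n : ℕ) (s : Fin n → A), ∀ a, ∃ c : Fin n → A, a - ∑ i, c i ^ p * s i ∈ I

structure Good (p : ℕ) (A : Type) [CommRing A] (xs : List A) : Prop where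
  stg : Stg A xs
  prec : IsPrecomplete (Ideal.ofList xs) A
  ff : FF p A (Ideal.ofList xs)
  pm : (p : A) ∈ Ideal.ofList xs

structure Mac (p : ℕ) {A B : Type} [CommRing A] [CommRing B] (φ : A →+* B) (J : Ideal B) : Prop where
  fin : φ.Finite
  flat : φ.Flat
  inj : Function.Injective φ
  S : ∀ a, ∃ c, (p : B) ∣ φ a - c ^ p
  W : (∃ w u : B, IsUnit u ∧ w ^ p = p * u)

theorem sum_pow_mod {p : ℕ} [hp : Fact p.Prime] {B : Type} [CommRing B] (J : Ideal B)
    (hJ : (p : B) ∈ J) {n : ℕ} (f : Fin n → B) : (∑ i, f i) ^ p - ∑ i, f i ^ p ∈ J := by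
  have key : ∀ s : Finset (Fin n), (∑ i ∈ s, f i) ^ p - ∑ i ∈ s, f i ^ p ∈ J := by
    classical
    intro s
    induction s using Finset.induction_on with
    | empty => simp [hp.out.ne_zero]
    | insert a s ha ih =>
      rw [Finset.sum_insert ha, Finset.sum_insert ha]
      obtain ⟨r, hr⟩ := exists_add_pow_prime_eq hp.out (f a) (∑ i ∈ s, f i)
      rw [hr]
      have := Ideal.add_mem _ ih (Ideal.mul_mem_right (f a * (∑ i ∈ s, f i) * r) _ hJ)
      convert this using 1
      ring
  exact key Finset.univ

theorem macro_step {p : ℕ} [hp : Fact p.Prime] {A : Type} [CommRing A] {xs : List A}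
    (hA : Good p A xs) :
    ∃ (B : Type) (_ : CommRing B) (φ : A →+* B) (ys : List B), Good p B ys ∧
      Mac p φ (Ideal.ofList ys) := by
  obtain ⟨n, s, hs⟩ := hA.ff
  obtain ⟨B0, iB0, φ0, hB0, hφ0, hl⟩ := phase1 (p := p) hA.stg (List.ofFn s)
  obtain ⟨B, iB, χ, ys, hB, hφ, hr⟩ := phase2 (p := p) (φ0 := φ0) xs [] (by simpa using hB0) B0
    (RingHom.id B0) [] (by simpa using hB0) (by simpa using hφ0) (by simp)
  rw [List.nil_append] at hr
  set φ := χ.comp φ0 with hφdef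
  set J := Ideal.ofList ys with hJ
  have r1 : ∀ x ∈ xs, ∃ z ∈ ys, z ^ p = φ x := by
    intro x hx
    have : φ x ∈ ys.map (· ^ p) := hr ▸ List.mem_map_of_mem hx
    exact List.mem_map.1 this
  have r2 : ∀ z ∈ ys, ∃ x ∈ xs, φ x = z ^ p := by
    intro z hz
    have : z ^ p ∈ xs.map φ := hr ▸ List.mem_map.2 ⟨z, hz, rfl⟩
    exact List.mem_map.1 this
  have hmap : (Ideal.ofList xs).map φ ≤ J := by
    rw [Ideal.map_ofList, Ideal.span_le]
    intro w hw
    obtain ⟨x, hx, rfl⟩ := List.mem_map.1 hw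
    obtain ⟨z, hz, hzx⟩ := r1 x hx
    rw [← hzx]
    exact Ideal.pow_mem_of_mem J (Ideal.subset_span hz) p hp.out.pos
  have hpJ : (p : B) ∈ J := by
    have := hmap (Ideal.mem_map_of_mem φ hA.pm)
    simpa using this
  have iN := hB.noeth
  have iL := hB.loc
  have iNA := hA.stg.noeth
  have iLA := hA.stg.loc
  have hJm : J = maximalIdeal B := hB.max
  have hrad : J ≤ ((Ideal.ofList xs).map φ).radical := by
    refine Ideal.span_le.2 fun z hz => ?_
    obtain ⟨x, hx, hxz⟩ := r2 z hz
    refine ⟨p, ?_⟩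
    rw [← hxz]; exact Ideal.mem_map_of_mem φ (Ideal.subset_span hx)
  obtain ⟨N, hN⟩ := Ideal.exists_pow_le_of_le_radical_of_fg hrad (IsNoetherian.noetherian J)
  have := hA.prec
  have hprec : IsPrecomplete J B := precomplete_of_finite hφ.fin _ _ hmap N hN
  -- residues
  have hres : ∀ a, ∃ c, φ a - c ^ p ∈ J := by
    intro a
    obtain ⟨c, hc⟩ := hs a
    have : ∀ i, ∃ d, φ (s i) - d ^ p ∈ J := by
      intro i
      obtain ⟨d, hd⟩ := hl (s i) (by simp)
      refine ⟨χ d, ?_⟩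
      have h1 := Ideal.mem_map_of_mem χ hd
      rw [Ideal.map_ofList, List.map_map] at h1
      have h2 : Ideal.ofList (xs.map (χ ∘ φ0)) ≤ J := by
        have := hmap
        rw [Ideal.map_ofList] at this
        exact this
      have h3 := h2 h1
      rw [map_sub, map_pow] at h3
      exact h3
    choose d hd using this
    refine ⟨∑ i, φ (c i) * d i, ?_⟩
    have h1 : φ a - ∑ i, φ (c i) ^ p * φ (s i) ∈ J := by
      have := hmap (Ideal.mem_map_of_mem φ hc)
      simpa using this
    have h2 : ∑ i, φ (c i) ^ p * φ (s i) - ∑ i, (φ (c i) * d i) ^ p ∈ J := by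
      rw [← Finset.sum_sub_distrib]
      refine Ideal.sum_mem _ fun i _ => ?_
      rw [mul_pow, ← mul_sub]
      exact Ideal.mul_mem_left _ _ (hd i)
    have h3 := sum_pow_mod J hpJ (fun i => φ (c i) * d i)
    have := Ideal.sub_mem _ (Ideal.add_mem _ h1 h2) h3
    convert this using 1
    ring
  have hff : FF p B J := by
    obtain ⟨m, e, he⟩ := exists_gens hφ.fin
    refine ⟨m, e, fun b => ?_⟩
    obtain ⟨a, rfl⟩ := he b
    choose c hc using fun i => hres (a i)
    refine ⟨c, ?_⟩
    rw [← Finset.sum_sub_distrib]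
    refine Ideal.sum_mem _ fun i _ => ?_
    rw [← sub_mul]
    exact Ideal.mul_mem_right _ _ (hc i)
  have hS : ∀ a, ∃ c, (p : B) ∣ φ a - c ^ p := by
    obtain ⟨D, iD, mk, hmk, hmk0⟩ := exists_quot (Ideal.span {(p : B)})
    have hmkd : ∀ b, mk b = 0 ↔ (p : B) ∣ b := fun b => by rw [hmk0, Ideal.mem_span_singleton]
    have hDnt : Nontrivial D := by
      refine ⟨⟨mk 1, 0, fun h => ?_⟩⟩
      have := isUnit_of_dvd_one ((hmkd 1).1 h)
      rw [hJm] at hpJ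
      exact (mem_maximalIdeal _).1 hpJ this
    have hpD : (p : D) = 0 := by
      have := (hmkd (p : B)).2 dvd_rfl
      simpa using this
    have hchar : CharP D p := charP_of_nontriv D hpD
    have hexp : ExpChar D p := ExpChar.prime hp.out
    let G : B →+* D := (frobenius D p).comp mk
    have hG : ∀ b, G b = mk b ^ p := fun b => rfl
    let S : Subring D := (mk.comp φ).range
    let f : B →+* S := G.codRestrict S (by
      intro b
      obtain ⟨a, ha⟩ := hφ.Q b
      refine ⟨a, ?_⟩
      rw [hG, ← map_pow, eq_comm, ← sub_eq_zero, RingHom.comp_apply, ← map_sub]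
      exact (hmkd _).2 ha)
    let g : A →+* S := (mk.comp φ).rangeRestrict
    have hg : Function.Surjective g := RingHom.rangeRestrict_surjective _
    have iS := isNoetherianRing_of_surjective A S g hg
    have iSL := IsLocalRing.of_surjective' g hg
    have hJS : J.map f = maximalIdeal S := by
      have e1 : (Ideal.ofList xs).map g = maximalIdeal S := by
        rw [hA.stg.max]; exact IsLocalRing.map_maximalIdeal_of_surjective g hg
      rw [← e1, hJ, Ideal.map_ofList, Ideal.map_ofList]
      have e2 : ∀ z x, φ x = z ^ p → f z = g x := by
        intro z x h
        apply Subtype.ext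
        change mk z ^ p = mk (φ x)
        rw [h, map_pow]
      apply le_antisymm
      · refine Ideal.span_le.2 ?_
        intro w hw
        obtain ⟨z, hz, rfl⟩ := List.mem_map.1 hw
        obtain ⟨x, hx, hxz⟩ := r2 z hz
        rw [e2 z x hxz]
        exact Ideal.subset_span (List.mem_map_of_mem hx)
      · refine Ideal.span_le.2 ?_
        intro w hw
        obtain ⟨x, hx, rfl⟩ := List.mem_map.1 hw
        obtain ⟨z, hz, hxz⟩ := r1 x hx
        rw [← e2 z x hxz.symm]
        exact Ideal.subset_span (List.mem_map_of_mem hz)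
    have hHaus : IsHausdorff (J.map f) S := by
      rw [hJS]
      refine ⟨fun u hu => ?_⟩
      have : u ∈ (⊥ : Ideal S) := by
        refine krull_closed _ _ fun k => ?_
        have := hu k
        rw [SModEq.zero, smul_eq_mul, Ideal.mul_top] at this
        exact Ideal.mem_sup_right this
      exact this
    have hsurj : Function.Surjective f := by
      refine surjective_of_mk_map_comp_surjective f (I := J) ?_
      intro u
      obtain ⟨v, rfl⟩ := Ideal.Quotient.mk_surjective u
      obtain ⟨a, rfl⟩ := hg v
      obtain ⟨c, hc⟩ := hres a
      refine ⟨c, ?_⟩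
      rw [RingHom.comp_apply, eq_comm, Ideal.Quotient.mk_eq_mk_iff_sub_mem, hJS]
      obtain ⟨b, hb⟩ := hφ.Q c
      -- f c = g b
      have e1 : f c = g b := by
        apply Subtype.ext
        change mk c ^ p = mk (φ b)
        rw [← map_pow, ← sub_eq_zero, ← map_sub]; exact (hmkd _).2 hb
      rw [e1, ← map_sub, ← IsLocalRing.map_maximalIdeal_of_surjective g hg]
      refine Ideal.mem_map_of_mem g ?_
      rw [mem_maximalIdeal, mem_nonunits_iff]
      intro hu
      have h1 : φ (a - b) ∈ J := by
        rw [map_sub]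
        obtain ⟨t, ht⟩ := hb
        have := Ideal.add_mem _ hc (Ideal.mul_mem_right t _ hpJ)
        rw [← ht] at this
        rwa [sub_add_sub_cancel] at this
      rw [hJm] at h1
      exact (mem_maximalIdeal _).1 h1 (hu.map φ)
    intro a
    obtain ⟨c, hc⟩ := hsurj (g a)
    refine ⟨c, ?_⟩
    have : mk c ^ p = mk (φ a) := congrArg Subtype.val hc
    rw [← hmkd, map_sub, map_pow, this, sub_self]
  have hW : ∀ u ∈ Ideal.ofList xs, ∃ w ∈ J, ∃ μ ∈ J, φ u = w ^ p + p * μ := by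
    intro u hu
    refine Submodule.span_induction (p := fun u _ => ∃ w ∈ J, ∃ μ ∈ J, φ u = w ^ p + p * μ)
      ?_ ?_ ?_ ?_ hu
    · intro x hx
      obtain ⟨z, hz, hzx⟩ := r1 x hx
      exact ⟨z, Ideal.subset_span hz, 0, Ideal.zero_mem _, by rw [hzx]; ring⟩
    · exact ⟨0, Ideal.zero_mem _, 0, Ideal.zero_mem _, by simp [hp.out.ne_zero]⟩
    · rintro u v _ _ ⟨w, hw, μ, hμ, h1⟩ ⟨w', hw', μ', hμ', h2⟩
      obtain ⟨r, hr⟩ := exists_add_pow_prime_eq hp.out w w'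
      refine ⟨w + w', Ideal.add_mem _ hw hw', μ + μ' - w * (w' * r), Ideal.sub_mem _
        (Ideal.add_mem _ hμ hμ') (Ideal.mul_mem_right _ _ hw), ?_⟩
      rw [map_add, h1, h2, hr]; ring
    · rintro r u _ ⟨w, hw, μ, hμ, h1⟩
      obtain ⟨c, e, hc⟩ := hS r
      rw [sub_eq_iff_eq_add] at hc
      refine ⟨c * w, Ideal.mul_mem_left _ _ hw, e * w ^ p + φ r * μ, Ideal.add_mem _
        (Ideal.mul_mem_left _ _ (Ideal.pow_mem_of_mem _ hw _ hp.out.pos))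
        (Ideal.mul_mem_left _ _ hμ), ?_⟩
      rw [smul_eq_mul, map_mul, h1, mul_add, mul_pow]
      conv_lhs => rw [hc]
      rw [hc]
      ring
  refine ⟨B, iB, φ, ys, ⟨hB, hprec, hff, hpJ⟩, hφ.fin, hφ.flat, hφ.inj, hS, ?_⟩
  obtain ⟨w, hw, μ, hμ, h1⟩ := hW _ hA.pm
  refine ⟨w, 1 - μ, ?_, ?_⟩
  · rw [hJm] at hμ
    have := (mem_maximalIdeal _).1 hμ
    rcases IsLocalRing.isUnit_or_isUnit_one_sub_self μ with h | h
    · exact absurd h this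
    · exact h
  · rw [map_natCast] at h1
    rw [mul_sub, mul_one]
    exact eq_sub_of_add_eq h1.symm
end FMacro

section FTower

theorem EqFlat.of_flat {A B : Type} [CommRing A] [CommRing B] {f : A →+* B} (h : f.Flat) (π : A) :
    EqFlat f π := by
  intro ι _ a b hd
  obtain ⟨y, hy⟩ := hd
  let _ := f.toAlgebra
  have : Module.Flat A B := h
  have hs : ∀ (r : A) (x : B), r • x = f r * x := fun r x => by rw [Algebra.smul_def]; rfl
  obtain ⟨k, α, w, h1, h2⟩ := Module.Flat.isTrivialRelation_of_sum_smul_eq_zero (R := A) (M := B)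
    (ι := Option ι) (f := fun i => i.elim (-π) a) (x := fun i => i.elim y b) (by
      rw [Fintype.sum_option]
      simp only [Option.elim_none, Option.elim_some, hs, map_neg]
      rw [hy]; ring)
  refine ⟨Fin k, inferInstance, fun i j => α (some i) j, w, 0, ?_, ?_⟩
  · intro i
    have := h1 (some i)
    simp only [Option.elim_some, hs] at this
    rw [this]; simp
  · intro j
    have := h2 j
    rw [Fintype.sum_option] at this
    simp only [Option.elim_none, Option.elim_some] at this
    exact ⟨α none j, by linear_combination this⟩

theorem extend_to {A B Ω : Type} [CommRing A] [CommRing B] [IsDomain A] [IsDomain B] [Field Ω]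
    [IsAlgClosed Ω] (φ : A →+* B) (hf : φ.Finite) (hi : Function.Injective φ) (ι : A →+* Ω)
    (hι : Function.Injective ι) : ∃ κ : B →+* Ω, κ.comp φ = ι ∧ Function.Injective κ := by
  let _ := φ.toAlgebra
  let _ := ι.toAlgebra
  have : Module.Finite A B := hf
  have i0 : Algebra.IsIntegral A B := inferInstance
  have i1 : Module.IsTorsionFree A B := by
    have : FaithfulSMul A B := (faithfulSMul_iff_algebraMap_injective A B).2 hi
    infer_instance
  have i2 : Module.IsTorsionFree A Ω := by
    have : FaithfulSMul A Ω := (faithfulSMul_iff_algebraMap_injective A Ω).2 hι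
    infer_instance
  let κ : B →ₐ[A] Ω := IsAlgClosed.lift
  have hκ : κ.toRingHom.comp φ = ι := RingHom.ext fun a => κ.commutes a
  refine ⟨κ.toRingHom, hκ, ?_⟩
  rw [RingHom.injective_iff_ker_eq_bot]
  refine Ideal.eq_bot_of_comap_eq_bot (R := A) ?_
  rw [eq_bot_iff]
  intro a ha
  have h1 : κ.toRingHom (φ a) = 0 := ha
  rw [← RingHom.comp_apply, hκ] at h1
  exact (map_eq_zero_iff ι hι).1 h1

structure TSt (p : ℕ) (Ω : Type) [Field Ω] where
  A : Type
  iA : CommRing A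
  xs : List A
  good : Good p A xs
  ι : A →+* Ω
  inj : Function.Injective ι

def TRel {p : ℕ} {Ω : Type} [Field Ω] (s t : TSt p Ω) : Prop :=
  letI := s.iA
  letI := t.iA
  ∃ φ : s.A →+* t.A, t.ι.comp φ = s.ι ∧ Mac p φ (Ideal.ofList t.xs)

theorem TSt.next {p : ℕ} [Fact p.Prime] {Ω : Type} [Field Ω] [IsAlgClosed Ω] (s : TSt p Ω) :
    ∃ t : TSt p Ω, TRel s t := by
  obtain ⟨A, iA, xs, good, ι, inj⟩ := s
  obtain ⟨B, iB, φ, ys, hB, hM⟩ := macro_step good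
  have := good.stg.dom
  have := hB.stg.dom
  obtain ⟨κ, hκ, hκi⟩ := extend_to φ hM.fin hM.inj ι inj
  exact ⟨⟨B, iB, ys, hB, κ, hκi⟩, φ, hκ, hM⟩

theorem exists_tower (p : ℕ) [hp : Fact p.Prime] (R : Type) [CommRing R] [CharZero R] {xs : List R}
    (hR : Good p R xs) :
    ∃ (H : Type) (_ : CommRing H) (_ : IsDomain H) (φ : R →+* H),
      EqFlat φ (p : R) ∧ Function.Injective φ ∧ (Ideal.ofList xs).map φ ≠ ⊤ ∧
      (∀ h : H, ∃ c, (p : H) ∣ h - c ^ p) ∧ (∃ w u : H, IsUnit u ∧ w ^ p = p * u) ∧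
      (∀ a b : H, b ^ p ∣ (p : H) → b ^ p ∣ a ^ p → b ∣ a) ∧ (∀ z : H, IsUnit (1 + p * z)) := by
  have dR := hR.stg.dom
  let Ω := AlgebraicClosure (FractionRing R)
  let s0 : TSt p Ω := ⟨R, inferInstance, xs, hR, algebraMap R Ω, by
    rw [IsScalarTower.algebraMap_eq R (FractionRing R) Ω]
    exact (algebraMap (FractionRing R) Ω).injective.comp (IsFractionRing.injective R _)⟩
  choose nx hnx using TSt.next (p := p) (Ω := Ω)
  let f : ℕ → TSt p Ω := fun n => nx^[n] s0
  have hf : ∀ n, TRel (f n) (f (n + 1)) := by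
    intro n
    change TRel (f n) (nx^[n + 1] s0)
    rw [Function.iterate_succ_apply']
    exact hnx _
  let _ : ∀ n, CommRing (f n).A := fun n => (f n).iA
  have hΦ : ∀ n, ∃ Φ : R →+* (f n).A, (f n).ι.comp Φ = algebraMap R Ω ∧ Φ.Flat ∧ Φ.Finite := by
    intro n
    induction n with
    | zero => exact ⟨RingHom.id R, rfl, RingHom.Flat.id R, RingHom.Finite.id R⟩
    | succ n ih =>
      obtain ⟨Φ, h1, h2, h3⟩ := ih
      obtain ⟨φ, e, hM⟩ := hf n
      refine ⟨φ.comp Φ, ?_, h2.comp hM.flat, hM.fin.comp h3⟩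
      rw [← RingHom.comp_assoc, e, h1]
  choose Φ hΦ1 hΦ2 hΦ3 using hΦ
  let S : ℕ → Subring Ω := fun n => (f n).ι.range
  have hS : Monotone S := by
    refine monotone_nat_of_le_succ fun n => ?_
    rintro _ ⟨a, rfl⟩
    obtain ⟨φ, e, hM⟩ := hf n
    exact ⟨φ a, by rw [← e]; rfl⟩
  let H : Subring Ω := ⨆ n, S n
  have hH : ∀ x, x ∈ H ↔ ∃ n, x ∈ S n := fun x => Subring.mem_iSup_of_directed hS.directed_le
  let j : ∀ n, (f n).A →+* H := fun n => (f n).ι.codRestrict H fun a => (hH _).2 ⟨n, a, rfl⟩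
  have hj : ∀ n a, ((j n a : H) : Ω) = (f n).ι a := fun n a => rfl
  have hji : ∀ n, Function.Injective (j n) := by
    intro n a b h
    exact (f n).inj (congrArg Subtype.val h)
  have hfam : ∀ {κ : Type} [Fintype κ] (h : κ → H), ∃ N, ∀ n, N ≤ n → ∀ i, ∃ a, j n a = h i := by
    intro κ _ h
    choose m hm using fun i => (hH _).1 (h i).2
    refine ⟨Finset.univ.sup m, fun n hn i => ?_⟩
    obtain ⟨a, ha⟩ := hS ((Finset.le_sup (Finset.mem_univ i)).trans hn) (hm i)
    exact ⟨a, Subtype.ext ha⟩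
  have hone : ∀ h : H, ∃ N, ∀ n, N ≤ n → ∃ a, j n a = h := by
    intro h
    obtain ⟨N, hN⟩ := hfam (fun _ : Unit => h)
    exact ⟨N, fun n hn => hN n hn ()⟩
  let φ : R →+* H := (j 0).comp (RingHom.id R)
  have hφ : ∀ n, (j n).comp (Φ n) = φ := by
    intro n
    ext r
    change (f n).ι (Φ n r) = algebraMap R Ω r
    rw [← hΦ1 n]; rfl
  have hφi : Function.Injective φ := hji 0
  have hdvd : ∀ a b : H, a ∣ b → ∃ N, ∀ n, N ≤ n → ∃ a' b', j n a' = a ∧ j n b' = b ∧ a' ∣ b' := by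
    rintro a b ⟨c, rfl⟩
    obtain ⟨N, hN⟩ := hfam (fun i : Bool => if i then a else c)
    refine ⟨N, fun n hn => ?_⟩
    obtain ⟨a', ha⟩ := hN n hn true
    obtain ⟨c', hc⟩ := hN n hn false
    simp only [if_true, Bool.false_eq_true, if_false] at ha hc
    exact ⟨a', a' * c', ha, by rw [map_mul, ha, hc], dvd_mul_right _ _⟩
  have hdvd' : ∀ a b : H, a ∣ b → ∃ N, ∀ n, N ≤ n → ∀ a' b', j n a' = a → j n b' = b → a' ∣ b' := by
    intro a b h
    obtain ⟨N, hN⟩ := hdvd a b h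
    refine ⟨N, fun n hn a' b' ha hb => ?_⟩
    obtain ⟨a'', b'', ha', hb', hd⟩ := hN n hn
    rwa [hji n (ha.trans ha'.symm), hji n (hb.trans hb'.symm)]
  refine ⟨H, inferInstance, inferInstance, φ, ?_, hφi, ?_, ?_, ?_, ?_, ?_⟩
  · intro ι _ a b hd
    obtain ⟨N1, h1⟩ := hdvd' _ _ hd
    obtain ⟨N2, h2⟩ := hfam b
    let n := max N1 N2
    choose b' hb' using h2 n (le_max_right _ _)
    have e : ∀ r, j n (Φ n r) = φ r := fun r => by rw [← hφ n]; rfl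
    have hd' := h1 n (le_max_left _ _) (Φ n p) (∑ i, Φ n (a i) * b' i) (e _) (by
      simp only [map_sum, map_mul, e, hb'])
    obtain ⟨κ, iκ, α, w, e', g1, g2⟩ := EqFlat.of_flat (hΦ2 n) (p : R) ι a b' hd'
    refine ⟨κ, iκ, α, fun i => j n (w i), fun i => j n (e' i), ?_, g2⟩
    intro i
    rw [← hb', g1 i]
    simp only [map_add, map_sum, map_mul, e]
  · let _ := φ.toAlgebra
    have hint : Algebra.IsIntegral R H := by
      refine ⟨fun h => ?_⟩
      obtain ⟨N, hN⟩ := hone h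
      obtain ⟨a, rfl⟩ := hN N le_rfl
      obtain ⟨P, hP, hP2⟩ := (hΦ3 N).to_isIntegral a
      refine ⟨P, hP, ?_⟩
      have e : algebraMap R H = (j N).comp (Φ N) := (hφ N).symm
      rw [e, ← Polynomial.hom_eval₂, hP2, map_zero]
    have := hR.stg.reg.isMax
    obtain ⟨Q, hQ, hQ2⟩ := Ideal.exists_ideal_over_maximal_of_isIntegral (S := H) (Ideal.ofList xs) (by
      intro r hr
      have : r = 0 := hφi (by rw [map_zero]; exact hr)
      rw [this]; exact Ideal.zero_mem _)
    intro h
    refine hQ.ne_top (top_le_iff.1 (h ▸ ?_))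
    exact Ideal.map_le_iff_le_comap.2 hQ2.ge
  · intro h
    obtain ⟨N, hN⟩ := hone h
    obtain ⟨a, rfl⟩ := hN N le_rfl
    obtain ⟨ψ, e, hM⟩ := hf N
    obtain ⟨c, hc⟩ := hM.S a
    refine ⟨j (N + 1) c, ?_⟩
    have e2 : j N a = j (N + 1) (ψ a) := Subtype.ext (by
      change (f N).ι a = (f (N + 1)).ι (ψ a); rw [← e]; rfl)
    have := map_dvd (j (N + 1)) hc
    rw [e2]
    simpa using this
  · obtain ⟨ψ, e, hM⟩ := hf 0
    obtain ⟨w, u, hu, hw⟩ := hM.W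
    refine ⟨j 1 w, j 1 u, hu.map (j 1), ?_⟩
    rw [← map_pow, hw, map_mul, map_natCast]
  · intro a b h1 h2
    obtain ⟨N1, g1⟩ := hdvd' _ _ h1
    obtain ⟨N2, g2⟩ := hdvd' _ _ h2
    obtain ⟨N3, g3⟩ := hone a
    obtain ⟨N4, g4⟩ := hone b
    let n := max (max N1 N2) (max N3 N4)
    obtain ⟨a, rfl⟩ := g3 n (by simp [n])
    obtain ⟨b, rfl⟩ := g4 n (by simp [n])
    have k1 := g1 n (by simp [n]) (b ^ p) (p : (f n).A) (by simp) (by simp)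
    have k2 := g2 n (by simp [n]) (b ^ p) (a ^ p) (by simp) (by simp)
    have gd := (f n).good.stg
    have := gd.noeth
    have := gd.loc
    exact map_dvd (j n) (gd.reg.istar hp.out (fun y hy => (mem_maximalIdeal _).2 (gd.nu y hy))
      a b k1 k2)
  · intro z
    obtain ⟨N, hN⟩ := hone z
    obtain ⟨a, rfl⟩ := hN N le_rfl
    have gd := (f N).good.stg
    have := gd.loc
    have hpm : (p : (f N).A) ∈ maximalIdeal (f N).A := by
      rw [← gd.max]; exact (f N).good.pm
    have hu : IsUnit (1 + (p : (f N).A) * a) := by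
      by_contra hc
      have h1 := Ideal.sub_mem _ ((mem_maximalIdeal _).2 hc) (Ideal.mul_mem_right a _ hpm)
      rw [add_sub_cancel_right] at h1
      exact (Ideal.ne_top_iff_one _).1 (maximalIdeal.isMaximal _).ne_top h1
    have := hu.map (j N)
    rwa [map_add, map_one, map_mul, map_natCast] at this
end FTower

section FTilt
open Ideal
variable {p : ℕ} [hpF : Fact p.Prime] {D : Type} [CommRing D] [Fact ¬IsUnit (p : D)]

theorem preTilt_mk (f : ℕ → ModP D p) (hf : ∀ n, f (n + 1) ^ p = f n) :
    ∃ x : PreTilt D p, ∀ n, PreTilt.coeff n x = f n :=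
  ⟨(⟨f, hf⟩ : Perfection (ModP D p) p), fun _ => rfl⟩

theorem preTilt_ext {x y : PreTilt D p} (h : ∀ n, PreTilt.coeff n x = PreTilt.coeff n y) : x = y :=
  Perfection.ext h

theorem preTilt_unit {x : PreTilt D p} (h : IsUnit (PreTilt.coeff 0 x)) : IsUnit x := by
  have hu : ∀ n, IsUnit (PreTilt.coeff n x) := by
    intro n
    induction n with
    | zero => exact h
    | succ n ih =>
      rw [← PreTilt.coeff_pow_p] at ih
      exact (isUnit_pow_iff hpF.out.ne_zero).1 ih
  choose g hg using fun n => (hu n).exists_right_inv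
  obtain ⟨y, hy⟩ := preTilt_mk (D := D) (p := p) g (by
    intro n
    have h1 : PreTilt.coeff n x * g (n + 1) ^ p = 1 := by
      rw [← PreTilt.coeff_pow_p, ← mul_pow, hg, one_pow]
    exact (hu n).mul_left_cancel (h1.trans (hg n).symm))
  refine IsUnit.of_mul_eq_one y (preTilt_ext fun n => ?_)
  rw [map_mul, map_one, hy, hg]

variable [IsAdicComplete (span {(p : D)}) D]

noncomputable def tau (n : ℕ) (x : PreTilt D p) : D :=
  PreTilt.untilt (((frobeniusEquiv (PreTilt D p) p).symm^[n]) x)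

theorem tau_mk (n : ℕ) (x : PreTilt D p) :
    (Ideal.Quotient.mk (span {(p : D)}) (tau n x) : ModP D p) = PreTilt.coeff n x := by
  rw [tau, PreTilt.mk_untilt_eq_coeff_zero, PreTilt.coeff_iterate_frobeniusEquiv_symm, zero_add]

theorem tau_pow (n : ℕ) (x : PreTilt D p) : tau (n + 1) x ^ p = tau n x := by
  rw [tau, tau, ← map_pow]
  congr 1
  rw [Function.iterate_succ_apply']
  simp

theorem tau_mul (n : ℕ) (x y : PreTilt D p) : tau n (x * y) = tau n x * tau n y := by
  rw [tau, tau, tau, ← map_mul]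
  congr 1
  induction n with
  | zero => rfl
  | succ n ih => rw [Function.iterate_succ_apply', Function.iterate_succ_apply',
      Function.iterate_succ_apply', ih, map_mul]

theorem tau_zero (n : ℕ) : tau n (0 : PreTilt D p) = 0 := by
  rw [tau, Function.iterate_fixed (map_zero _), ← WittVector.fontaineTheta_teichmuller,
    WittVector.teichmuller_zero, map_zero]

theorem wv_isUnit_of_coeff_zero {E : Type} [CommRing E] [CharP E p] [PerfectRing E p]
    (x : WittVector p E) (h : IsUnit (x.coeff 0)) : IsUnit x := by
  obtain ⟨e, he⟩ := h.exists_right_inv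
  have h1 : (x * WittVector.teichmuller p e - 1).coeff 0 = 0 := by
    have := wv_coeff_zero_add (p := p) (x * WittVector.teichmuller p e - 1) 1
    rw [sub_add_cancel, wv_coeff_zero_mul] at this
    simp [he] at this
    exact this
  obtain ⟨y, hy⟩ := wv_sub_teich (x * WittVector.teichmuller p e - 1)
  rw [h1, WittVector.teichmuller_zero, zero_add] at hy
  have h2 : (p : WittVector p E) * y ∈ (⊥ : Ideal (WittVector p E)).jacobson :=
    IsAdicComplete.le_jacobson_bot (span {(p : WittVector p E)})
      (Ideal.mul_mem_right _ _ (Ideal.mem_span_singleton_self _))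
  have h3 := Ideal.mem_jacobson_bot.1 h2 1
  rw [mul_one, ← hy, sub_add_cancel] at h3
  exact isUnit_of_mul_isUnit_left h3

theorem wv_ker_le {E T : Type} [CommRing E] [CharP E p] [PerfectRing E p] [CommRing T]
    (θ : WittVector p E →+* T) (ξ : WittVector p E)
    (h : ∀ x, θ x = 0 → ∃ b x1, x = ξ * b + p * x1 ∧ θ x1 = 0) (x : WittVector p E)
    (hx : θ x = 0) : ξ ∣ x := by
  choose! b g hbg hg using h
  let s : ℕ → WittVector p E := fun n => g^[n] x
  have hs : ∀ n, θ (s n) = 0 := by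
    intro n
    induction n with
    | zero => exact hx
    | succ n ih => 
      show θ (g^[n+1] x) = 0
      rw [Function.iterate_succ_apply']; exact hg _ ih
  have hs1 : ∀ n, s n = ξ * b (s n) + p * s (n + 1) := by
    intro n
    have : s (n + 1) = g (s n) := Function.iterate_succ_apply' _ _ _
    rw [this]; exact hbg _ (hs n)
  let S : ℕ → WittVector p E := fun n => ∑ k ∈ Finset.range n, (p : WittVector p E) ^ k * b (s k)
  have hS : ∀ n, x = ξ * S n + p ^ n * s n := by
    intro n
    induction n with
    | zero => simp [S, s]
    | succ n ih =>
      have : S (n + 1) = S n + p ^ n * b (s n) := Finset.sum_range_succ _ _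
      rw [this]
      have h1 := hs1 n
      calc x = ξ * S n + p ^ n * s n := ih
        _ = ξ * S n + p ^ n * (ξ * b (s n) + p * s (n + 1)) := by rw [← h1]
        _ = _ := by ring
  have hmem : ∀ (n : ℕ) (a : WittVector p E), (p : WittVector p E) ^ n ∣ a →
      a ∈ ((span {(p : WittVector p E)}) ^ n • ⊤ : Ideal (WittVector p E)) := by
    intro n a ha
    rw [smul_eq_mul, Ideal.mul_top, Ideal.span_singleton_pow]
    exact Ideal.mem_span_singleton.2 ha
  have hmem' : ∀ (n : ℕ) (a : WittVector p E), 
      a ∈ ((span {(p : WittVector p E)}) ^ n • ⊤ : Ideal (WittVector p E)) → 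
      (p : WittVector p E) ^ n ∣ a := by
    intro n a ha
    rw [smul_eq_mul, Ideal.mul_top, Ideal.span_singleton_pow] at ha
    exact Ideal.mem_span_singleton.1 ha
  obtain ⟨L, hL⟩ := IsPrecomplete.prec (I := span {(p : WittVector p E)}) (M := WittVector p E)
    inferInstance (f := S) (by
      intro m n hmn
      rw [SModEq.sub_mem]
      apply hmem
      rw [← neg_sub, dvd_neg]
      have : S n - S m = ∑ k ∈ Finset.Ico m n, (p : WittVector p E) ^ k * b (s k) :=
        (Finset.sum_Ico_eq_sub _ hmn).symm
      rw [this]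
      exact Finset.dvd_sum fun k hk =>
        (pow_dvd_pow _ (Finset.mem_Ico.1 hk).1).mul_right _)
  refine ⟨L, ?_⟩
  rw [← sub_eq_zero]
  refine IsHausdorff.haus (I := span {(p : WittVector p E)}) inferInstance _ fun n => ?_
  rw [SModEq.sub_mem, sub_zero]
  apply hmem
  have h1 := hmem' _ _ (SModEq.sub_mem.1 (hL n))
  have h2 : x - ξ * L = ξ * (S n - L) + p ^ n * s n := by
    linear_combination hS n
  rw [h2]
  exact dvd_add (h1.mul_left _) (dvd_mul_right _ _)

theorem mk_zero_iff (a : D) : (Ideal.Quotient.mk (span {(p : D)}) a : ModP D p) = 0 ↔ (p : D) ∣ a := by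
  rw [← Ideal.mem_span_singleton]; exact Ideal.Quotient.eq_zero_iff_mem

theorem pfd_of_complete (hnz : ∀ a : D, (p : D) * a = 0 → a = 0)
    (hF : ∀ d : D, ∃ c, (p : D) ∣ d - c ^ p) (ϖ u : D) (hu : IsUnit u) (hϖ : ϖ ^ p = p * u)
    (hI : ∀ a b : D, b ^ p ∣ (p : D) → b ^ p ∣ a ^ p → b ∣ a) :
    Nonempty (Pfd p (PreTilt D p) D) := by
  have hF' : Function.Surjective (frobenius (ModP D p) p) := by
    intro x
    obtain ⟨d, rfl⟩ := Ideal.Quotient.mk_surjective x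
    obtain ⟨c, hc⟩ := hF d
    refine ⟨Ideal.Quotient.mk _ c, ?_⟩
    rw [frobenius_def, ← map_pow]
    exact (sub_eq_zero.1 (by rw [← map_sub]; exact (mk_zero_iff _).2 hc)).symm
  choose rt hrt using hF'
  simp only [frobenius_def] at hrt
  obtain ⟨t, ht⟩ := preTilt_mk (D := D) (p := p)
    (fun n => Nat.casesOn n 0 (fun k => rt^[k] (Ideal.Quotient.mk _ ϖ))) (by
      intro n
      cases n with
      | zero =>
        show (Ideal.Quotient.mk (span {(p : D)}) ϖ : ModP D p) ^ p = 0
        rw [← map_pow]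
        exact (mk_zero_iff _).2 ⟨u, hϖ⟩
      | succ n =>
        show (rt^[n+1] _) ^ p = rt^[n] _
        rw [Function.iterate_succ_apply', hrt])
  have hjac : ∀ a : D, IsUnit (1 + (p : D) * a) := by
    intro a
    have h2 : (p : D) ∈ (⊥ : Ideal D).jacobson :=
      IsAdicComplete.le_jacobson_bot (span {(p : D)}) (Ideal.mem_span_singleton_self _)
    have := Ideal.mem_jacobson_bot.1 h2 a
    rwa [add_comm] at this
  have ht1 : (p : D) ∣ tau 1 t - ϖ := by
    rw [← mk_zero_iff, map_sub, tau_mk, ht]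
    exact sub_self _
  obtain ⟨v, hv, htv⟩ : ∃ v, IsUnit v ∧ tau 0 t = p * v := by
    have h := dvd_sub_pow_of_dvd_sub ht1 1
    rw [pow_one, tau_pow] at h
    obtain ⟨s, hs⟩ := h
    obtain ⟨u', hu'⟩ := hu.exists_right_inv
    refine ⟨u + p * s, ?_, by linear_combination hs + hϖ⟩
    have : u + p * s = u * (1 + p * (u' * s)) := by linear_combination -(p * s) * hu'
    rw [this]
    exact hu.mul (hjac _)
  have hnz0 : ∀ a, tau 0 t * a = 0 → a = 0 := by
    intro a ha
    rw [htv, mul_assoc] at ha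
    exact (hv.mul_right_eq_zero).1 (hnz _ ha)
  have hdvd : ∀ n, tau n t ∣ tau 0 t := by
    intro n
    induction n with
    | zero => exact dvd_rfl
    | succ n ih => exact ((dvd_pow_self _ hpF.out.ne_zero).trans (tau_pow n t).dvd).trans ih
  have hdvdp : ∀ n, tau n t ∣ (p : D) := by
    intro n
    obtain ⟨v', hv'⟩ := hv.exists_right_inv
    exact (hdvd n).trans ⟨v', by rw [htv, mul_assoc, hv', mul_one]⟩
  have hnzn : ∀ n a, tau n t * a = 0 → a = 0 := by
    intro n a ha
    obtain ⟨c, hc⟩ := hdvd n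
    apply hnz0
    rw [hc]; linear_combination c * ha
  have hker : ∀ a : PreTilt D p, PreTilt.coeff 0 a = 0 → ∃ q, a = t * q := by
    intro a ha
    have h1 : ∀ n, tau n t ∣ tau n a := by
      intro n
      induction n with
      | zero =>
        rw [← tau_mk] at ha
        refine dvd_trans ?_ ((mk_zero_iff _).1 ha)
        exact hdvdp 0
      | succ n ih =>
        apply hI
        · rw [tau_pow]; exact hdvdp n
        · rw [tau_pow, tau_pow]; exact ih
    choose q hq using h1
    have hqp : ∀ n, q (n + 1) ^ p = q n := by
      intro n
      rw [← sub_eq_zero]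
      apply hnzn n
      have h2 := tau_pow n a
      rw [hq (n + 1), mul_pow, tau_pow, hq n] at h2
      linear_combination h2
    obtain ⟨y, hy⟩ := preTilt_mk (D := D) (p := p) (fun n => Ideal.Quotient.mk _ (q n)) (by
      intro n
      rw [← map_pow, hqp])
    refine ⟨y, preTilt_ext fun n => ?_⟩
    rw [map_mul, hy, ← tau_mk, ← tau_mk, hq n, map_mul]
  have hsurj : Function.Surjective (WittVector.fontaineTheta D p) :=
    surjective_fontaineTheta (fun x => ⟨rt x, hrt x⟩)
  obtain ⟨v', hv'⟩ := hv.exists_right_inv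
  obtain ⟨w, hw⟩ := hsurj (-v')
  have hwu : IsUnit w := by
    apply wv_isUnit_of_coeff_zero
    apply preTilt_unit
    rw [← WittVector.mk_fontaineTheta, hw]
    apply IsUnit.map
    exact (IsUnit.of_mul_eq_one v (by rw [mul_comm]; exact hv')).neg
  have htt : WittVector.fontaineTheta D p (WittVector.teichmuller p t) = p * v := by
    rw [WittVector.fontaineTheta_teichmuller, ← htv]; rfl
  refine ⟨{ θ := WittVector.fontaineTheta D p, t := t, w := w, surj := hsurj, hw := hwu,
            ker := ?_, kd := ?_, nzd := ?_ }⟩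
  · apply wv_ker_le
    intro x hx
    obtain ⟨y, hy⟩ := wv_sub_teich x
    obtain ⟨q, hq⟩ := hker (x.coeff 0) (by rw [← WittVector.mk_fontaineTheta, hx, map_zero])
    obtain ⟨w', hw'⟩ := hwu.exists_right_inv
    rw [hq, map_mul] at hy
    have key : x = ((p : WittVector p (PreTilt D p)) + WittVector.teichmuller p t * w) *
        (w' * WittVector.teichmuller p q) + p * (y - w' * WittVector.teichmuller p q) := by
      linear_combination hy - WittVector.teichmuller p t * WittVector.teichmuller p q * hw'
    have kd : WittVector.fontaineTheta D p
      ((p : WittVector p (PreTilt D p)) + WittVector.teichmuller p t * w) = 0 := by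
      rw [map_add, map_mul, htt, hw, map_natCast]; linear_combination -(p : D) * hv'
    refine ⟨_, _, key, ?_⟩
    apply hnz
    have h3 := congrArg (WittVector.fontaineTheta D p) key
    rw [hx, map_add, map_mul, kd, zero_mul, zero_add, map_mul, map_natCast] at h3
    exact h3.symm
  · rw [map_add, map_mul, htt, hw, map_natCast]; linear_combination -(p : D) * hv'
  · intro a ha
    refine preTilt_ext fun n => ?_
    rw [map_zero, ← tau_mk, hnzn n (tau n a) (by rw [← tau_mul, ha, tau_zero])]
    exact map_zero _
end FTilt

section FCompl

theorem exists_completion (p : ℕ) (H : Type) [CommRing H] [IsDomain H] (hp0 : (p : H) ≠ 0) :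
    ∃ (D : Type) (_ : CommRing D) (g : H →+* D), IsAdicComplete (Ideal.span {(p : D)}) D ∧
      (∀ d, ∃ h, (p : D) ∣ d - g h) ∧ (∀ h, (p : D) ∣ g h → (p : H) ∣ h) ∧
      (∀ a : D, (p : D) * a = 0 → a = 0) := by
  have fg : (Ideal.span {(p : H)}).FG := ⟨{(p : H)}, by simp⟩
  have hmap : (Ideal.span {(p : H)}).map (algebraMap H (AdicCompletion (Ideal.span {(p : H)}) H)) =
      Ideal.span {(p : AdicCompletion (Ideal.span {(p : H)}) H)} := by
    rw [Ideal.map_span, Set.image_singleton, map_natCast]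
  have hker := AdicCompletion.ker_evalOneₐ_eq_map _ fg
  rw [hmap] at hker
  have hk : ∀ x : AdicCompletion (Ideal.span {(p : H)}) H,
      (p : AdicCompletion (Ideal.span {(p : H)}) H) ∣ x ↔ AdicCompletion.evalOneₐ _ x = 0 := by
    intro x
    rw [← Ideal.mem_span_singleton, ← hker]; rfl
  have hev : ∀ h, AdicCompletion.evalOneₐ (Ideal.span {(p : H)}) (algebraMap H _ h) =
      Ideal.Quotient.mk _ h := fun h => rfl
  refine ⟨AdicCompletion (Ideal.span {(p : H)}) H, inferInstance, algebraMap H _, ?_, ?_, ?_, ?_⟩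
  · rw [← hmap]; exact AdicCompletion.isAdicComplete_self _ fg
  · intro d
    obtain ⟨h, hh⟩ := Ideal.Quotient.mk_surjective (AdicCompletion.evalOneₐ _ d)
    refine ⟨h, (hk _).2 ?_⟩
    rw [map_sub, hev, hh, sub_self]
  · intro h hh
    rw [hk, hev, Ideal.Quotient.eq_zero_iff_mem, Ideal.mem_span_singleton] at hh
    exact hh
  · intro a ha
    obtain ⟨s, rfl⟩ := AdicCompletion.mk_surjective _ _ a
    refine AdicCompletion.ext_evalₐ fun n => ?_
    have h1 := congrArg (AdicCompletion.evalₐ (Ideal.span {(p : H)}) (n + 1)) ha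
    rw [map_mul, map_natCast, map_zero, AdicCompletion.evalₐ_mk, 
      ← map_natCast (Ideal.Quotient.mk (Ideal.span {(p : H)} ^ (n + 1))), ← map_mul,
      Ideal.Quotient.eq_zero_iff_mem, Ideal.span_singleton_pow, Ideal.mem_span_singleton,
      pow_succ'] at h1
    have h2 : (p : H) ^ n ∣ s.val (n + 1) := (mul_dvd_mul_iff_left hp0).1 h1
    have h3 := s.2 (Nat.le_succ n)
    rw [SModEq.sub_mem, smul_eq_mul, Ideal.mul_top, Ideal.span_singleton_pow,
      Ideal.mem_span_singleton] at h3
    rw [map_zero, AdicCompletion.evalₐ_mk, Ideal.Quotient.eq_zero_iff_mem,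
      Ideal.span_singleton_pow, Ideal.mem_span_singleton]
    have := dvd_add h3 h2
    rwa [sub_add_cancel] at this

theorem istar_compl (p : ℕ) [hpF : Fact p.Prime] {H D : Type} [CommRing H] [CommRing D] (g : H →+* D)
    (hD : IsAdicComplete (Ideal.span {(p : D)}) D)
    (hd : ∀ d, ∃ h, (p : D) ∣ d - g h) (hc : ∀ h, (p : D) ∣ g h → (p : H) ∣ h)
    (hnz : ∀ a : D, (p : D) * a = 0 → a = 0)
    (hI : ∀ a b : H, b ^ p ∣ (p : H) → b ^ p ∣ a ^ p → b ∣ a)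
    (hJ : ∀ z : H, IsUnit (1 + p * z)) :
    ∀ a b : D, b ^ p ∣ (p : D) → b ^ p ∣ a ^ p → b ∣ a := by
  have hp1 : p = (p - 1) + 1 := (Nat.sub_add_cancel hpF.out.one_le).symm
  have hjac : ∀ a : D, IsUnit (1 + (p : D) * a) := by
    intro a
    have h2 : (p : D) ∈ (⊥ : Ideal D).jacobson :=
      IsAdicComplete.le_jacobson_bot (Ideal.span {(p : D)}) (Ideal.mem_span_singleton_self _)
    have := Ideal.mem_jacobson_bot.1 h2 a
    rwa [add_comm] at this
  have red1 : ∀ x y : H, g x ∣ g y → ∃ h k, y = x * h + p * k := by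
    rintro x y ⟨d, hxy⟩
    obtain ⟨h, r, hr⟩ := hd d
    obtain ⟨k, hk⟩ := hc (y - x * h) ⟨g x * r, by
      rw [map_sub, map_mul]; linear_combination hxy + g x * hr⟩
    exact ⟨h, k, by linear_combination hk⟩
  have red2 : ∀ x : H, g x ∣ (p : D) → x ∣ (p : H) := by
    rintro x ⟨d, hxy⟩
    obtain ⟨h, r, hr⟩ := hd d
    obtain ⟨h', r', hr'⟩ := hd r
    obtain ⟨k, hk⟩ := hc (p - x * (h + p * h')) ⟨p * (g x * r'), by
      rw [map_sub, map_mul, map_add, map_mul, map_natCast]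
      linear_combination hxy + g x * hr + p * g x * hr'⟩
    have e : g k * p = p * (p * (g x * r')) := by
      have := congrArg g hk
      simp only [map_sub, map_mul, map_add, map_natCast] at this
      linear_combination -this + hxy + g x * hr + p * g x * hr'
    obtain ⟨k', hk'⟩ := hc k ⟨g x * r', by
      rw [← sub_eq_zero]; apply hnz; linear_combination e⟩
    obtain ⟨v, hv⟩ := (hJ (-k')).exists_right_inv
    exact ⟨(h + p * h') * v, by linear_combination v * hk + p * v * hk' - p * hv⟩
  intro a b hb hba
  obtain ⟨s, hs⟩ := hb
  obtain ⟨β, e, he⟩ := hd b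
  have hbb : b ^ p = b * b ^ (p - 1) := by
    conv_lhs => rw [hp1]
    rw [pow_succ']
  have hgb : g β = b * (1 - b ^ (p - 1) * s * e) := by
    linear_combination -he - e * hs - s * e * hbb
  have hu : IsUnit (1 - b ^ (p - 1) * s * e) := by
    have h1 : (p : D) ∣ (b ^ (p - 1) * s * e) ^ p := by
      have h2 : (p : D) ∣ (b ^ (p - 1) * s) ^ p := by
        rw [hs, mul_pow, ← pow_mul]
        refine mul_dvd_mul (pow_dvd_pow _ ?_) (dvd_pow_self _ hpF.out.ne_zero)
        exact Nat.le_mul_of_pos_left _ (Nat.sub_pos_of_lt hpF.out.one_lt)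
      rw [mul_pow]
      exact h2.mul_right _
    obtain ⟨z, hz⟩ := h1
    have h3 : 1 - b ^ (p - 1) * s * e ∣ 1 + p * (-z) := by
      have := sub_dvd_pow_sub_pow 1 (b ^ (p - 1) * s * e) p
      rw [one_pow, hz] at this
      rwa [mul_neg, ← sub_eq_add_neg]
    exact isUnit_of_dvd_unit h3 (hjac _)
  have hbg : g β ∣ b := by
    rw [hgb]; exact (hu.dvd_mul_right).1 (by simp) 
  have hgb' : b ∣ g β := hgb ▸ dvd_mul_right _ _
  have hgp : (g β) ^ p ∣ (p : D) := (pow_dvd_pow_of_dvd hbg p).trans ⟨s, hs⟩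
  have hβp : β ^ p ∣ (p : H) := red2 _ (by rwa [map_pow])
  obtain ⟨α, r, hr⟩ := hd a
  have hga : g α = a - p * r := by linear_combination -hr
  have h1 : (g β) ^ p ∣ (g α) ^ p := by
    have h2 : (p : D) ∣ a ^ p - (g α) ^ p := by
      refine dvd_trans ?_ (sub_dvd_pow_sub_pow _ _ p)
      exact ⟨r, hr⟩
    have h3 := dvd_sub ((pow_dvd_pow_of_dvd hbg p).trans hba) (hgp.trans h2)
    rwa [sub_sub_cancel] at h3
  rw [← map_pow, ← map_pow] at h1
  obtain ⟨h, k, hk⟩ := red1 _ _ h1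
  have h4 : β ∣ α := hI _ _ hβp (by rw [hk]; exact dvd_add (dvd_mul_right _ _) (hβp.mul_right _))
  have h5 : a = g α + p * r := by linear_combination hr
  rw [h5]
  refine dvd_add (hgb'.trans (map_dvd g h4)) (Dvd.dvd.mul_right ?_ _)
  rw [hs, hbb, mul_assoc]; exact dvd_mul_right _ _
end FCompl

theorem good_of_reg (R : Type) [CommRing R] [IsDomain R] [IsNoetherianRing R] [IsLocalRing R]
    [hc : IsAdicComplete (maximalIdeal R) R]
    (hreg : ∃ (d : ℕ) (x : Fin d → R), ringKrullDim R = d ∧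
      Ideal.span (Set.range x) = maximalIdeal R)
    (p : ℕ) [Fact p.Prime] [CharZero R] (hp : (p : R) ∈ maximalIdeal R)
    (hk : FFinite p (ResidueField R)) :
    ∃ xs : List R, Ideal.ofList xs = maximalIdeal R ∧ Good p R xs := by
  obtain ⟨d, x, hd, hx⟩ := hreg
  have hm : Ideal.ofList (List.ofFn x) = maximalIdeal R := by
    rw [← hx, Ideal.ofList]
    congr 1
    ext r
    simp [List.mem_ofFn]
  refine ⟨List.ofFn x, hm, ?_⟩
  have hr := (reg_of_dim d R (List.ofFn x) (by simp) hm hd.ge).2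
  refine { stg := { noeth := inferInstance, loc := inferInstance, reg := hr, nu := ?_ },
           prec := ?_, ff := ?_, pm := ?_ }
  · intro y hy
    refine (mem_maximalIdeal _).1 ?_
    rw [← hm]
    exact Ideal.subset_span hy
  · rw [hm]; exact hc.toIsPrecomplete
  · obtain ⟨m, s, hs⟩ := hk
    choose s' hs' using fun i => residue_surjective (s i)
    refine ⟨m, s', fun a => ?_⟩
    obtain ⟨c, hc⟩ := hs (residue R a)
    choose c' hc' using fun i => residue_surjective (c i)
    refine ⟨c', ?_⟩
    rw [hm, ← residue_eq_zero_iff, map_sub, sub_eq_zero, hc, map_sum]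
    exact Finset.sum_congr rfl fun i _ => by rw [map_mul, map_pow, hc', hs']
  · rw [hm]; exact hp

theorem stmt3 (R : Type) [CommRing R] [IsDomain R] [IsNoetherianRing R] [IsLocalRing R]
    [IsAdicComplete (maximalIdeal R) R]
    (hreg : ∃ (d : ℕ) (x : Fin d → R), ringKrullDim R = d ∧
      Ideal.span (Set.range x) = maximalIdeal R)
    (p : ℕ) [Fact p.Prime] [CharZero R] (hp : (p : R) ∈ maximalIdeal R)
    (hk : FFinite p (ResidueField R)) (I : Ideal R) :
    wepfIdeal p R I = ↑I := by
  obtain ⟨xs, hm, hG⟩ := good_of_reg R hreg p hp hk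
  obtain ⟨H, _, _, φ, hfl, hinj, htop, hF, ⟨w, u, hu, hw⟩, hI, hJ⟩ := exists_tower p R hG
  rw [hm] at htop
  have hp0 : (p : H) ≠ 0 := by
    rw [← map_natCast φ, ← map_zero φ]
    exact hinj.ne (Nat.cast_ne_zero.2 (Fact.out : p.Prime).ne_zero)
  have hpm : (p : H) ∈ (maximalIdeal R).map φ := by
    rw [← map_natCast φ]; exact Ideal.mem_map_of_mem _ hp
  obtain ⟨D, _, g, hD, hd, hc, hnz⟩ := exists_completion p H hp0
  have hpdm : ∀ h : H, (p : H) ∣ h → h ∈ (maximalIdeal R).map φ := by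
    rintro _ ⟨z, rfl⟩; exact Ideal.mul_mem_right _ _ hpm
  have hnu : ¬IsUnit (p : D) := by
    intro h
    exact htop ((Ideal.eq_top_iff_one _).2 (hpdm 1 (hc 1 h.dvd)))
  have : Fact ¬IsUnit (p : D) := ⟨hnu⟩
  have hFD : ∀ d : D, ∃ c, (p : D) ∣ d - c ^ p := by
    intro d
    obtain ⟨h, hh⟩ := hd d
    obtain ⟨c, hcc⟩ := hF h
    refine ⟨g c, ?_⟩
    have h2 := map_dvd g hcc
    rw [map_natCast, map_sub, map_pow] at h2
    have := dvd_add hh h2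
    rwa [sub_add_sub_cancel] at this
  obtain ⟨P⟩ := pfd_of_complete (p := p) (D := D) hnz hFD (g w) (g u) (hu.map g)
    (by rw [← map_pow, hw, map_mul, map_natCast])
    (istar_compl p g hD hd hc hnz hI hJ)
  have hg : EqFlat g (φ (p : R)) := by
    rw [map_natCast]
    intro ι _ a b hab
    choose β e he using fun i => hd (b i)
    refine ⟨Unit, inferInstance, fun i _ => β i, fun _ => 1, e, ?_, ?_⟩
    · intro i
      simp only [Finset.univ_unique, Finset.sum_singleton, mul_one, map_natCast]
      linear_combination he i
    · intro _
      apply hc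
      rw [map_natCast] at hab
      have : g (∑ i, a i * β i) = ∑ i, g (a i) * b i - p * ∑ i, g (a i) * e i := by
        rw [map_sum, Finset.mul_sum, ← Finset.sum_sub_distrib]
        refine Finset.sum_congr rfl fun i _ => ?_
        rw [map_mul]; linear_combination -g (a i) * he i
      rw [this]
      exact dvd_sub hab (dvd_mul_right _ _)
  have key : ∀ d ∈ (maximalIdeal R).map (g.comp φ), ∃ h ∈ (maximalIdeal R).map φ, (p : D) ∣ d - g h := by
    intro d hdm
    rw [← Ideal.map_map] at hdm
    refine Submodule.span_induction ?_ ?_ ?_ ?_ hdm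
    · rintro _ ⟨h, hh, rfl⟩
      exact ⟨h, hh, by simp⟩
    · exact ⟨0, Ideal.zero_mem _, by simp⟩
    · rintro x y _ _ ⟨h, hh, h1⟩ ⟨k, hk, h2⟩
      exact ⟨h + k, Ideal.add_mem _ hh hk, by
        have := dvd_add h1 h2; rw [map_add]; convert this using 1; ring⟩
    · rintro a x _ ⟨h, hh, h1⟩
      obtain ⟨k, hk⟩ := hd a
      refine ⟨k * h, Ideal.mul_mem_left _ _ hh, ?_⟩
      have := dvd_add (h1.mul_left a) (hk.mul_right (g h))
      rw [map_mul, smul_eq_mul]; convert this using 1; ring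
  refine wepf_of_base R p hp (PreTilt D p) D P (g.comp φ) (hfl.comp hg) ?_ I
  intro h
  obtain ⟨k, hk, h1⟩ := key 1 (h ▸ Submodule.mem_top)
  refine htop ((Ideal.eq_top_iff_one _).2 ?_)
  have h2 := hpdm (1 - k) (hc _ (by rwa [map_sub, map_one]))
  have := Ideal.add_mem _ h2 hk
  rwa [sub_add_cancel] at this
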